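/- Let μ be a probability measure on X = C_0([0,T]; ℝ^d) with E_μ[sup_{t ∈ [0,T]} |X_t|^p] < ∞. Let f: X → ℝ admit an extension f̃: D([0,T]; ℝ^d) → ℝ which is pathwise Malliavin differentiable with derivative 𝔻f̃, such that f̃ and each map ω ↦ 𝔻_t f̃(ω) are continuous with respect to the uniform norm, 𝔻f̃ has left limits and is boundedness preserving, and there is a constant C with |f̃(ω)| ≤ C(1 + ‖ω‖_∞^p) and |𝔻_t f̃(ω)|_* ≤ C(1 + ‖ω‖_∞^{p−1}) for all t ∈ [0,T] and all càdlàg ω; write 𝔻_t f(ω) = 𝔻_t f̃(ω) for continuous ω. Define, for δ > 0, V(δ) = sup { E_π[f(Y)] − L_δ(E_π[c(X, Y)]^{1/p}) : π ∈ Π_c(μ, *) with E_π[c(X, Y)] < ∞ }, and V(0) = E_μ[f(X)]. Then lim_{δ→0+} (V(δ) − V(0))/δ = L*( ( ∫_0^T E_μ[ |E_μ[𝔻_t f(X) | F_t]|_*^q ] dt )^{1/q} ), where for each t a version of the conditional expectation E_μ[𝔻_t f(X) | F_t] is chosen making the integrand measurable in t (such a choice exists, and the value of the integral does not depend on it). 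-/

import Mathlib

open MeasureTheory Filter Set
open scoped ENNReal

noncomputable section

/-- The path space `C_0([0,T]; ℝ^d)`: functions `ℝ → ℝ^d` that are continuous on `[0,T]`
and vanish at `0`. -/
def ContPath (T : ℝ) (d : ℕ) : Type :=
  {ω : ℝ → Fin d → ℝ // ContinuousOn ω (Set.Icc 0 T) ∧ ω 0 = 0}

/-- The σ-algebra `σ(ω_r : r ∈ [0,T], r ≤ s)` generated by the evaluations up to time `s`. -/
def evalSigma (T : ℝ) (d : ℕ) (s : ℝ) : MeasurableSpace (ContPath T d) :=
  ⨆ r : {r : ℝ // 0 ≤ r ∧ r ≤ T ∧ r ≤ s},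
    MeasurableSpace.comap (fun ω : ContPath T d => ω.1 r.1) inferInstance

/-- The ambient σ-algebra on the path space is `σ(ω_r : r ∈ [0,T])`. -/
instance instMSContPath (T : ℝ) (d : ℕ) : MeasurableSpace (ContPath T d) := evalSigma T d T

/-- The right-continuous natural filtration `F_t = ⋂_{s > t} σ(ω_r : r ≤ s)`
(with `F_T = σ(ω_r : r ≤ T)`). -/
def FilC (T : ℝ) (d : ℕ) (t : ℝ) : MeasurableSpace (ContPath T d) :=
  if t < T then ⨅ s : {s : ℝ // t < s ∧ s ≤ T}, evalSigma T d s.1 else evalSigma T d T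

/-- Conditional independence of `m₁` and `m₂` given `m'` under `π`, expressed through
conditional expectations of indicators. -/
def CondIndepOn {Ω : Type*} [MeasurableSpace Ω] (π : Measure Ω)
    (m' m₁ m₂ : MeasurableSpace Ω) : Prop :=
  ∀ A B : Set Ω, MeasurableSet[m₁] A → MeasurableSet[m₂] B →
    (π[(A ∩ B).indicator (fun _ => (1 : ℝ)) | m']) =ᵐ[π]
      (π[A.indicator (fun _ => (1 : ℝ)) | m']) * (π[B.indicator (fun _ => (1 : ℝ)) | m'])

/-- `π` is a coupling with first marginal `μ` which is causal to its second marginal: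
for every `t ∈ [0,T]`, `σ(Y_s : s ≤ t)` is conditionally independent of
`σ(X_s : s ≤ T)` given `F_t`. -/
def IsCausalStarC (T : ℝ) (d : ℕ) (μ : Measure (ContPath T d))
    (π : Measure (ContPath T d × ContPath T d)) : Prop :=
  π.map Prod.fst = μ ∧
  ∀ t ∈ Set.Icc (0 : ℝ) T,
    CondIndepOn π ((FilC T d t).comap Prod.fst)
      ((FilC T d t).comap Prod.snd) ((evalSigma T d T).comap Prod.fst)

/-- `π` is a causal coupling of `(μ, ν)`. -/
def IsCausalCouplingC (T : ℝ) (d : ℕ) (μ ν : Measure (ContPath T d))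
    (π : Measure (ContPath T d × ContPath T d)) : Prop :=
  π.map Prod.snd = ν ∧ IsCausalStarC T d μ π

/-- `π` is a bicausal coupling of `(μ, ν)`: both `π` and its swap are causal. -/
def IsBicausalCouplingC (T : ℝ) (d : ℕ) (μ ν : Measure (ContPath T d))
    (π : Measure (ContPath T d × ContPath T d)) : Prop :=
  IsCausalCouplingC T d μ ν π ∧
  ∀ t ∈ Set.Icc (0 : ℝ) T,
    CondIndepOn π ((FilC T d t).comap Prod.snd)
      ((FilC T d t).comap Prod.fst) ((evalSigma T d T).comap Prod.snd)

/-- `μ` is a martingale measure on `C_0([0,T]; ℝ^d)`: every coordinate `X_t`, `t ∈ [0,T]`,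
is integrable and the canonical process is a martingale with respect to the right-continuous
natural filtration. -/
def IsMartingaleMeasureC (T : ℝ) (d : ℕ) (μ : Measure (ContPath T d)) : Prop :=
  (∀ t ∈ Set.Icc (0 : ℝ) T, Integrable (fun ω : ContPath T d => ω.1 t) μ) ∧
  ∀ s t : ℝ, 0 ≤ s → s ≤ t → t ≤ T →
    (μ[(fun ω : ContPath T d => ω.1 t) | FilC T d s]) =ᵐ[μ] (fun ω => ω.1 s)


/-- The `ℓ_e` norm on `ℝ^d`. -/
def lpnorm {d : ℕ} (e : ℝ) (v : Fin d → ℝ) : ℝ := (∑ i, |v i| ^ e) ^ (1 / e)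

/-- The sup norm `‖ω‖_∞ = sup_{t ∈ [0,T]} ‖ω_t‖` of a path. -/
def pathSup (T : ℝ) {d : ℕ} (ω : ℝ → Fin d → ℝ) : ℝ :=
  ⨆ t : Set.Icc (0 : ℝ) T, ‖ω t.1‖

/-- `ω : ℝ → ℝ^d` is càdlàg on `[0,T]`. -/
def CadlagOn (T : ℝ) {d : ℕ} (ω : ℝ → Fin d → ℝ) : Prop :=
  (∀ t ∈ Set.Ico (0 : ℝ) T, Tendsto ω (nhdsWithin t (Set.Ioc t T)) (nhds (ω t))) ∧
  (∀ t ∈ Set.Ioc (0 : ℝ) T, ∃ l : Fin d → ℝ, Tendsto ω (nhdsWithin t (Set.Ico 0 t)) (nhds l))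

/-- The bump path `e·1_{[t,T]}`. -/
def bump (T : ℝ) {d : ℕ} (t : ℝ) (e : Fin d → ℝ) : ℝ → Fin d → ℝ :=
  Set.indicator (Set.Icc t T) (fun _ => e)

/-- `f` is pathwise Malliavin differentiable on `D([0,T]; ℝ^d)` with derivative `Df`. -/
def HasPathwiseMalliavinDeriv (T : ℝ) {d : ℕ} (f : (ℝ → Fin d → ℝ) → ℝ)
    (Df : (ℝ → Fin d → ℝ) → ℝ → Fin d → ℝ) : Prop :=
  ∀ ω : ℝ → Fin d → ℝ, CadlagOn T ω → ∀ t ∈ Set.Icc (0 : ℝ) T, ∀ e : Fin d → ℝ,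
    Tendsto (fun ε : ℝ => (f (ω + ε • bump T t e) - f ω) / ε)
      (nhdsWithin 0 {(0 : ℝ)}ᶜ) (nhds (∑ i, Df ω t i * e i))

/-- Continuity of a real functional on càdlàg paths w.r.t. the uniform norm on `[0,T]`. -/
def UnifContOnCadlag (T : ℝ) {d : ℕ} (f : (ℝ → Fin d → ℝ) → ℝ) : Prop :=
  ∀ (ω : ℝ → Fin d → ℝ) (ωs : ℕ → ℝ → Fin d → ℝ),
    CadlagOn T ω → (∀ n, CadlagOn T (ωs n)) →
    TendstoUniformlyOn ωs ω atTop (Set.Icc 0 T) →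
    Tendsto (fun n => f (ωs n)) atTop (nhds (f ω))

/-- Continuity of an `ℝ^d`-valued functional on càdlàg paths w.r.t. the uniform norm. -/
def UnifContOnCadlagVec (T : ℝ) {d : ℕ} (F : (ℝ → Fin d → ℝ) → Fin d → ℝ) : Prop :=
  ∀ (ω : ℝ → Fin d → ℝ) (ωs : ℕ → ℝ → Fin d → ℝ),
    CadlagOn T ω → (∀ n, CadlagOn T (ωs n)) →
    TendstoUniformlyOn ωs ω atTop (Set.Icc 0 T) →
    Tendsto (fun n => F (ωs n)) atTop (nhds (F ω))

/-- `F : [0,T] × D([0,T];ℝ^d) → ℝ^d` has left limits. -/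
def HasLeftLimits (T : ℝ) {d : ℕ} (F : (ℝ → Fin d → ℝ) → ℝ → Fin d → ℝ) : Prop :=
  ∀ ω : ℝ → Fin d → ℝ, CadlagOn T ω → ∀ t ∈ Set.Ioc (0 : ℝ) T, ∃ l : Fin d → ℝ,
    ∀ (ωs : ℕ → ℝ → Fin d → ℝ) (ts : ℕ → ℝ),
      (∀ n, CadlagOn T (ωs n)) →
      TendstoUniformlyOn ωs ω atTop (Set.Icc 0 T) →
      (∀ n, ts n < t) → Monotone ts → Tendsto ts atTop (nhds t) →
      Tendsto (fun n => F (ωs n) (ts n)) atTop (nhds l)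

/-- `F` is boundedness preserving. -/
def BoundednessPreserving (T : ℝ) {d : ℕ} (F : (ℝ → Fin d → ℝ) → ℝ → Fin d → ℝ) : Prop :=
  ∀ K : ℝ, 0 < K → ∃ M : ℝ,
    ∀ ω : ℝ → Fin d → ℝ, CadlagOn T ω → (∀ s ∈ Set.Icc (0 : ℝ) T, ‖ω s‖ < K) →
      ∀ t ∈ Set.Icc (0 : ℝ) T, ‖F ω t‖ ≤ M

/-- The hyperbolic transport cost `c(ω,η) = ‖ω − η‖_{W₀^{1,p}}^p = ∫_0^T |(ω−η)'(t)|^p dt`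
if `ω − η` is absolutely continuous with an `L¹` derivative, and `+∞` otherwise. -/
def hcost (T p : ℝ) {d : ℕ} (ω η : ℝ → Fin d → ℝ) : ℝ≥0∞ :=
  sInf {v : ℝ≥0∞ | ∃ g : ℝ → Fin d → ℝ,
    MeasureTheory.IntegrableOn g (Set.Icc 0 T) ∧
    (∀ t ∈ Set.Icc (0 : ℝ) T, ω t - η t = ∫ s in Set.Ioc (0 : ℝ) t, g s) ∧
    v = ∫⁻ t in Set.Icc (0 : ℝ) T, ENNReal.ofReal (lpnorm p (g t) ^ p)}

/-- Standing assumptions on the penalty function `L`. -/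
structure PenaltyAssumptions (p : ℝ) (L : ℝ → ℝ≥0∞) : Prop where
  cont : ContinuousOn L (Set.Ici 0)
  mono : MonotoneOn L (Set.Ici 0)
  zero : L 0 = 0
  growth : Tendsto (fun u : ℝ => L u / ENNReal.ofReal (u ^ p)) atTop (nhds ⊤)

/-- The convex conjugate `L*(v) = sup_{u ≥ 0} { u v − L(u) }`, valued in the extended reals. -/
def Lconj (L : ℝ → ℝ≥0∞) (v : ℝ) : EReal :=
  ⨆ u : {u : ℝ // 0 ≤ u}, ((u.1 * v : ℝ) : EReal) - ((L u.1 : ℝ≥0∞) : EReal)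

/-- The penalised causal DRO value in continuous time,
`V(δ) = sup_{π ∈ Π_c(μ,*), E_π[c] < ∞} { E_π[f(Y)] − δ L(E_π[c(X,Y)]^{1/p}/δ) }`. -/
def VC (T p : ℝ) {d : ℕ} (L : ℝ → ℝ≥0∞) (μ : Measure (ContPath T d))
    (f : ContPath T d → ℝ) (δ : ℝ) : EReal :=
  ⨆ π : {π : Measure (ContPath T d × ContPath T d) //
      IsProbabilityMeasure π ∧ IsCausalStarC T d μ π ∧
      (∫⁻ z, hcost T p z.1.1 z.2.1 ∂π) < ⊤},
    ((∫ z, f z.2 ∂π.1 : ℝ) : EReal) -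
      ((ENNReal.ofReal δ *
          L (((∫⁻ z, hcost T p z.1.1 z.2.1 ∂π.1).toReal) ^ (1 / p) / δ) : ℝ≥0∞) : EReal)

/-! Everything rests on the expansion, uniform over causal plans with `E c(X, Y) ≤ r ^ p`, of
`E[f(Y)] - E[f(X)]` up to an error `ε r + B r ^ p`. On a grid of step `T / n` the path `X` is
moved towards `Y` by adding, one node `t_k` after another, the increment of `Y - X` over the `k`-th
cell as a bump on `[t_k, T]`. Each move is a directional derivative of `f`, so to first order the
total change is the sum over `k` of `⟨𝔻_{t_k} f(X), Δ_k (Y - X)⟩`, and continuity, left limits and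
the growth bounds make the error uniform in the plan.

Upper bound: causality makes the increment up to time `t` conditionally independent of `X` given
`F_t`, so `𝔻_t f(X)` may be replaced by `E[𝔻_t f(X) | F_t]`; Hölder's inequality then bounds the
sum by `r` times the `L^q` norm `Λ` of the projected derivative.

Lower bound: equality in Hölder's inequality is almost attained by an adapted drift, constant on
each cell, with the dual slopes `|g|^(q-2) g` of the projected derivative `g`; moving `X` along
such a drift is a causal plan.

Hence the supremum of `E[f(Y)] - E[f(X)]` over plans of radius `r = δ u` is `δ u Λ + o(δ)`, and
maximising `u Λ - L(u)` over `u ≥ 0` yields `L* (Λ)`.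
-/

open scoped Topology

/-- The `k`-th point of the uniform grid with `n` cells on `[0,T]`. -/
def grid (T : ℝ) (n k : ℕ) : ℝ := T * k / n

/-- The index of the cell of the uniform grid with `n` cells on `[0,T]` that contains `t`; cells
are closed on the left. -/
def gridIdx (T : ℝ) (n : ℕ) (t : ℝ) : ℕ := ⌊t * n / T⌋₊

section Grid

variable {T : ℝ} {n : ℕ}

@[simp]
lemma grid_zero (T : ℝ) (n : ℕ) : grid T n 0 = 0 := by simp [grid]

lemma grid_self (T : ℝ) (hn : 0 < n) : grid T n n = T := by
  have : (n : ℝ) ≠ 0 := by positivity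
  simp [grid, this]

lemma grid_nonneg (hT : 0 < T) (n k : ℕ) : 0 ≤ grid T n k := by
  unfold grid; positivity

lemma grid_mono (hT : 0 < T) (n : ℕ) : Monotone (grid T n) := by
  intro a b hab
  unfold grid
  gcongr

lemma grid_succ (T : ℝ) (n k : ℕ) : grid T n (k + 1) = grid T n k + T / n := by
  unfold grid; push_cast; ring

lemma grid_mem_Icc (hT : 0 < T) {k : ℕ} (hn : 0 < n) (hk : k ≤ n) : grid T n k ∈ Icc 0 T :=
  ⟨grid_nonneg hT n k, (grid_mono hT n hk).trans_eq (grid_self T hn)⟩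

lemma gridIdx_eq_iff (hT : 0 < T) (hn : 0 < n) {t : ℝ} (ht : 0 ≤ t) {k : ℕ} :
    gridIdx T n t = k ↔ t ∈ Ico (grid T n k) (grid T n (k + 1)) := by
  have hn' : (0 : ℝ) < n := by exact_mod_cast hn
  unfold gridIdx grid
  rw [Nat.floor_eq_iff (by positivity), le_div_iff₀ hT, div_lt_iff₀ hT, mem_Ico,
    div_le_iff₀ hn', lt_div_iff₀ hn']
  push_cast
  rw [mul_comm T, mul_comm T]

lemma grid_gridIdx_le (hT : 0 < T) (hn : 0 < n) {t : ℝ} (ht : 0 ≤ t) :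
    grid T n (gridIdx T n t) ≤ t :=
  ((gridIdx_eq_iff hT hn ht).1 rfl).1

lemma lt_grid_gridIdx_succ (hT : 0 < T) (hn : 0 < n) {t : ℝ} (ht : 0 ≤ t) :
    t < grid T n (gridIdx T n t + 1) :=
  ((gridIdx_eq_iff hT hn ht).1 rfl).2

lemma gridIdx_lt (hT : 0 < T) (hn : 0 < n) {t : ℝ} (ht : t ∈ Ico 0 T) : gridIdx T n t < n := by
  by_contra! h
  have h_ge : T ≤ grid T n (gridIdx T n t) := (grid_self T hn).symm.trans_le (grid_mono hT n h)
  exact absurd ht.2 (h_ge.trans (grid_gridIdx_le hT hn ht.1)).not_gt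

lemma gridIdx_le (hT : 0 < T) (n : ℕ) {t : ℝ} (ht : t ≤ T) : gridIdx T n t ≤ n := by
  refine Nat.floor_le_of_le ((div_le_iff₀ hT).2 ?_)
  rw [mul_comm (n : ℝ)]
  gcongr

lemma le_gridIdx_iff (hT : 0 < T) (hn : 0 < n) {t : ℝ} (ht : 0 ≤ t) {k : ℕ} :
    k ≤ gridIdx T n t ↔ grid T n k ≤ t := by
  have hn' : (0 : ℝ) < n := by exact_mod_cast hn
  unfold gridIdx grid
  rw [Nat.le_floor_iff (by positivity), le_div_iff₀ hT, div_le_iff₀ hn', mul_comm T]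

lemma exists_mem_Ioc_grid (hT : 0 < T) (hn : 0 < n) {t : ℝ} (ht : 0 < t) :
    ∃ k, t ∈ Ioc (grid T n k) (grid T n (k + 1)) := by
  have hlt := lt_grid_gridIdx_succ hT hn ht.le
  rcases (grid_gridIdx_le hT hn ht.le).lt_or_eq with h | h
  · exact ⟨_, h, hlt.le⟩
  · obtain ⟨k, hk⟩ : ∃ k, gridIdx T n t = k + 1 := by
      refine Nat.exists_eq_succ_of_ne_zero fun h0 => ht.ne ?_
      rw [← h, h0, grid_zero]
    have hd : 0 < T / n := by positivity
    rw [hk] at h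
    exact ⟨k, by linarith [grid_succ T n k], h.ge⟩

lemma tendsto_grid_gridIdx (hT : 0 < T) {t : ℝ} (ht : 0 ≤ t) :
    Tendsto (fun n : ℕ => grid T n (gridIdx T n t)) atTop (𝓝 t) := by
  have h_lower : Tendsto (fun n : ℕ => t - T / n) atTop (𝓝 t) := by
    simpa using tendsto_const_nhds.sub (tendsto_const_div_atTop_nhds_zero_nat T)
  refine tendsto_of_tendsto_of_tendsto_of_le_of_le' h_lower tendsto_const_nhds ?_ ?_
  · filter_upwards [eventually_gt_atTop 0] with n hn
    linarith [lt_grid_gridIdx_succ hT hn ht, grid_succ T n (gridIdx T n t)]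
  · filter_upwards [eventually_gt_atTop 0] with n hn
    exact grid_gridIdx_le hT hn ht

lemma tendsto_grid_gridIdx_succ (hT : 0 < T) {t : ℝ} (ht : 0 ≤ t) :
    Tendsto (fun n : ℕ => grid T n (gridIdx T n t + 1)) atTop (𝓝 t) := by
  simpa only [grid_succ, add_zero] using
    (tendsto_grid_gridIdx hT ht).add (tendsto_const_div_atTop_nhds_zero_nat T)

lemma ae_tendsto_grid_gridIdx_nhdsLT (hT : 0 < T) :
    ∀ᵐ t ∂volume.restrict (Ioo 0 T),
      Tendsto (fun n : ℕ => grid T n (gridIdx T n t)) atTop (𝓝[<] t) := by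
  have h_ne : ∀ᵐ t ∂volume.restrict (Ioo 0 T), t ∉ range (Function.uncurry (grid T)) :=
    ae_restrict_of_ae ((countable_range _).ae_notMem volume)
  filter_upwards [h_ne, ae_restrict_mem measurableSet_Ioo] with t ht_ne ht
  refine tendsto_nhdsWithin_iff.2 ⟨tendsto_grid_gridIdx hT ht.1.le, ?_⟩
  filter_upwards [eventually_gt_atTop 0] with n hn
  exact (grid_gridIdx_le hT hn ht.1.le).lt_of_ne fun h => ht_ne ⟨(n, gridIdx T n t), h⟩

lemma measurable_gridIdx (T : ℝ) (n : ℕ) : Measurable (gridIdx T n) :=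
  Nat.measurable_floor.comp (by fun_prop)

lemma grid_mul_mul (T : ℝ) {l : ℕ} (hl : 0 < l) (n k : ℕ) :
    grid T (n * l) (k * l) = grid T n k := by
  have : (l : ℝ) ≠ 0 := by positivity
  unfold grid
  push_cast
  rw [← mul_assoc, mul_div_mul_right _ _ this]

lemma gridIdx_mul_div (T : ℝ) (n : ℕ) {l : ℕ} (hl : 0 < l) (t : ℝ) :
    gridIdx T (n * l) t / l = gridIdx T n t := by
  have hl' : (l : ℝ) ≠ 0 := by positivity
  unfold gridIdx
  rw [← Nat.floor_div_natCast]
  congr 1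
  push_cast
  field_simp

section RiemannSum

variable {E : Type*} [NormedAddCommGroup E] [NormedSpace ℝ E] [CompleteSpace E]

lemma setIntegral_comp_gridIdx (hT : 0 < T) (hn : 0 < n) (a : ℕ → E) :
    ∫ t in Ioo 0 T, a (gridIdx T n t) = (T / n) • ∑ k ∈ Finset.range n, a k := by
  have h_cell (k : ℕ) :
      EqOn (fun t => a (gridIdx T n t)) (fun _ => a k) (Ioo (grid T n k) (grid T n (k + 1))) :=
    fun t ht => congrArg a <|
      (gridIdx_eq_iff hT hn ((grid_nonneg hT n k).trans ht.1.le)).2 ⟨ht.1.le, ht.2⟩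
  have h_le (k : ℕ) : grid T n k ≤ grid T n (k + 1) := grid_mono hT n k.le_succ
  have h_cell_integrable (k : ℕ) : IntervalIntegrable (fun t => a (gridIdx T n t)) volume
      (grid T n k) (grid T n (k + 1)) := by
    rw [intervalIntegrable_iff_integrableOn_Ioo_of_le (h_le k),
      integrableOn_congr_fun (h_cell k) measurableSet_Ioo]
    exact integrableOn_const (by simp)
  have h_cell_integral (k : ℕ) :
      ∫ t in grid T n k..grid T n (k + 1), a (gridIdx T n t) = (T / n) • a k := by
    rw [intervalIntegral.integral_of_le (h_le k), integral_Ioc_eq_integral_Ioo,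
      setIntegral_congr_fun measurableSet_Ioo (h_cell k), setIntegral_const,
      Real.volume_real_Ioo_of_le (h_le k), grid_succ, add_sub_cancel_left]
  calc ∫ t in Ioo 0 T, a (gridIdx T n t)
      = ∫ t in grid T n 0..grid T n n, a (gridIdx T n t) := by
        rw [grid_zero, grid_self T hn, intervalIntegral.integral_of_le hT.le,
          integral_Ioc_eq_integral_Ioo]
    _ = ∑ k ∈ Finset.range n, ∫ t in grid T n k..grid T n (k + 1), a (gridIdx T n t) :=
        (intervalIntegral.sum_integral_adjacent_intervals fun k _ => h_cell_integrable k).symm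
    _ = (T / n) • ∑ k ∈ Finset.range n, a k := by simp only [h_cell_integral, Finset.smul_sum]

lemma tendsto_riemannSum (hT : 0 < T) {ι : Type*} {l : Filter ι} [l.IsCountablyGenerated]
    {n : ι → ℕ} (hn : ∀ᶠ j in l, 0 < n j) {a : ι → ℕ → E} {K : ℝ}
    (hK : ∀ᶠ j in l, ∀ k < n j, ‖a j k‖ ≤ K) {φ : ℝ → E}
    (h : ∀ᵐ t ∂volume.restrict (Ioo 0 T),
      Tendsto (fun j => a j (gridIdx T (n j) t)) l (𝓝 (φ t))) :
    Tendsto (fun j => (T / n j) • ∑ k ∈ Finset.range (n j), a j k) l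
      (𝓝 (∫ t in Ioo 0 T, φ t)) := by
  have h_int : Tendsto (fun j => ∫ t in Ioo 0 T, a j (gridIdx T (n j) t)) l
      (𝓝 (∫ t in Ioo 0 T, φ t)) := by
    refine tendsto_integral_filter_of_dominated_convergence (fun _ => K) ?_ ?_
      (integrable_const K) h
    · exact Eventually.of_forall fun j =>
        (StronglyMeasurable.of_discrete.comp_measurable
          (measurable_gridIdx T (n j))).aestronglyMeasurable
    · filter_upwards [hK, hn] with j hj hnj
      filter_upwards [ae_restrict_mem measurableSet_Ioo] with t ht
      exact hj _ (gridIdx_lt hT hnj ⟨ht.1.le, ht.2⟩)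
  refine h_int.congr' ?_
  filter_upwards [hn] with j hj
  exact setIntegral_comp_gridIdx hT hj (a j)

end RiemannSum

end Grid

section LeftApproach

lemma countable_setOf_tendsto_nhdsLT_prod_not_nhds {α Y : Type*} [LinearOrder α]
    [TopologicalSpace α] [OrderTopology α] [SecondCountableTopology α] [TopologicalSpace Y]
    (h : α × α → Y) (c : Y) [(𝓝 c).IsCountablyGenerated] :
    {t | Tendsto h (𝓝[<] t ×ˢ 𝓝[<] t) (𝓝 c) ∧ ¬ Tendsto h (𝓝 t ×ˢ 𝓝 t) (𝓝 c)}.Countable := by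
  obtain ⟨U, hU⟩ := (𝓝 c).exists_antitone_basis
  let S (n : ℕ) : Set α := {t | Tendsto h (𝓝[<] t ×ˢ 𝓝[<] t) (𝓝 c) ∧
    ¬ ∀ᶠ z in 𝓝 t ×ˢ 𝓝 t, h z ∈ U n}
  have hS_isolated (n : ℕ) : S n ⊆ {t | t ∈ S n ∧ 𝓝[S n ∩ Iio t] t = ⊥} := by
    refine fun t ht => ⟨ht, ?_⟩
    obtain ⟨W, hW, hWU⟩ := (eventually_prod_self_iff (r := fun x y => h (x, y) ∈ U n)).1
      (ht.1.eventually_mem (hU.mem n))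
    have h_notMem : ∀ᶠ t' in 𝓝[<] t, t' ∉ S n := by
      filter_upwards [eventually_eventually_nhdsWithin.2 hW, self_mem_nhdsWithin] with t' hWt' ht'
      rw [nhdsWithin_eq_nhds.2 (Iio_mem_nhds ht')] at hWt'
      exact fun hSt' => hSt'.2
        ((eventually_prod_self_iff (r := fun x y => h (x, y) ∈ U n)).2 ⟨W, hWt', hWU⟩)
    rw [← empty_mem_iff_bot]
    filter_upwards [nhdsWithin_mono t inter_subset_right h_notMem, self_mem_nhdsWithin]
      with t' hnot hmem using hnot hmem.1
  refine (countable_iUnion fun n =>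
    countable_setOfPred_isolated_left_within.mono (hS_isolated n)).mono fun t ht => ?_
  by_contra hcon
  simp only [mem_iUnion, not_exists] at hcon
  refine ht.2 (hU.1.tendsto_right_iff.2 fun n _ => ?_)
  by_contra hn
  exact hcon n ⟨ht.1, hn⟩

lemma ae_tendsto_prod_of_tendsto_nhdsLT_prod {Y : Type*} [TopologicalSpace Y] {h : ℝ × ℝ → Y}
    {c : Y} [(𝓝 c).IsCountablyGenerated] {s : Set ℝ} (hs : MeasurableSet s)
    (hlim : ∀ t ∈ s, Tendsto h (𝓝[<] t ×ˢ 𝓝[<] t) (𝓝 c)) :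
    ∀ᵐ t ∂volume.restrict s, Tendsto h (𝓝 t ×ˢ 𝓝 t) (𝓝 c) := by
  filter_upwards [ae_restrict_mem hs, ae_restrict_of_ae
    ((countable_setOf_tendsto_nhdsLT_prod_not_nhds h c).ae_notMem volume)] with t ht h_not
  exact not_not.1 fun h_lim => h_not ⟨hlim t ht, h_lim⟩

lemma exists_strictMono_monotone_comp {α : Type*} [LinearOrder α] [TopologicalSpace α]
    [OrderTopology α] {s : ℕ → α} {t : α} (hs : Tendsto s atTop (𝓝 t)) (hlt : ∀ n, s n < t) :
    ∃ φ : ℕ → ℕ, StrictMono φ ∧ Monotone (s ∘ φ) := by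
  obtain ⟨φ, hφ | hφ⟩ := exists_increasing_or_nonincreasing_subseq (· ≤ ·) s
  · exact ⟨φ, φ.strictMono, monotone_iff_forall_lt.2 hφ⟩
  · have h_away : ∀ᶠ m in atTop, s (φ m) < s (φ 0) := by
      filter_upwards [eventually_gt_atTop 0] with m hm using not_le.1 (hφ 0 m hm)
    have h_near : ∀ᶠ m in atTop, s (φ 0) < s (φ m) :=
      (hs.comp φ.strictMono.tendsto_atTop).eventually_const_lt (hlt _)
    obtain ⟨m, hm⟩ := (h_away.and h_near).exists
    exact absurd hm.1 hm.2.not_gt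

end LeftApproach

section Holder

variable {Ω : Type*} [MeasurableSpace Ω] {π : Measure Ω} {p q : ℝ}

lemma integrable_mul_of_memLp (hpq : p.HolderConjugate q) {f g : Ω → ℝ}
    (hf : MemLp f (ENNReal.ofReal p) π) (hg : MemLp g (ENNReal.ofReal q) π) :
    Integrable (fun z => f z * g z) π :=
  haveI := hpq.ennrealOfReal
  hf.integrable_mul hg

lemma sum_integral_mul_le_Lp_mul_Lq (hpq : p.HolderConjugate q) {ι : Type*} (s : Finset ι)
    {A B : ι → Ω → ℝ} (hA : ∀ j ∈ s, MemLp (A j) (ENNReal.ofReal p) π)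
    (hB : ∀ j ∈ s, MemLp (B j) (ENNReal.ofReal q) π) :
    ∑ j ∈ s, ∫ z, |A j z| * |B j z| ∂π ≤
      (∑ j ∈ s, ∫ z, |A j z| ^ p ∂π) ^ (1 / p) * (∑ j ∈ s, ∫ z, |B j z| ^ q ∂π) ^ (1 / q) := by
  have h_abs_rpow (f : Ω → ℝ) {e : ℝ} (he : 0 < e) :
      |(∫ z, |f z| ^ e ∂π) ^ (1 / e)| ^ e = ∫ z, |f z| ^ e ∂π := by
    have h_nonneg : 0 ≤ ∫ z, |f z| ^ e ∂π := integral_nonneg fun z => by positivity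
    rw [abs_of_nonneg (by positivity), ← Real.rpow_mul h_nonneg, one_div_mul_cancel he.ne',
      Real.rpow_one]
  calc ∑ j ∈ s, ∫ z, |A j z| * |B j z| ∂π
      ≤ ∑ j ∈ s, (∫ z, |A j z| ^ p ∂π) ^ (1 / p) * (∫ z, |B j z| ^ q ∂π) ^ (1 / q) :=
        Finset.sum_le_sum fun j hj => integral_mul_le_Lp_mul_Lq_of_nonneg hpq
          (Eventually.of_forall fun z => abs_nonneg _)
          (Eventually.of_forall fun z => abs_nonneg _) (hA j hj).abs (hB j hj).abs
    _ ≤ _ := Real.inner_le_Lp_mul_Lq s _ _ hpq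
    _ = _ := by simp only [h_abs_rpow _ hpq.pos, h_abs_rpow _ hpq.symm.pos]

lemma sum_integral_mul_le_of_le (hpq : q.HolderConjugate p) {ι : Type*} (s : Finset ι)
    {A B : ι → Ω → ℝ} (hA : ∀ j ∈ s, MemLp (A j) (ENNReal.ofReal q) π)
    (hB : ∀ j ∈ s, MemLp (B j) (ENNReal.ofReal p) π) {w r : ℝ} (hw : 0 < w) (hr : 0 ≤ r)
    (hBr : ∑ j ∈ s, ∫ z, |B j z| ^ p ∂π ≤ w ^ (p - 1) * r ^ p) :
    ∑ j ∈ s, ∫ z, |A j z| * |B j z| ∂π ≤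
      (w * ∑ j ∈ s, ∫ z, |A j z| ^ q ∂π) ^ (1 / q) * r := by
  have hp : 0 < p := hpq.symm.pos
  have h_sum_nonneg (f : ι → Ω → ℝ) (e : ℝ) : 0 ≤ ∑ j ∈ s, ∫ z, |f j z| ^ e ∂π :=
    Finset.sum_nonneg fun j _ => integral_nonneg fun z => by positivity
  have h_exponent : (p - 1) * (1 / p) = 1 / q := by
    have := hpq.inv_add_inv_eq_one
    field_simp at this ⊢
    linarith
  calc ∑ j ∈ s, ∫ z, |A j z| * |B j z| ∂π
      ≤ (∑ j ∈ s, ∫ z, |A j z| ^ q ∂π) ^ (1 / q) *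
          (∑ j ∈ s, ∫ z, |B j z| ^ p ∂π) ^ (1 / p) := sum_integral_mul_le_Lp_mul_Lq hpq s hA hB
    _ ≤ (∑ j ∈ s, ∫ z, |A j z| ^ q ∂π) ^ (1 / q) * (w ^ (p - 1) * r ^ p) ^ (1 / p) := by
        have := h_sum_nonneg A q
        have := h_sum_nonneg B p
        gcongr
    _ = (w * ∑ j ∈ s, ∫ z, |A j z| ^ q ∂π) ^ (1 / q) * r := by
        rw [Real.mul_rpow hw.le (h_sum_nonneg A q), Real.mul_rpow (by positivity) (by positivity),
          ← Real.rpow_mul hw.le, ← Real.rpow_mul hr, mul_one_div_cancel hp.ne', Real.rpow_one,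
          h_exponent]
        ring

end Holder

lemma memLp_of_norm_rpow_le {Ω E : Type*} [MeasurableSpace Ω] [NormedAddCommGroup E]
    {μ : Measure Ω} {q : ℝ} (hq : 0 < q) {f : Ω → E} {g : Ω → ℝ} (hf : AEStronglyMeasurable f μ)
    (hg : Integrable g μ) (hfg : ∀ᵐ ω ∂μ, ‖f ω‖ ^ q ≤ g ω) : MemLp f (ENNReal.ofReal q) μ := by
  rw [← integrable_norm_rpow_iff hf (by simpa using hq) ENNReal.ofReal_ne_top,
    ENNReal.toReal_ofReal hq.le]
  refine hg.mono' (hf.norm.aemeasurable.pow_const q).aestronglyMeasurable ?_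
  filter_upwards [hfg] with ω hω
  rwa [Real.norm_of_nonneg (by positivity)]

/-- The càdlàg path with value `V k` on the `k`-th cell of the uniform grid. The extra value `V n`
is taken at the right end point `T`. -/
def stepPath (T : ℝ) {d : ℕ} (n : ℕ) (V : Fin (n + 1) → Fin d → ℝ) : ℝ → Fin d → ℝ :=
  fun t => V ⟨min (gridIdx T n t) n, by omega⟩

/-- The path obtained from `x` by adding at each of the first `k` grid points `grid T n j` the jump
`h j - h (j + 1)`. It interpolates between `x` and a step approximation of `x - h`. -/
def shiftPath (T : ℝ) {d : ℕ} (n : ℕ) (x : ℝ → Fin d → ℝ) (h : ℕ → Fin d → ℝ) (k : ℕ) :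
    ℝ → Fin d → ℝ :=
  x + ∑ j ∈ Finset.range k, bump T (grid T n j) (h j - h (j + 1))

section Paths

variable {T : ℝ} {d : ℕ} {x y : ℝ → Fin d → ℝ}

lemma CadlagOn.add (hx : CadlagOn T x) (hy : CadlagOn T y) : CadlagOn T (x + y) := by
  refine ⟨fun t ht => (hx.1 t ht).add (hy.1 t ht), fun t ht => ?_⟩
  obtain ⟨l, hl⟩ := hx.2 t ht
  obtain ⟨l', hl'⟩ := hy.2 t ht
  exact ⟨l + l', hl.add hl'⟩

lemma CadlagOn.smul (hx : CadlagOn T x) (c : ℝ) : CadlagOn T (c • x) := by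
  refine ⟨fun t ht => (hx.1 t ht).const_smul c, fun t ht => ?_⟩
  obtain ⟨l, hl⟩ := hx.2 t ht
  exact ⟨c • l, hl.const_smul c⟩

lemma cadlagOn_of_continuousOn (hx : ContinuousOn x (Icc 0 T)) : CadlagOn T x := by
  refine ⟨fun t ht => ?_, fun t ht => ⟨x t, ?_⟩⟩
  · exact (hx t ⟨ht.1, ht.2.le⟩).mono fun s hs => ⟨ht.1.trans hs.1.le, hs.2⟩
  · exact (hx t ⟨ht.1.le, ht.2⟩).mono fun s hs => ⟨hs.1, hs.2.le.trans ht.2⟩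

lemma cadlagOn_of_eventuallyEq (h_right : ∀ t ∈ Ico 0 T, x =ᶠ[𝓝[Ioc t T] t] fun _ => x t)
    (h_left : ∀ t ∈ Ioc 0 T, ∃ l, x =ᶠ[𝓝[Ico 0 t] t] fun _ => l) : CadlagOn T x :=
  ⟨fun t ht => (h_right t ht).tendsto,
    fun t ht => (h_left t ht).imp fun _ hl => hl.tendsto⟩

lemma cadlagOn_bump (t : ℝ) (e : Fin d → ℝ) : CadlagOn T (bump T t e) := by
  refine cadlagOn_of_eventuallyEq (fun s hs => ?_) fun s hs => ?_
  · rcases le_or_gt t s with hts | hst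
    · filter_upwards [self_mem_nhdsWithin] with u hu
      simp [bump, hts, hs.2.le, hts.trans hu.1.le, hu.2]
    · filter_upwards [mem_nhdsWithin_of_mem_nhds (Iio_mem_nhds hst)] with u hu
      simp [bump, hst.not_ge, (mem_Iio.1 hu).not_ge]
  · rcases lt_or_ge t s with hts | hst
    · refine ⟨e, ?_⟩
      filter_upwards [mem_nhdsWithin_of_mem_nhds (Ioi_mem_nhds hts), self_mem_nhdsWithin]
        with u htu hu
      simp [bump, (mem_Ioi.1 htu).le, hu.2.le.trans hs.2]
    · refine ⟨0, ?_⟩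
      filter_upwards [self_mem_nhdsWithin] with u hu
      simp [bump, (hu.2.trans_le hst).not_ge]

lemma cadlagOn_stepPath (hT : 0 < T) {n : ℕ} (hn : 0 < n) (V : Fin (n + 1) → Fin d → ℝ) :
    CadlagOn T (stepPath T n V) := by
  refine cadlagOn_of_eventuallyEq (fun t ht => ?_) fun t ht => ?_
  · have h_lt := lt_grid_gridIdx_succ hT hn ht.1
    filter_upwards [mem_nhdsWithin_of_mem_nhds (Iio_mem_nhds h_lt), self_mem_nhdsWithin]
      with s hs hts
    have h_idx : gridIdx T n s = gridIdx T n t :=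
      (gridIdx_eq_iff hT hn (ht.1.trans hts.1.le)).2
        ⟨(grid_gridIdx_le hT hn ht.1).trans hts.1.le, hs⟩
    simp only [stepPath, h_idx]
  · obtain ⟨k, hkt, htk⟩ := exists_mem_Ioc_grid hT hn ht.1
    refine ⟨V ⟨min k n, by omega⟩, ?_⟩
    filter_upwards [mem_nhdsWithin_of_mem_nhds (Ioi_mem_nhds hkt), self_mem_nhdsWithin]
      with s hks hs
    have h_idx : gridIdx T n s = k :=
      (gridIdx_eq_iff hT hn hs.1).2 ⟨le_of_lt hks, hs.2.trans_le htk⟩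
    simp only [stepPath, h_idx]

lemma stepPath_apply (hT : 0 < T) {n : ℕ} (V : Fin (n + 1) → Fin d → ℝ) {t : ℝ} (ht : t ≤ T) :
    stepPath T n V t = V ⟨gridIdx T n t, Nat.lt_succ_of_le (gridIdx_le hT n ht)⟩ := by
  simp only [stepPath, min_eq_left (gridIdx_le hT n ht)]

lemma norm_stepPath_le {n : ℕ} (V : Fin (n + 1) → Fin d → ℝ) (t : ℝ) :
    ‖stepPath T n V t‖ ≤ ‖V‖ := norm_le_pi_norm V _

lemma pathSup_le {K : ℝ} (hK : 0 ≤ K) (h : ∀ t ∈ Icc 0 T, ‖x t‖ ≤ K) : pathSup T x ≤ K :=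
  Real.iSup_le (fun t => h t.1 t.2) hK

lemma pathSup_nonneg (x : ℝ → Fin d → ℝ) : 0 ≤ pathSup T x :=
  Real.iSup_nonneg fun _ => norm_nonneg _

lemma tendstoUniformlyOn_stepPath_grid (hT : 0 < T) (hx : ContinuousOn x (Icc 0 T)) :
    TendstoUniformlyOn
      (fun m : ℕ => stepPath T (m + 1) fun k => x (grid T (m + 1) k)) x atTop (Icc 0 T) := by
  have huc := isCompact_Icc.uniformContinuousOn_of_continuous hx
  rw [Metric.uniformContinuousOn_iff] at huc
  rw [Metric.tendstoUniformlyOn_iff]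
  intro ε hε
  obtain ⟨η, hη, h⟩ := huc ε hε
  have h_mesh : Tendsto (fun m : ℕ => T / ((m + 1 : ℕ) : ℝ)) atTop (𝓝 0) :=
    (tendsto_const_div_atTop_nhds_zero_nat T).comp (tendsto_add_atTop_nat 1)
  filter_upwards [h_mesh.eventually_lt_const hη] with m hm t ht
  rw [stepPath_apply hT _ ht.2]
  refine h _ ht _ (grid_mem_Icc hT m.succ_pos (gridIdx_le hT _ ht.2)) ?_
  have h_le := grid_gridIdx_le hT m.succ_pos ht.1
  have h_lt := lt_grid_gridIdx_succ hT m.succ_pos ht.1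
  rw [grid_succ] at h_lt
  rw [Real.dist_eq, abs_lt]
  constructor <;> linarith

lemma tendstoUniformlyOn_stepPath {n : ℕ} {ι : Type*} {l : Filter ι}
    {V : ι → Fin (n + 1) → Fin d → ℝ} {V₀ : Fin (n + 1) → Fin d → ℝ} (h : Tendsto V l (𝓝 V₀))
    (s : Set ℝ) :
    TendstoUniformlyOn (fun j => stepPath T n (V j)) (stepPath T n V₀) l s := by
  rw [Metric.tendstoUniformlyOn_iff]
  intro ε hε
  filter_upwards [Metric.tendsto_nhds.1 h ε hε] with j hj t _
  rw [dist_comm]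
  exact (dist_le_pi_dist (V j) V₀ _).trans_lt hj

lemma tendstoUniformlyOn_const_seq {ι : Type*} (x : ℝ → Fin d → ℝ) (l : Filter ι) (s : Set ℝ) :
    TendstoUniformlyOn (fun _ => x) x l s :=
  fun _ hu => Eventually.of_forall fun _ _ _ => refl_mem_uniformity hu

lemma UnifContOnCadlag.congr {F : (ℝ → Fin d → ℝ) → ℝ} (hF : UnifContOnCadlag T F)
    (hx : CadlagOn T x) (hy : CadlagOn T y) (h : EqOn x y (Icc 0 T)) : F x = F y :=
  tendsto_nhds_unique
    (hF x (fun _ => y) hx (fun _ => hy) ((tendstoUniformlyOn_const_seq y _ _).congr_right h.symm))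
    tendsto_const_nhds

lemma UnifContOnCadlagVec.apply {F : (ℝ → Fin d → ℝ) → Fin d → ℝ}
    (hF : UnifContOnCadlagVec T F) (i : Fin d) : UnifContOnCadlag T fun ω => F ω i :=
  fun ω ωs hω hωs h_unif => tendsto_pi_nhds.1 (hF ω ωs hω hωs h_unif) i

lemma UnifContOnCadlagVec.congr {F : (ℝ → Fin d → ℝ) → Fin d → ℝ}
    (hF : UnifContOnCadlagVec T F) (hx : CadlagOn T x) (hy : CadlagOn T y)
    (h : EqOn x y (Icc 0 T)) : F x = F y :=
  funext fun i => (hF.apply i).congr hx hy h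

lemma UnifContOnCadlag.continuous_comp {F : (ℝ → Fin d → ℝ) → ℝ} (hF : UnifContOnCadlag T F)
    {A : Type*} [TopologicalSpace A] [SequentialSpace A] {y : A → ℝ → Fin d → ℝ}
    (hy : ∀ a, CadlagOn T (y a)) (hy_unif : ∀ a, TendstoUniformlyOn y (y a) (𝓝 a) (Icc 0 T)) :
    Continuous fun a => F (y a) :=
  continuous_iff_seqContinuous.2 fun _ a₀ ha =>
    hF _ _ (hy a₀) (fun _ => hy _) fun u hu => ha.eventually (hy_unif a₀ u hu)

lemma UnifContOnCadlag.continuous_stepPath (hT : 0 < T) {F : (ℝ → Fin d → ℝ) → ℝ}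
    (hF : UnifContOnCadlag T F) {n : ℕ} (hn : 0 < n) (hx : CadlagOn T x) :
    Continuous fun V : Fin (n + 1) → Fin d → ℝ => F (x + stepPath T n V) :=
  hF.continuous_comp (fun V => hx.add (cadlagOn_stepPath hT hn V)) fun _ =>
    (tendstoUniformlyOn_const_seq x _ _).add (tendstoUniformlyOn_stepPath tendsto_id _)

lemma UnifContOnCadlag.continuous_stepPath_add (hT : 0 < T) {F : (ℝ → Fin d → ℝ) → ℝ}
    (hF : UnifContOnCadlag T F) {m n : ℕ} (hm : 0 < m) (hn : 0 < n) :
    Continuous fun V : (Fin (m + 1) → Fin d → ℝ) × (Fin (n + 1) → Fin d → ℝ) =>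
      F (stepPath T m V.1 + stepPath T n V.2) :=
  hF.continuous_comp (fun V => (cadlagOn_stepPath hT hm V.1).add (cadlagOn_stepPath hT hn V.2))
    fun _ => (tendstoUniformlyOn_stepPath (continuous_fst.tendsto _) _).add
      (tendstoUniformlyOn_stepPath (continuous_snd.tendsto _) _)

lemma UnifContOnCadlag.measurable_comp_add_stepPath (hT : 0 < T) {F : (ℝ → Fin d → ℝ) → ℝ}
    (hF : UnifContOnCadlag T F) {Ω : Type*} [MeasurableSpace Ω] {x : Ω → ℝ → Fin d → ℝ}
    (hx : ∀ z, ContinuousOn (x z) (Icc 0 T)) (hx_meas : ∀ t ∈ Icc 0 T, Measurable fun z => x z t)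
    {n : ℕ} (hn : 0 < n) {V : Ω → Fin (n + 1) → Fin d → ℝ} (hV : Measurable V) :
    Measurable fun z => F (x z + stepPath T n (V z)) := by
  refine measurable_of_tendsto_metrizable
    (f := fun (m : ℕ) z => F (stepPath T (m + 1) (fun k => x z (grid T (m + 1) k)) +
      stepPath T n (V z))) (fun m => ?_) (tendsto_pi_nhds.2 fun z => ?_)
  · refine (hF.continuous_stepPath_add hT m.succ_pos hn).measurable.comp
      (Measurable.prodMk (measurable_pi_lambda _ fun k => ?_) hV)
    exact hx_meas _ (grid_mem_Icc hT m.succ_pos (Nat.lt_succ_iff.1 k.2))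
  · exact hF _ _ ((cadlagOn_of_continuousOn (hx z)).add (cadlagOn_stepPath hT hn _))
      (fun m => (cadlagOn_stepPath hT m.succ_pos _).add (cadlagOn_stepPath hT hn _))
      ((tendstoUniformlyOn_stepPath_grid hT (hx z)).add (tendstoUniformlyOn_const_seq _ _ _))

lemma UnifContOnCadlag.measurable_comp (hT : 0 < T) {F : (ℝ → Fin d → ℝ) → ℝ}
    (hF : UnifContOnCadlag T F) {Ω : Type*} [MeasurableSpace Ω] {x : Ω → ℝ → Fin d → ℝ}
    (hx : ∀ z, ContinuousOn (x z) (Icc 0 T))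
    (hx_meas : ∀ t ∈ Icc 0 T, Measurable fun z => x z t) :
    Measurable fun z => F (x z) := by
  have h_stepPath_zero : stepPath T 1 (0 : Fin 2 → Fin d → ℝ) = 0 := rfl
  simpa only [h_stepPath_zero, add_zero] using
    hF.measurable_comp_add_stepPath hT hx hx_meas one_pos (V := fun _ => 0) measurable_const

lemma HasLeftLimits.exists_uniform {F : (ℝ → Fin d → ℝ) → ℝ → Fin d → ℝ}
    (hF : HasLeftLimits T F) (hx : CadlagOn T x) {t : ℝ} (ht : t ∈ Ioc 0 T) :
    ∃ l : Fin d → ℝ, ∀ ε > 0, ∃ η > 0, ∀ y : ℝ → Fin d → ℝ, CadlagOn T y →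
      (∀ s ∈ Icc 0 T, ‖y s - x s‖ < η) → ∀ s ∈ Ioo (t - η) t, ‖F y s - l‖ < ε := by
  obtain ⟨l, hl⟩ := hF x hx t ht
  refine ⟨l, fun ε hε => ?_⟩
  by_contra! hcon
  have hη (k : ℕ) : 0 < 1 / ((k : ℝ) + 1) := Nat.one_div_pos_of_nat
  choose y hy hyx s hs hys using fun k : ℕ => hcon _ (hη k)
  have hs_tendsto : Tendsto s atTop (𝓝 t) := by
    have h_lower : Tendsto (fun k : ℕ => t - 1 / ((k : ℝ) + 1)) atTop (𝓝 t) := by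
      simpa using
        (tendsto_const_nhds (x := t)).sub (tendsto_one_div_add_atTop_nhds_zero_nat (𝕜 := ℝ))
    exact tendsto_of_tendsto_of_tendsto_of_le_of_le h_lower tendsto_const_nhds
      (fun k => (hs k).1.le) fun k => (hs k).2.le
  have hy_unif : TendstoUniformlyOn y x atTop (Icc 0 T) := by
    rw [Metric.tendstoUniformlyOn_iff]
    intro ε' hε'
    filter_upwards [tendsto_one_div_add_atTop_nhds_zero_nat.eventually_lt_const hε']
      with k hk u hu
    rw [dist_comm, dist_eq_norm]
    exact (hyx k u hu).trans hk
  obtain ⟨φ, hφ, h_mono⟩ := exists_strictMono_monotone_comp hs_tendsto fun k => (hs k).2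
  have h_lim := hl (y ∘ φ) (s ∘ φ) (fun k => hy _)
    (fun u hu => hφ.tendsto_atTop.eventually (hy_unif u hu)) (fun k => (hs _).2) h_mono
    (hs_tendsto.comp hφ.tendsto_atTop)
  obtain ⟨k, hk⟩ := (Metric.tendsto_nhds.1 h_lim ε hε).exists
  rw [dist_eq_norm] at hk
  exact hk.not_ge (hys (φ k))

end Paths

section Telescoping

variable {T : ℝ} {d : ℕ} {x : ℝ → Fin d → ℝ} {n : ℕ}

lemma shiftPath_succ (n : ℕ) (x : ℝ → Fin d → ℝ) (h : ℕ → Fin d → ℝ) (k : ℕ) :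
    shiftPath T n x h (k + 1) = shiftPath T n x h k + bump T (grid T n k) (h k - h (k + 1)) := by
  simp only [shiftPath, Finset.sum_range_succ, add_assoc]

lemma cadlagOn_shiftPath (n : ℕ) (hx : CadlagOn T x) (h : ℕ → Fin d → ℝ) (k : ℕ) :
    CadlagOn T (shiftPath T n x h k) := by
  induction k with
  | zero => simpa [shiftPath] using hx
  | succ k ih => exact shiftPath_succ n x h k ▸ ih.add (cadlagOn_bump _ _)

lemma bump_grid_apply (hT : 0 < T) (hn : 0 < n) (k : ℕ) (e : Fin d → ℝ) {t : ℝ}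
    (ht : t ∈ Icc 0 T) : bump T (grid T n k) e t = if k ≤ gridIdx T n t then e else 0 := by
  simp only [bump, indicator, mem_Icc, ht.2, and_true, le_gridIdx_iff hT hn ht.1]

lemma shiftPath_apply (hT : 0 < T) (hn : 0 < n) (x : ℝ → Fin d → ℝ) {h : ℕ → Fin d → ℝ}
    (h0 : h 0 = 0) (k : ℕ) {t : ℝ} (ht : t ∈ Icc 0 T) :
    shiftPath T n x h k t = x t - h (min k (gridIdx T n t + 1)) := by
  induction k with
  | zero => simp [shiftPath, h0]
  | succ k ih =>
    rw [shiftPath_succ, Pi.add_apply, ih, bump_grid_apply hT hn k _ ht]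
    split_ifs with hk
    · rw [min_eq_left (by omega), min_eq_left (by omega)]; abel
    · rw [min_eq_right (by omega), min_eq_right (by omega), add_zero]

lemma shiftPath_eqOn_stepPath (hT : 0 < T) (hn : 0 < n) (x : ℝ → Fin d → ℝ)
    {h : ℕ → Fin d → ℝ} (h0 : h 0 = 0) :
    EqOn (shiftPath T n x h n) (x + stepPath T n fun k => -h (min n (k + 1))) (Icc 0 T) := by
  intro t ht
  rw [shiftPath_apply hT hn x h0 n ht, Pi.add_apply, stepPath_apply hT _ ht.2, sub_eq_add_neg]

/-- The step values of the path between `shiftPath T n x h k` and `shiftPath T n x h (k + 1)`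
at which the mean value theorem is applied; `r` is the position on the segment. -/
def shiftSegment {d : ℕ} (n : ℕ) (h : ℕ → Fin d → ℝ) (k : ℕ) (r : ℝ) : Fin (n + 1) → Fin d → ℝ :=
  fun i => if (i : ℕ) < k then -h (i + 1) else -AffineMap.lineMap (h k) (h (k + 1)) r

lemma shiftPath_add_smul_bump_eqOn_stepPath (hT : 0 < T) (hn : 0 < n) (x : ℝ → Fin d → ℝ)
    {h : ℕ → Fin d → ℝ} (h0 : h 0 = 0) (k : ℕ) (r : ℝ) :
    EqOn (shiftPath T n x h k + r • bump T (grid T n k) (h k - h (k + 1)))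
      (x + stepPath T n (shiftSegment n h k r)) (Icc 0 T) := by
  intro t ht
  simp only [Pi.add_apply, Pi.smul_apply, shiftPath_apply hT hn x h0 k ht,
    bump_grid_apply hT hn k _ ht, stepPath_apply hT _ ht.2, shiftSegment,
    AffineMap.lineMap_apply_module]
  split_ifs with hle hlt hlt
  · omega
  · rw [min_eq_left (by omega)]
    module
  · rw [min_eq_right (by omega), smul_zero, add_zero, sub_eq_add_neg]
  · omega

lemma norm_shiftSegment_le (h : ℕ → Fin d → ℝ) {k : ℕ} (hk : k < n) {r : ℝ} (hr : r ∈ Icc 0 1) :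
    ‖shiftSegment n h k r‖ ≤ ‖fun j : Fin (n + 1) => h j‖ := by
  have h_le (j : ℕ) (hj : j ≤ n) : ‖h j‖ ≤ ‖fun j : Fin (n + 1) => h j‖ :=
    norm_le_pi_norm (fun j : Fin (n + 1) => h j) ⟨j, by omega⟩
  refine (pi_norm_le_iff_of_nonneg (norm_nonneg _)).2 fun i => ?_
  rw [shiftSegment]
  split_ifs with hi
  · exact (norm_neg _).trans_le (h_le _ (by omega))
  · rw [norm_neg, ← mem_closedBall_zero_iff]
    exact (convex_closedBall 0 _).lineMap_mem (mem_closedBall_zero_iff.2 (h_le _ hk.le))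
      (mem_closedBall_zero_iff.2 (h_le _ hk)) hr

lemma HasPathwiseMalliavinDeriv.hasDerivAt {f : (ℝ → Fin d → ℝ) → ℝ}
    {Df : (ℝ → Fin d → ℝ) → ℝ → Fin d → ℝ} (hdiff : HasPathwiseMalliavinDeriv T f Df)
    (hx : CadlagOn T x) {t : ℝ} (ht : t ∈ Icc 0 T) (e : Fin d → ℝ) (r : ℝ) :
    HasDerivAt (fun r : ℝ => f (x + r • bump T t e))
      (∑ i, Df (x + r • bump T t e) t i * e i) r := by
  rw [hasDerivAt_iff_tendsto_slope_zero]
  refine (hdiff _ (hx.add ((cadlagOn_bump t e).smul r)) t ht e).congr fun ε => ?_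
  rw [add_smul, ← add_assoc, smul_eq_mul, div_eq_inv_mul]

lemma exists_shiftPath_succ_sub_eq (hT : 0 < T) {f : (ℝ → Fin d → ℝ) → ℝ}
    {Df : (ℝ → Fin d → ℝ) → ℝ → Fin d → ℝ} (hdiff : HasPathwiseMalliavinDeriv T f Df)
    (hDcont : ∀ t ∈ Icc 0 T, UnifContOnCadlagVec T fun ω => Df ω t) {k : ℕ} (hk : k < n)
    (hx : CadlagOn T x) {h : ℕ → Fin d → ℝ} (h0 : h 0 = 0) :
    ∃ V : Fin (n + 1) → Fin d → ℝ, ‖V‖ ≤ ‖fun j : Fin (n + 1) => h j‖ ∧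
      f (shiftPath T n x h (k + 1)) - f (shiftPath T n x h k) =
        ∑ i, Df (x + stepPath T n V) (grid T n k) i * (h k i - h (k + 1) i) := by
  have hn : 0 < n := by omega
  have ht := grid_mem_Icc hT hn hk.le
  have hc := cadlagOn_shiftPath n hx h k
  have h_deriv := hdiff.hasDerivAt hc ht (h k - h (k + 1))
  obtain ⟨r, hr, h_slope⟩ := exists_hasDerivAt_eq_slope _ _ zero_lt_one
    (fun s _ => (h_deriv s).continuousAt.continuousWithinAt) fun s _ => h_deriv s
  refine ⟨shiftSegment n h k r, norm_shiftSegment_le h hk (Ioo_subset_Icc_self hr), ?_⟩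
  have h_path := (hDcont _ ht).congr (hc.add ((cadlagOn_bump _ _).smul r))
    (hx.add (cadlagOn_stepPath hT hn _)) (shiftPath_add_smul_bump_eqOn_stepPath hT hn x h0 k r)
  rw [one_smul, ← shiftPath_succ, zero_smul, add_zero, sub_zero, div_one, h_path] at h_slope
  exact h_slope.symm

end Telescoping

section Cost

variable {T : ℝ} {d : ℕ}

lemma lpnorm_rpow {e : ℝ} (he : 0 < e) (v : Fin d → ℝ) : lpnorm e v ^ e = ∑ i, |v i| ^ e := by
  unfold lpnorm
  rw [← Real.rpow_mul (Finset.sum_nonneg fun i _ => by positivity), one_div,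
    inv_mul_cancel₀ he.ne', Real.rpow_one]

lemma lpnorm_nonneg (e : ℝ) (v : Fin d → ℝ) : 0 ≤ lpnorm e v :=
  Real.rpow_nonneg (Finset.sum_nonneg fun i _ => by positivity) _

lemma norm_le_lpnorm {e : ℝ} (he : 0 < e) (v : Fin d → ℝ) : ‖v‖ ≤ lpnorm e v := by
  refine (pi_norm_le_iff_of_nonneg (lpnorm_nonneg _ _)).2 fun i => ?_
  unfold lpnorm
  rw [one_div, Real.le_rpow_inv_iff_of_pos (norm_nonneg _)
    (Finset.sum_nonneg fun i _ => by positivity) he]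
  exact Finset.single_le_sum (f := fun i => |v i| ^ e) (fun i _ => by positivity)
    (Finset.mem_univ i)

lemma norm_rpow_le_sum {e : ℝ} (he : 0 < e) (v : Fin d → ℝ) : ‖v‖ ^ e ≤ ∑ i, |v i| ^ e := by
  rw [← lpnorm_rpow he]
  exact Real.rpow_le_rpow (norm_nonneg _) (norm_le_lpnorm he v) he.le

lemma lintegral_rpow_le {Ω : Type*} [MeasurableSpace Ω] {ν : Measure Ω} {p : ℝ} (hp : 1 < p)
    {g : Ω → ℝ≥0∞} (hg : AEMeasurable g ν) :
    (∫⁻ z, g z ∂ν) ^ p ≤ ν univ ^ (p - 1) * ∫⁻ z, g z ^ p ∂ν := by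
  have hpq := Real.HolderConjugate.conjExponent hp
  have h_holder : ∫⁻ z, g z ∂ν ≤ (∫⁻ z, g z ^ p ∂ν) ^ (1 / p) * ν univ ^ (1 / p.conjExponent) := by
    simpa using ENNReal.lintegral_mul_le_Lp_mul_Lq ν hpq hg (aemeasurable_const (b := (1 : ℝ≥0∞)))
  have h_exponent : 1 / p.conjExponent * p = p - 1 := by
    have := hpq.ne_zero
    have : p - 1 ≠ 0 := by linarith
    unfold Real.conjExponent
    field_simp
  calc (∫⁻ z, g z ∂ν) ^ p
      ≤ ((∫⁻ z, g z ^ p ∂ν) ^ (1 / p) * ν univ ^ (1 / p.conjExponent)) ^ p :=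
        ENNReal.rpow_le_rpow h_holder hpq.nonneg
    _ = ν univ ^ (p - 1) * ∫⁻ z, g z ^ p ∂ν := by
        rw [ENNReal.mul_rpow_of_nonneg _ _ hpq.nonneg, ← ENNReal.rpow_mul, ← ENNReal.rpow_mul,
          one_div_mul_cancel hpq.ne_zero, ENNReal.rpow_one, mul_comm, h_exponent]

section Primitive

variable {a b : ℝ} (ha : 0 ≤ a) (hab : a ≤ b) (hb : b ≤ T)
include ha hab hb

lemma sub_eq_setIntegral_Ioc {E : Type*} [NormedAddCommGroup E] [NormedSpace ℝ E] {H g : ℝ → E}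
    (hg : IntegrableOn g (Icc 0 T)) (hH : ∀ t ∈ Icc 0 T, H t = ∫ s in Ioc 0 t, g s) :
    H b - H a = ∫ s in Ioc a b, g s := by
  have h_int {u : ℝ} (hu0 : 0 ≤ u) (huT : u ≤ T) : IntervalIntegrable g volume 0 u :=
    (intervalIntegrable_iff_integrableOn_Ioc_of_le hu0).2
      (hg.mono_set (Ioc_subset_Icc_self.trans (Icc_subset_Icc_right huT)))
  rw [hH b ⟨ha.trans hab, hb⟩, hH a ⟨ha, hab.trans hb⟩,
    ← intervalIntegral.integral_of_le (ha.trans hab), ← intervalIntegral.integral_of_le ha,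
    ← intervalIntegral.integral_of_le hab]
  exact intervalIntegral.integral_interval_sub_left (h_int (ha.trans hab) hb)
    (h_int ha (hab.trans hb))

lemma sum_abs_increment_rpow_le {p : ℝ} (hp : 1 < p) {H g : ℝ → Fin d → ℝ}
    (hg : IntegrableOn g (Icc 0 T)) (hH : ∀ t ∈ Icc 0 T, H t = ∫ s in Ioc 0 t, g s) :
    ∑ i, ENNReal.ofReal (|H b i - H a i| ^ p) ≤
      ENNReal.ofReal (b - a) ^ (p - 1) *
        ∫⁻ t in Ioc a b, ENNReal.ofReal (lpnorm p (g t) ^ p) := by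
  have hp0 : 0 < p := by linarith
  have hg_int (i : Fin d) : IntegrableOn (fun t => g t i) (Ioc a b) :=
    (hg.mono_set (Ioc_subset_Icc_self.trans (Icc_subset_Icc ha hb))).eval i
  have h_ofReal (r : ℝ) : ENNReal.ofReal (|r| ^ p) = ‖r‖ₑ ^ p := by
    rw [← ENNReal.ofReal_rpow_of_nonneg (abs_nonneg _) hp0.le, ← Real.norm_eq_abs, ofReal_norm]
  have h_increment (i : Fin d) : H b i - H a i = ∫ s in Ioc a b, g s i := by
    rw [← eval_integral hg_int, ← sub_eq_setIntegral_Ioc ha hab hb hg hH, Pi.sub_apply]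
  calc ∑ i, ENNReal.ofReal (|H b i - H a i| ^ p)
      ≤ ∑ i, ENNReal.ofReal (b - a) ^ (p - 1) * ∫⁻ t in Ioc a b, ‖g t i‖ₑ ^ p := by
        refine Finset.sum_le_sum fun i _ => ?_
        rw [h_ofReal, h_increment]
        refine (ENNReal.rpow_le_rpow (enorm_integral_le_lintegral_enorm _) hp0.le).trans ?_
        simpa using lintegral_rpow_le hp (hg_int i).aemeasurable.enorm
    _ = ENNReal.ofReal (b - a) ^ (p - 1) * ∫⁻ t in Ioc a b, ∑ i, ‖g t i‖ₑ ^ p := by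
        rw [← Finset.mul_sum, ← lintegral_finsetSum' _ fun i _ =>
          (hg_int i).aemeasurable.enorm.pow_const p]
    _ = _ := by
        simp_rw [lpnorm_rpow hp0, ENNReal.ofReal_sum_of_nonneg fun _ _ =>
          Real.rpow_nonneg (abs_nonneg _) p, h_ofReal]

end Primitive

lemma le_mul_hcost {p : ℝ} {c : ℝ≥0∞} (hc0 : c ≠ 0) (hc : c ≠ ⊤) {a : ℝ≥0∞}
    {x y : ℝ → Fin d → ℝ}
    (h : ∀ g : ℝ → Fin d → ℝ, IntegrableOn g (Icc 0 T) →
      (∀ t ∈ Icc 0 T, (x - y) t = ∫ s in Ioc 0 t, g s) →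
      a ≤ c * ∫⁻ t in Icc 0 T, ENNReal.ofReal (lpnorm p (g t) ^ p)) :
    a ≤ c * hcost T p x y := by
  rw [mul_comm, ← ENNReal.div_le_iff_le_mul (Or.inl hc0) (Or.inl hc)]
  refine le_sInf ?_
  rintro v ⟨g, hg, hxy, rfl⟩
  rw [ENNReal.div_le_iff_le_mul (Or.inl hc0) (Or.inl hc), mul_comm]
  exact h g hg hxy

lemma sum_sum_abs_increment_rpow_le_hcost (hT : 0 < T) {p : ℝ} (hp : 1 < p) {n : ℕ}
    (hn : 0 < n) (x y : ℝ → Fin d → ℝ) :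
    ∑ k ∈ Finset.range n, ∑ i,
      ENNReal.ofReal (|(x - y) (grid T n (k + 1)) i - (x - y) (grid T n k) i| ^ p) ≤
      ENNReal.ofReal ((T / n) ^ (p - 1)) * hcost T p x y := by
  have hTn : 0 < T / n := by positivity
  refine le_mul_hcost (ENNReal.ofReal_pos.2 (by positivity)).ne' ENNReal.ofReal_ne_top
    fun g hg hxy => ?_
  have h_nonneg (k : ℕ) : 0 ≤ grid T n k := grid_nonneg hT n k
  have h_le (k : ℕ) (hk : k ∈ Finset.range n) : grid T n (k + 1) ≤ T :=
    (grid_mem_Icc hT hn (Finset.mem_range.1 hk)).2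
  have h_disj : Pairwise (Function.onFun Disjoint fun k => Ioc (grid T n k) (grid T n (k + 1))) :=
    by simpa using (grid_mono hT n).pairwise_disjoint_on_Ioc_succ
  calc _ ≤ ∑ k ∈ Finset.range n, ENNReal.ofReal ((T / n) ^ (p - 1)) *
        ∫⁻ t in Ioc (grid T n k) (grid T n (k + 1)), ENNReal.ofReal (lpnorm p (g t) ^ p) := by
        refine Finset.sum_le_sum fun k hk => ?_
        have h_increment := sum_abs_increment_rpow_le (h_nonneg k) (grid_mono hT n k.le_succ)
          (h_le k hk) hp hg hxy
        rwa [grid_succ, add_sub_cancel_left, ENNReal.ofReal_rpow_of_pos hTn, ← grid_succ]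
          at h_increment
    _ = ENNReal.ofReal ((T / n) ^ (p - 1)) * ∫⁻ t in
        ⋃ k ∈ Finset.range n, Ioc (grid T n k) (grid T n (k + 1)),
          ENNReal.ofReal (lpnorm p (g t) ^ p) := by
        rw [← Finset.mul_sum, lintegral_biUnion_finset (fun _ _ _ _ hij => h_disj hij)
          fun _ _ => measurableSet_Ioc]
    _ ≤ _ := by
        gcongr
        exact iUnion₂_subset fun k hk t ht =>
          ⟨(h_nonneg k).trans ht.1.le, ht.2.trans (h_le k hk)⟩

lemma norm_rpow_le_hcost (hT : 0 < T) {p : ℝ} (hp : 1 < p) {x y : ℝ → Fin d → ℝ}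
    (h0 : x 0 = y 0) {t : ℝ} (ht : t ∈ Icc 0 T) :
    ENNReal.ofReal (‖(x - y) t‖ ^ p) ≤ ENNReal.ofReal (T ^ (p - 1)) * hcost T p x y := by
  refine le_mul_hcost (ENNReal.ofReal_pos.2 (by positivity)).ne' ENNReal.ofReal_ne_top
    fun g hg hxy => ?_
  have h_increment := sum_abs_increment_rpow_le le_rfl ht.1 ht.2 hp hg hxy
  simp only [Pi.sub_apply x y 0, h0, sub_self, Pi.zero_apply, sub_zero] at h_increment
  calc ENNReal.ofReal (‖(x - y) t‖ ^ p) ≤ ENNReal.ofReal (∑ i, |(x - y) t i| ^ p) :=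
        ENNReal.ofReal_le_ofReal (norm_rpow_le_sum (by linarith) _)
    _ = ∑ i, ENNReal.ofReal (|(x - y) t i| ^ p) :=
        ENNReal.ofReal_sum_of_nonneg fun i _ => by positivity
    _ ≤ _ := h_increment
    _ ≤ _ := by
        rw [← ENNReal.ofReal_rpow_of_pos hT]
        gcongr
        · exact ht.2
        · exact Ioc_subset_Icc_self.trans (Icc_subset_Icc_right ht.2)

end Cost

/-- The `p`-th power of the supremum over `[0,T]` of the `ℓ_p`-norm of a path. -/
def pathMoment (T p : ℝ) {d : ℕ} (ω : ContPath T d) : ℝ :=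
  (⨆ t : Icc (0 : ℝ) T, lpnorm p (ω.1 t.1)) ^ p

/-- The standing assumptions of the sensitivity theorem on the reference measure `μ`, on the
functional `F` on càdlàg paths and on its pathwise Malliavin derivative `DF`. -/
structure SensitivitySetup (T p q : ℝ) {d : ℕ} (μ : Measure (ContPath T d))
    (F : (ℝ → Fin d → ℝ) → ℝ) (DF : (ℝ → Fin d → ℝ) → ℝ → Fin d → ℝ) : Prop where
  pos : 0 < T
  conj : p.HolderConjugate q
  prob : IsProbabilityMeasure μ
  moment : Integrable (pathMoment T p) μ
  deriv : HasPathwiseMalliavinDeriv T F DF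
  cont : UnifContOnCadlag T F
  derivCont : ∀ t ∈ Icc (0 : ℝ) T, UnifContOnCadlagVec T (fun ω => DF ω t)
  leftLim : HasLeftLimits T DF
  growth : ∃ C : ℝ, ∀ ω : ℝ → Fin d → ℝ, CadlagOn T ω → |F ω| ≤ C * (1 + pathSup T ω ^ p)
  derivGrowth : ∃ C : ℝ, ∀ ω : ℝ → Fin d → ℝ, CadlagOn T ω → ∀ t ∈ Icc (0 : ℝ) T,
    lpnorm q (DF ω t) ≤ C * (1 + pathSup T ω ^ (p - 1))

lemma rpow_add_le_mul_rpow_add_rpow {a b e : ℝ} (ha : 0 ≤ a) (hb : 0 ≤ b) (he : 1 ≤ e) :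
    (a + b) ^ e ≤ 2 ^ (e - 1) * (a ^ e + b ^ e) := by
  lift a to NNReal using ha
  lift b to NNReal using hb
  exact_mod_cast NNReal.rpow_add_le_mul_rpow_add_rpow a b he

section Growth

variable {T p q : ℝ} {d : ℕ}

lemma measurable_eval {t : ℝ} (ht : t ∈ Icc 0 T) : Measurable fun ω : ContPath T d => ω.1 t :=
  Measurable.of_comap_le (le_iSup (fun r : {r : ℝ // 0 ≤ r ∧ r ≤ T ∧ r ≤ T} =>
    MeasurableSpace.comap (fun ω : ContPath T d => ω.1 r.1) inferInstance) ⟨t, ht.1, ht.2, ht.2⟩)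

lemma ContPath.cadlagOn (ω : ContPath T d) : CadlagOn T ω.1 := cadlagOn_of_continuousOn ω.2.1

lemma cadlagOn_zero : CadlagOn T (0 : ℝ → Fin d → ℝ) :=
  cadlagOn_of_continuousOn continuousOn_const

lemma pathMoment_nonneg (p : ℝ) (ω : ContPath T d) : 0 ≤ pathMoment T p ω :=
  Real.rpow_nonneg (Real.iSup_nonneg fun _ => lpnorm_nonneg _ _) _

lemma continuous_lpnorm {e : ℝ} (he : 0 < e) : Continuous (lpnorm e : (Fin d → ℝ) → ℝ) := by
  unfold lpnorm
  refine Continuous.rpow_const (continuous_finsetSum _ fun i _ => ?_) fun _ => Or.inr ?_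
  · exact Continuous.rpow_const (by fun_prop) fun _ => Or.inr he.le
  · positivity

lemma norm_rpow_le_pathMoment (hp : 0 < p) (ω : ContPath T d) {t : ℝ} (ht : t ∈ Icc 0 T) :
    ‖ω.1 t‖ ^ p ≤ pathMoment T p ω := by
  have h_bdd : BddAbove (range fun t : Icc (0 : ℝ) T => lpnorm p (ω.1 t.1)) := by
    have := (isCompact_Icc.image_of_continuousOn
      ((continuous_lpnorm hp).comp_continuousOn ω.2.1)).bddAbove
    rwa [image_eq_range] at this
  exact Real.rpow_le_rpow (norm_nonneg _)
    ((norm_le_lpnorm hp _).trans (le_ciSup h_bdd ⟨t, ht⟩)) hp.le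

lemma one_add_pathSup_add_rpow_le (hp : 1 ≤ p) (ω : ContPath T d) {z : ℝ → Fin d → ℝ} {R : ℝ}
    (hR : 0 ≤ R) (hz : ∀ s ∈ Icc 0 T, ‖z s‖ ≤ R) :
    1 + pathSup T (ω.1 + z) ^ p ≤ 2 ^ p * (1 + pathMoment T p ω + R ^ p) := by
  have hp0 : 0 < p := by linarith
  have hM := pathMoment_nonneg p ω
  have h_sup : pathSup T (ω.1 + z) ≤ pathMoment T p ω ^ (1 / p) + R := by
    refine pathSup_le (by positivity) fun t ht =>
      (norm_add_le _ _).trans (add_le_add ?_ (hz t ht))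
    rw [one_div, Real.le_rpow_inv_iff_of_pos (norm_nonneg _) hM hp0]
    exact norm_rpow_le_pathMoment hp0 ω ht
  have h_pow : pathSup T (ω.1 + z) ^ p ≤ 2 ^ (p - 1) * (pathMoment T p ω + R ^ p) := by
    refine (Real.rpow_le_rpow (pathSup_nonneg _) h_sup hp0.le).trans
      ((rpow_add_le_mul_rpow_add_rpow (by positivity) hR hp).trans_eq ?_)
    rw [← Real.rpow_mul hM, one_div_mul_cancel hp0.ne', Real.rpow_one]
  have h_one : (1 : ℝ) ≤ 2 ^ p := Real.one_le_rpow one_le_two hp0.le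
  have h_two : (2 : ℝ) ^ (p - 1) ≤ 2 ^ p :=
    Real.rpow_le_rpow_of_exponent_le one_le_two (by linarith)
  have h_prod := mul_le_mul_of_nonneg_right h_two
    (show 0 ≤ pathMoment T p ω + R ^ p by positivity)
  linarith

namespace SensitivitySetup

variable {μ : Measure (ContPath T d)} {F : (ℝ → Fin d → ℝ) → ℝ}
  {DF : (ℝ → Fin d → ℝ) → ℝ → Fin d → ℝ}

lemma exists_abs_functional_le (S : SensitivitySetup T p q μ F DF) :
    ∃ K : ℝ, 0 ≤ K ∧ ∀ (ω : ContPath T d) (z : ℝ → Fin d → ℝ) (R : ℝ), CadlagOn T z → 0 ≤ R →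
      (∀ s ∈ Icc 0 T, ‖z s‖ ≤ R) → |F (ω.1 + z)| ≤ K * (1 + pathMoment T p ω + R ^ p) := by
  obtain ⟨C, hC⟩ := S.growth
  refine ⟨|C| * 2 ^ p, by positivity, fun ω z R hz hR hzR => ?_⟩
  have hM := pathSup_nonneg (T := T) (ω.1 + z)
  calc |F (ω.1 + z)| ≤ |C| * (1 + pathSup T (ω.1 + z) ^ p) :=
        (hC _ (ω.cadlagOn.add hz)).trans <| by gcongr; exact le_abs_self C
    _ ≤ |C| * 2 ^ p * (1 + pathMoment T p ω + R ^ p) := by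
        rw [mul_assoc]
        gcongr
        exact one_add_pathSup_add_rpow_le S.conj.lt.le ω hR hzR

lemma exists_norm_deriv_rpow_le (S : SensitivitySetup T p q μ F DF) :
    ∃ K : ℝ, 0 ≤ K ∧ ∀ (ω : ContPath T d) (z : ℝ → Fin d → ℝ) (R : ℝ), CadlagOn T z → 0 ≤ R →
      (∀ s ∈ Icc 0 T, ‖z s‖ ≤ R) → ∀ t ∈ Icc 0 T,
        ‖DF (ω.1 + z) t‖ ^ q ≤ K * (1 + pathMoment T p ω + R ^ p) := by
  obtain ⟨C, hC⟩ := S.derivGrowth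
  have hq := S.conj.symm.pos
  refine ⟨|C| ^ q * (2 ^ (q - 1) * 2 ^ p), by positivity, fun ω z R hz hR hzR t ht => ?_⟩
  have hM := pathSup_nonneg (T := T) (ω.1 + z)
  have h_norm : ‖DF (ω.1 + z) t‖ ≤ |C| * (1 + pathSup T (ω.1 + z) ^ (p - 1)) :=
    ((norm_le_lpnorm hq _).trans (hC _ (ω.cadlagOn.add hz) t ht)).trans <| by
      gcongr; exact le_abs_self C
  calc ‖DF (ω.1 + z) t‖ ^ q ≤ (|C| * (1 + pathSup T (ω.1 + z) ^ (p - 1))) ^ q :=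
        Real.rpow_le_rpow (norm_nonneg _) h_norm hq.le
    _ = |C| ^ q * (1 + pathSup T (ω.1 + z) ^ (p - 1)) ^ q :=
        Real.mul_rpow (abs_nonneg C) (by positivity)
    _ ≤ |C| ^ q * (2 ^ (q - 1) * (1 ^ q + (pathSup T (ω.1 + z) ^ (p - 1)) ^ q)) := by
        gcongr
        exact rpow_add_le_mul_rpow_add_rpow zero_le_one (by positivity) S.conj.symm.lt.le
    _ = |C| ^ q * (2 ^ (q - 1) * (1 + pathSup T (ω.1 + z) ^ p)) := by
        rw [Real.one_rpow, ← Real.rpow_mul hM, S.conj.sub_one_mul_conj]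
    _ ≤ |C| ^ q * (2 ^ (q - 1) * (2 ^ p * (1 + pathMoment T p ω + R ^ p))) := by
        gcongr
        exact one_add_pathSup_add_rpow_le S.conj.lt.le ω hR hzR
    _ = _ := by ring

lemma exists_norm_deriv_rpow_le_pathMoment (S : SensitivitySetup T p q μ F DF) :
    ∃ K : ℝ, 0 ≤ K ∧ ∀ (ω : ContPath T d), ∀ t ∈ Icc 0 T,
      ‖DF ω.1 t‖ ^ q ≤ K * (1 + pathMoment T p ω) := by
  obtain ⟨K, hK, h⟩ := S.exists_norm_deriv_rpow_le
  refine ⟨K, hK, fun ω t ht => ?_⟩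
  simpa [S.conj.ne_zero] using h ω 0 0 cadlagOn_zero le_rfl (by simp) t ht

lemma integrable_mul_one_add_pathMoment (S : SensitivitySetup T p q μ F DF) (K : ℝ) :
    Integrable (fun ω => K * (1 + pathMoment T p ω)) μ := by
  have := S.prob
  exact ((integrable_const 1).add S.moment).const_mul K

lemma measurable_deriv (S : SensitivitySetup T p q μ F DF) {t : ℝ} (ht : t ∈ Icc 0 T) :
    Measurable fun ω : ContPath T d => DF ω.1 t :=
  measurable_pi_lambda _ fun i => ((S.derivCont t ht).apply i).measurable_comp S.pos
    (fun ω => ω.2.1) fun _ hs => measurable_eval hs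

lemma memLp_deriv (S : SensitivitySetup T p q μ F DF) {t : ℝ} (ht : t ∈ Icc 0 T) :
    MemLp (fun ω : ContPath T d => DF ω.1 t) (ENNReal.ofReal q) μ := by
  have hq := S.conj.symm.pos
  obtain ⟨K, -, hK⟩ := S.exists_norm_deriv_rpow_le_pathMoment
  exact memLp_of_norm_rpow_le hq (S.measurable_deriv ht).aestronglyMeasurable
    (S.integrable_mul_one_add_pathMoment K) (Eventually.of_forall fun ω => hK ω t ht)

lemma measurable_functional (S : SensitivitySetup T p q μ F DF) :
    Measurable fun ω : ContPath T d => F ω.1 :=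
  S.cont.measurable_comp S.pos (fun ω => ω.2.1) fun _ hs => measurable_eval hs

lemma integrable_functional (S : SensitivitySetup T p q μ F DF) :
    Integrable (fun ω : ContPath T d => F ω.1) μ := by
  obtain ⟨K, -, hK⟩ := S.exists_abs_functional_le
  refine (S.integrable_mul_one_add_pathMoment K).mono'
    S.measurable_functional.aestronglyMeasurable (Eventually.of_forall fun ω => ?_)
  simpa [S.conj.ne_zero] using hK ω 0 0 cadlagOn_zero le_rfl (by simp)

end SensitivitySetup

end Growth

section Filtration

variable {T : ℝ} {d : ℕ}

lemma evalSigma_mono {s t : ℝ} (h : s ≤ t) : evalSigma T d s ≤ evalSigma T d t :=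
  iSup_le fun r => le_iSup (fun r : {r : ℝ // 0 ≤ r ∧ r ≤ T ∧ r ≤ t} =>
    MeasurableSpace.comap (fun ω : ContPath T d => ω.1 r.1) inferInstance)
    ⟨r.1, r.2.1, r.2.2.1, r.2.2.2.trans h⟩

lemma evalSigma_le (t : ℝ) : evalSigma T d t ≤ evalSigma T d T :=
  iSup_le fun r => le_iSup (fun r : {r : ℝ // 0 ≤ r ∧ r ≤ T ∧ r ≤ T} =>
    MeasurableSpace.comap (fun ω : ContPath T d => ω.1 r.1) inferInstance)
    ⟨r.1, r.2.1, r.2.2.1, r.2.2.1⟩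

lemma FilC_le (t : ℝ) : FilC T d t ≤ instMSContPath T d := by
  unfold FilC
  split_ifs with h
  · exact iInf_le_of_le ⟨T, h, le_rfl⟩ le_rfl
  · exact le_rfl

lemma FilC_mono : Monotone (FilC T d) := by
  intro s t h
  by_cases ht : t < T
  · unfold FilC
    rw [if_pos ht, if_pos (h.trans_lt ht)]
    exact le_iInf fun r => iInf_le_of_le ⟨r.1, h.trans_lt r.2.1, r.2.2⟩ le_rfl
  · refine (FilC_le s).trans ?_
    unfold FilC
    rw [if_neg ht]
    exact le_rfl

lemma evalSigma_le_FilC (t : ℝ) : evalSigma T d t ≤ FilC T d t := by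
  unfold FilC
  split_ifs with h
  · exact le_iInf fun r => evalSigma_mono r.2.1.le
  · exact evalSigma_le t

end Filtration

section LpNorm

variable {Ω E ι : Type*} {m₀ : MeasurableSpace Ω} {μ : Measure Ω} [NormedAddCommGroup E]

lemma integral_norm_rpow_eq_lpNorm {q : ℝ} (hq : 0 < q) {f : Ω → E}
    (hf : AEStronglyMeasurable f μ) :
    ∫ ω, ‖f ω‖ ^ q ∂μ = lpNorm f (ENNReal.ofReal q) μ ^ q := by
  rw [lpNorm_eq_integral_norm_rpow_toReal (by simpa using hq) ENNReal.ofReal_ne_top hf,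
    ENNReal.toReal_ofReal hq.le, ← Real.rpow_mul (integral_nonneg fun ω => by positivity),
    inv_mul_cancel₀ hq.ne', Real.rpow_one]

lemma lpNorm_congr_ae {p : ℝ≥0∞} {f g : Ω → E} (hf : AEStronglyMeasurable f μ)
    (hfg : f =ᵐ[μ] g) : lpNorm f p μ = lpNorm g p μ := by
  rw [← toReal_eLpNorm hf, ← toReal_eLpNorm (hf.congr hfg), eLpNorm_congr_ae hfg]

lemma dist_lpNorm_le {p : ℝ≥0∞} (hp : 1 ≤ p) {f g : Ω → E} (hf : MemLp f p μ)
    (hg : MemLp g p μ) : dist (lpNorm f p μ) (lpNorm g p μ) ≤ lpNorm (f - g) p μ := by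
  have h_left := lpNorm_le_lpNorm_add_lpNorm_sub' (f := f) hg hp
  have h_right := lpNorm_le_lpNorm_add_lpNorm_sub (f := g) hf hp
  rw [Real.dist_eq, abs_sub_le_iff]
  constructor <;> linarith

lemma tendsto_lpNorm_sub_of_dominated {u : Filter ι} [u.IsCountablyGenerated] {q : ℝ}
    (hq : 1 ≤ q) {f : ι → Ω → E} {l : Ω → E} {g : Ω → ℝ}
    (hf : ∀ᶠ s in u, AEStronglyMeasurable (f s) μ) (hl : AEStronglyMeasurable l μ)
    (hg : Integrable g μ) (hfg : ∀ᶠ s in u, ∀ᵐ ω ∂μ, ‖f s ω‖ ^ q ≤ g ω)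
    (hlg : ∀ᵐ ω ∂μ, ‖l ω‖ ^ q ≤ g ω) (hlim : ∀ᵐ ω ∂μ, Tendsto (fun s => f s ω) u (𝓝 (l ω))) :
    Tendsto (fun s => lpNorm (f s - l) (ENNReal.ofReal q) μ) u (𝓝 0) := by
  have hq0 : 0 < q := by linarith
  have h_integral : Tendsto (fun s => ∫ ω, ‖f s ω - l ω‖ ^ q ∂μ) u (𝓝 (∫ _, (0 : ℝ) ∂μ)) := by
    refine tendsto_integral_filter_of_dominated_convergence
      (fun ω => 2 ^ (q - 1) * (g ω + g ω)) ?_ ?_ ((hg.add hg).const_mul _) ?_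
    · filter_upwards [hf] with s hs
      exact ((hs.sub hl).norm.aemeasurable.pow_const q).aestronglyMeasurable
    · filter_upwards [hfg] with s hs
      filter_upwards [hs, hlg] with ω hfω hlω
      rw [Real.norm_of_nonneg (by positivity)]
      calc ‖f s ω - l ω‖ ^ q ≤ (‖f s ω‖ + ‖l ω‖) ^ q :=
            Real.rpow_le_rpow (norm_nonneg _) (norm_sub_le _ _) hq0.le
        _ ≤ 2 ^ (q - 1) * (‖f s ω‖ ^ q + ‖l ω‖ ^ q) :=
            rpow_add_le_mul_rpow_add_rpow (norm_nonneg _) (norm_nonneg _) hq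
        _ ≤ 2 ^ (q - 1) * (g ω + g ω) := by gcongr
    · filter_upwards [hlim] with ω hω
      simpa [hq0.ne'] using ((hω.sub_const (l ω)).norm).rpow_const (p := q) (Or.inr hq0.le)
  rw [integral_zero] at h_integral
  have h_root := h_integral.rpow_const (p := q⁻¹) (Or.inr (by positivity))
  rw [Real.zero_rpow (by positivity)] at h_root
  refine h_root.congr' ?_
  filter_upwards [hf] with s hs
  rw [show ∫ ω, ‖f s ω - l ω‖ ^ q ∂μ = lpNorm (f s - l) (ENNReal.ofReal q) μ ^ q from
    integral_norm_rpow_eq_lpNorm hq0 (hs.sub hl), Real.rpow_rpow_inv lpNorm_nonneg hq0.ne']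

variable {p : ℝ≥0∞} (hp : 1 ≤ p) {f : ι → Ω → E} {l : Ω → E} (hl : MemLp l p μ)
include hp hl

lemma tendsto_lpNorm_sub_prod {u : Filter ι} (hf : ∀ᶠ s in u, MemLp (f s) p μ)
    (hlim : Tendsto (fun s => lpNorm (f s - l) p μ) u (𝓝 0)) :
    Tendsto (fun z : ι × ι => lpNorm (f z.1 - f z.2) p μ) (u ×ˢ u) (𝓝 0) := by
  have h_sum := (hlim.comp (tendsto_fst (g := u))).add (hlim.comp (tendsto_snd (f := u)))
  rw [add_zero] at h_sum
  refine squeeze_zero' (Eventually.of_forall fun z => lpNorm_nonneg) ?_ h_sum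
  filter_upwards [hf.prod_mk hf] with z hz
  refine (lpNorm_sub_le_lpNorm_sub_add_lpNorm_sub hz.1 hl hp).trans_eq ?_
  simp only [Function.comp_apply, lpNorm_sub_comm l]

-- The norms of `μ[l | ℱ s]` increase in `s`, and `μ[f s | ℱ s]` is close to `μ[l | ℱ s]`.
lemma exists_tendsto_lpNorm_condExp [IsFiniteMeasure μ] [NormedSpace ℝ E] [CompleteSpace E]
    [LinearOrder ι] [TopologicalSpace ι] [OrderTopology ι] (ℱ : Filtration ι m₀) {t : ι}
    (hf : ∀ᶠ s in 𝓝[<] t, MemLp (f s) p μ)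
    (hlim : Tendsto (fun s => lpNorm (f s - l) p μ) (𝓝[<] t) (𝓝 0)) :
    ∃ a, Tendsto (fun s => lpNorm (μ[f s | ℱ s]) p μ) (𝓝[<] t) (𝓝 a) := by
  have h_mono : Monotone fun s => lpNorm (μ[l | ℱ s]) p μ := fun s s' hs =>
    (lpNorm_congr_ae integrable_condExp.1
      (condExp_condExp_of_le (ℱ.mono hs) (ℱ.le s')).symm).trans_le
      ((hl.condExp hp).lpNorm_condExp_le_lpNorm hp)
  have h_bdd : BddAbove ((fun s => lpNorm (μ[l | ℱ s]) p μ) '' Iio t) := by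
    refine ⟨lpNorm l p μ, ?_⟩
    rintro _ ⟨s, -, rfl⟩
    exact hl.lpNorm_condExp_le_lpNorm hp
  refine ⟨_, ((h_mono.monotoneOn (Iio t)).tendsto_nhdsLT h_bdd).congr_dist
    (squeeze_zero' (Eventually.of_forall fun _ => dist_nonneg) ?_ hlim)⟩
  filter_upwards [hf] with s hs
  calc dist (lpNorm (μ[l | ℱ s]) p μ) (lpNorm (μ[f s | ℱ s]) p μ)
      ≤ lpNorm (μ[f s | ℱ s] - μ[l | ℱ s]) p μ := by
        rw [dist_comm]
        exact dist_lpNorm_le hp (hs.condExp hp) (hl.condExp hp)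
    _ = lpNorm (μ[f s - l | ℱ s]) p μ :=
        lpNorm_congr_ae (integrable_condExp.1.sub integrable_condExp.1)
          (condExp_sub (hs.integrable hp) (hl.integrable hp) _).symm
    _ ≤ lpNorm (f s - l) p μ := (hs.sub hl).lpNorm_condExp_le_lpNorm hp

end LpNorm

lemma HasLeftLimits.exists_tendsto_nhdsLT {T : ℝ} {d : ℕ}
    {F : (ℝ → Fin d → ℝ) → ℝ → Fin d → ℝ} (hF : HasLeftLimits T F) {x : ℝ → Fin d → ℝ}
    (hx : CadlagOn T x) {t : ℝ} (ht : t ∈ Ioc 0 T) : ∃ l, Tendsto (F x) (𝓝[<] t) (𝓝 l) := by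
  obtain ⟨l, hl⟩ := hF.exists_uniform hx ht
  refine ⟨l, Metric.tendsto_nhds.2 fun ε hε => ?_⟩
  obtain ⟨η, hη, h⟩ := hl ε hε
  filter_upwards [Ioo_mem_nhdsLT (show t - η < t by linarith)] with s hs
  rw [dist_eq_norm]
  exact h x hx (fun s _ => by simpa using hη) s hs

lemma eventually_nhdsLT_mem_Icc {a b t : ℝ} (ht : t ∈ Ioc a b) : ∀ᶠ s in 𝓝[<] t, s ∈ Icc a b := by
  filter_upwards [Ioo_mem_nhdsLT ht.1] with s hs using ⟨hs.1.le, hs.2.le.trans ht.2⟩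

/-- The sum over the coordinates of the `q`-th moments of the optional projection of the
derivative at time `t`. -/
def condMoment {T : ℝ} {d : ℕ} (q : ℝ) (μ : Measure (ContPath T d))
    (DF : (ℝ → Fin d → ℝ) → ℝ → Fin d → ℝ) (t : ℝ) : ℝ :=
  ∑ i, ∫ ω, |(μ[fun ω : ContPath T d => DF ω.1 t i | FilC T d t]) ω| ^ q ∂μ

lemma condMoment_nonneg {T q : ℝ} {d : ℕ} {μ : Measure (ContPath T d)}
    {DF : (ℝ → Fin d → ℝ) → ℝ → Fin d → ℝ} (t : ℝ) : 0 ≤ condMoment q μ DF t :=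
  Finset.sum_nonneg fun _ _ => integral_nonneg fun ω => by positivity

namespace SensitivitySetup

variable {T p q : ℝ} {d : ℕ} {μ : Measure (ContPath T d)} {F : (ℝ → Fin d → ℝ) → ℝ}
  {DF : (ℝ → Fin d → ℝ) → ℝ → Fin d → ℝ}

lemma one_le (S : SensitivitySetup T p q μ F DF) : 1 ≤ ENNReal.ofReal q :=
  ENNReal.one_le_ofReal.2 S.conj.symm.lt.le

lemma memLp_deriv_apply (S : SensitivitySetup T p q μ F DF) {t : ℝ} (ht : t ∈ Icc 0 T)
    (i : Fin d) : MemLp (fun ω : ContPath T d => DF ω.1 t i) (ENNReal.ofReal q) μ :=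
  (S.memLp_deriv ht).eval i

lemma memLp_condExp (S : SensitivitySetup T p q μ F DF) {t : ℝ} (ht : t ∈ Icc 0 T)
    (i : Fin d) (s : ℝ) :
    MemLp (μ[fun ω : ContPath T d => DF ω.1 t i | FilC T d s]) (ENNReal.ofReal q) μ :=
  (S.memLp_deriv_apply ht i).condExp S.one_le

lemma integrable_deriv_apply (S : SensitivitySetup T p q μ F DF) {t : ℝ} (ht : t ∈ Icc 0 T)
    (i : Fin d) : Integrable (fun ω : ContPath T d => DF ω.1 t i) μ := by
  have := S.prob
  exact (S.memLp_deriv_apply ht i).integrable S.one_le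

lemma exists_lpNorm_le (S : SensitivitySetup T p q μ F DF) :
    ∃ K : ℝ, 0 ≤ K ∧ ∀ t ∈ Icc 0 T, ∀ i,
      lpNorm (fun ω : ContPath T d => DF ω.1 t i) (ENNReal.ofReal q) μ ≤ K := by
  have hq := S.conj.symm.pos
  obtain ⟨K, hK, hDF⟩ := S.exists_norm_deriv_rpow_le_pathMoment
  have h_nonneg : 0 ≤ ∫ ω, K * (1 + pathMoment T p ω) ∂μ :=
    integral_nonneg fun ω => by have := pathMoment_nonneg p ω; positivity
  refine ⟨(∫ ω, K * (1 + pathMoment T p ω) ∂μ) ^ q⁻¹, by positivity, fun t ht i => ?_⟩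
  rw [Real.le_rpow_inv_iff_of_pos lpNorm_nonneg h_nonneg hq,
    ← integral_norm_rpow_eq_lpNorm hq (S.memLp_deriv_apply ht i).aestronglyMeasurable]
  refine integral_mono_of_nonneg (Eventually.of_forall fun ω => by positivity)
    (S.integrable_mul_one_add_pathMoment K) (Eventually.of_forall fun ω => ?_)
  exact (Real.rpow_le_rpow (norm_nonneg _) (norm_le_pi_norm (DF ω.1 t) i) hq.le).trans
    (hDF ω t ht)

lemma exists_leftLim_lpNorm (S : SensitivitySetup T p q μ F DF) {t : ℝ} (ht : t ∈ Ioc 0 T)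
    (i : Fin d) : ∃ l : ContPath T d → ℝ, MemLp l (ENNReal.ofReal q) μ ∧
      Tendsto (fun s => lpNorm ((fun ω : ContPath T d => DF ω.1 s i) - l) (ENNReal.ofReal q) μ)
        (𝓝[<] t) (𝓝 0) := by
  have hq := S.conj.symm.pos
  have h_Icc := eventually_nhdsLT_mem_Icc ht
  obtain ⟨K, -, hK⟩ := S.exists_norm_deriv_rpow_le_pathMoment
  have h_int := S.integrable_mul_one_add_pathMoment K
  have h_bound (ω : ContPath T d) {s : ℝ} (hs : s ∈ Icc 0 T) :
      ‖DF ω.1 s i‖ ^ q ≤ K * (1 + pathMoment T p ω) :=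
    (Real.rpow_le_rpow (norm_nonneg _) (norm_le_pi_norm (DF ω.1 s) i) hq.le).trans (hK ω s hs)
  choose L hL using fun ω : ContPath T d => S.leftLim.exists_tendsto_nhdsLT ω.cadlagOn ht
  have hl (ω : ContPath T d) : Tendsto (fun s => DF ω.1 s i) (𝓝[<] t) (𝓝 (L ω i)) :=
    tendsto_pi_nhds.1 (hL ω) i
  have : (comap (Subtype.val : Icc 0 T → ℝ) (𝓝[<] t)).NeBot :=
    comap_coe_neBot_of_le_principal (le_principal_iff.2 h_Icc)
  have hl_meas : AEStronglyMeasurable (fun ω => L ω i) μ :=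
    aestronglyMeasurable_of_tendsto_ae (comap (Subtype.val : Icc 0 T → ℝ) (𝓝[<] t))
      (fun s => (S.memLp_deriv_apply s.2 i).aestronglyMeasurable)
      (Eventually.of_forall fun ω => (hl ω).comp tendsto_comap)
  have hl_bound : ∀ᵐ ω ∂μ, ‖L ω i‖ ^ q ≤ K * (1 + pathMoment T p ω) :=
    Eventually.of_forall fun ω => le_of_tendsto ((hl ω).norm.rpow_const (Or.inr hq.le))
      (h_Icc.mono fun s hs => h_bound ω hs)
  exact ⟨fun ω => L ω i, memLp_of_norm_rpow_le hq hl_meas h_int hl_bound,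
    tendsto_lpNorm_sub_of_dominated S.conj.symm.lt.le
      (h_Icc.mono fun s hs => (S.memLp_deriv_apply hs i).aestronglyMeasurable) hl_meas h_int
      (h_Icc.mono fun s hs => Eventually.of_forall fun ω => h_bound ω hs) hl_bound
      (Eventually.of_forall hl)⟩

lemma tendsto_lpNorm_deriv_sub_nhdsLT (S : SensitivitySetup T p q μ F DF) {t : ℝ}
    (ht : t ∈ Ioc 0 T) (i : Fin d) :
    Tendsto (fun z : ℝ × ℝ => lpNorm ((fun ω : ContPath T d => DF ω.1 z.1 i) -
      fun ω => DF ω.1 z.2 i) (ENNReal.ofReal q) μ) (𝓝[<] t ×ˢ 𝓝[<] t) (𝓝 0) := by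
  obtain ⟨l, hl, hlim⟩ := S.exists_leftLim_lpNorm ht i
  exact tendsto_lpNorm_sub_prod (f := fun s (ω : ContPath T d) => DF ω.1 s i) S.one_le hl
    ((eventually_nhdsLT_mem_Icc ht).mono fun s hs => S.memLp_deriv_apply hs i) hlim

lemma condMoment_eq (S : SensitivitySetup T p q μ F DF) (t : ℝ) :
    condMoment q μ DF t = ∑ i, lpNorm (μ[fun ω : ContPath T d => DF ω.1 t i | FilC T d t])
      (ENNReal.ofReal q) μ ^ q := by
  simp_rw [condMoment, ← Real.norm_eq_abs]
  exact Finset.sum_congr rfl fun _ _ =>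
    integral_norm_rpow_eq_lpNorm S.conj.symm.pos integrable_condExp.1

lemma exists_tendsto_condMoment_nhdsLT (S : SensitivitySetup T p q μ F DF) {t : ℝ}
    (ht : t ∈ Ioc 0 T) : ∃ a, Tendsto (condMoment q μ DF) (𝓝[<] t) (𝓝 a) := by
  have := S.prob
  have h_coord (i : Fin d) : ∃ a, Tendsto (fun s =>
      lpNorm (μ[fun ω : ContPath T d => DF ω.1 s i | FilC T d s]) (ENNReal.ofReal q) μ)
      (𝓝[<] t) (𝓝 a) := by
    obtain ⟨l, hl, hlim⟩ := S.exists_leftLim_lpNorm ht i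
    exact exists_tendsto_lpNorm_condExp S.one_le hl ⟨FilC T d, FilC_mono, FilC_le⟩
      ((eventually_nhdsLT_mem_Icc ht).mono fun s hs => S.memLp_deriv_apply hs i) hlim
  choose a ha using h_coord
  refine ⟨∑ i, a i ^ q, ?_⟩
  simp_rw [funext S.condMoment_eq]
  exact tendsto_finsetSum _ fun i _ => (ha i).rpow_const (Or.inr S.conj.symm.nonneg)

lemma tendsto_sum_deriv_sub (S : SensitivitySetup T p q μ F DF) {ι : Type*} {l : Filter ι}
    [l.IsCountablyGenerated] {n : ι → ℕ} (hn : ∀ᶠ j in l, 0 < n j) {u u' : ι → ℕ → ℝ}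
    (hu : ∀ᶠ j in l, ∀ k < n j, u j k ∈ Icc 0 T ∧ u' j k ∈ Icc 0 T)
    (hut : ∀ t ∈ Ioo 0 T, Tendsto (fun j => u j (gridIdx T (n j) t)) l (𝓝 t))
    (hut' : ∀ t ∈ Ioo 0 T, Tendsto (fun j => u' j (gridIdx T (n j) t)) l (𝓝 t)) :
    Tendsto (fun j => T / n j * ∑ k ∈ Finset.range (n j), ∑ i,
      ∫ ω : ContPath T d, |DF ω.1 (u j k) i - DF ω.1 (u' j k) i| ^ q ∂μ) l (𝓝 0) := by
  have hq := S.conj.symm.pos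
  obtain ⟨K, -, hDF⟩ := S.exists_lpNorm_le
  let N (z : ℝ × ℝ) (i : Fin d) : ℝ := lpNorm ((fun ω : ContPath T d => DF ω.1 z.1 i) -
    fun ω => DF ω.1 z.2 i) (ENNReal.ofReal q) μ
  have hN_le {s s' : ℝ} (hs : s ∈ Icc 0 T) (hs' : s' ∈ Icc 0 T) (i : Fin d) :
      N (s, s') i ≤ 2 * K := by
    refine (lpNorm_sub_le (S.memLp_deriv_apply hs i) S.one_le).trans ?_
    linarith [hDF s hs i, hDF s' hs' i]
  have hN_lim : ∀ᵐ t ∂volume.restrict (Ioo 0 T),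
      Tendsto (fun z => ∑ i, N z i ^ q) (𝓝 t ×ˢ 𝓝 t) (𝓝 0) := by
    refine ae_tendsto_prod_of_tendsto_nhdsLT_prod measurableSet_Ioo fun t ht => ?_
    simpa [Real.zero_rpow hq.ne'] using tendsto_finsetSum Finset.univ fun i _ =>
      (S.tendsto_lpNorm_deriv_sub_nhdsLT (Ioo_subset_Ioc_self ht) i).rpow_const (p := q)
        (Or.inr hq.le)
  have h_riemann := tendsto_riemannSum S.pos hn (a := fun j k => ∑ i, N (u j k, u' j k) i ^ q)
    (K := d * (2 * K) ^ q) (φ := fun _ => 0) ?_ ?_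
  · rw [integral_zero] at h_riemann
    refine h_riemann.congr' ?_
    filter_upwards [hu] with j hj
    rw [smul_eq_mul]
    congr 1
    refine Finset.sum_congr rfl fun k hk => Finset.sum_congr rfl fun i _ => ?_
    obtain ⟨hk, hk'⟩ := hj k (Finset.mem_range.1 hk)
    exact (integral_norm_rpow_eq_lpNorm hq
      ((S.memLp_deriv_apply hk i).sub (S.memLp_deriv_apply hk' i)).aestronglyMeasurable).symm
  · filter_upwards [hu] with j hj k hk
    rw [Real.norm_of_nonneg (Finset.sum_nonneg fun i _ => Real.rpow_nonneg lpNorm_nonneg _)]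
    refine (Finset.sum_le_sum fun i _ => Real.rpow_le_rpow lpNorm_nonneg
      (hN_le (hj k hk).1 (hj k hk).2 i) hq.le).trans_eq ?_
    rw [Finset.sum_const, Finset.card_univ, Fintype.card_fin, nsmul_eq_mul]
  · filter_upwards [hN_lim, ae_restrict_mem measurableSet_Ioo] with t hNt ht
    exact hNt.comp ((hut t ht).prodMk (hut' t ht))

lemma tendsto_sum_condMoment (S : SensitivitySetup T p q μ F DF) {ι : Type*} {l : Filter ι}
    [l.IsCountablyGenerated] {n : ι → ℕ} (hn : ∀ᶠ j in l, 0 < n j) {u : ι → ℕ → ℝ}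
    (hu : ∀ᶠ j in l, ∀ k < n j, u j k ∈ Icc 0 T)
    (hut : ∀ t ∈ Ioo 0 T, Tendsto (fun j => u j (gridIdx T (n j) t)) l (𝓝 t)) :
    Tendsto (fun j => T / n j * ∑ k ∈ Finset.range (n j), condMoment q μ DF (u j k)) l
      (𝓝 (∫ t in Ioo 0 T, condMoment q μ DF t)) := by
  have hq := S.conj.symm.pos
  obtain ⟨K, -, hDF⟩ := S.exists_lpNorm_le
  have h_cont : ∀ᵐ t ∂volume.restrict (Ioo 0 T),
      Tendsto (fun z : ℝ × ℝ => condMoment q μ DF z.1 - condMoment q μ DF z.2)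
        (𝓝 t ×ˢ 𝓝 t) (𝓝 0) := by
    refine ae_tendsto_prod_of_tendsto_nhdsLT_prod measurableSet_Ioo fun t ht => ?_
    obtain ⟨a, ha⟩ := S.exists_tendsto_condMoment_nhdsLT (Ioo_subset_Ioc_self ht)
    simpa only [Function.comp_apply, sub_self] using
      (ha.comp (tendsto_fst (g := 𝓝[<] t))).sub (ha.comp (tendsto_snd (f := 𝓝[<] t)))
  refine tendsto_riemannSum S.pos hn (K := d * K ^ q) ?_ ?_
  · filter_upwards [hu] with j hj k hk
    rw [Real.norm_of_nonneg (condMoment_nonneg _), S.condMoment_eq]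
    refine (Finset.sum_le_sum fun i _ => Real.rpow_le_rpow lpNorm_nonneg
      (((S.memLp_deriv_apply (hj k hk) i).lpNorm_condExp_le_lpNorm S.one_le).trans
        (hDF _ (hj k hk) i)) hq.le).trans_eq ?_
    rw [Finset.sum_const, Finset.card_univ, Fintype.card_fin, nsmul_eq_mul]
  · filter_upwards [h_cont, ae_restrict_mem measurableSet_Ioo] with t h_cont_t ht
    simpa using (h_cont_t.comp ((hut t ht).prodMk (tendsto_const_nhds (x := t)))).add_const
      (condMoment q μ DF t)

end SensitivitySetup

/-- A penalised modulus of continuity of the derivative at time `t`: the supremum over the values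
`V` of step paths of mesh `T / n` of `‖DF (ω + stepPath V) t - DF ω t‖ ^ q - B * ‖V‖ ^ p`, truncated
at `0`. Restricting `V` to a dense sequence makes it measurable in `ω`. -/
def stepModulus (T p q : ℝ) {d : ℕ} (DF : (ℝ → Fin d → ℝ) → ℝ → Fin d → ℝ) (n : ℕ) (B t : ℝ)
    (ω : ContPath T d) : ℝ≥0∞ :=
  ⨆ m : ℕ, ENNReal.ofReal
    (‖DF (ω.1 + stepPath T n (TopologicalSpace.denseSeq (Fin (n + 1) → Fin d → ℝ) m)) t
        - DF ω.1 t‖ ^ q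
      - B * ‖TopologicalSpace.denseSeq (Fin (n + 1) → Fin d → ℝ) m‖ ^ p)

namespace SensitivitySetup

variable {T p q : ℝ} {d : ℕ} {μ : Measure (ContPath T d)} {F : (ℝ → Fin d → ℝ) → ℝ}
  {DF : (ℝ → Fin d → ℝ) → ℝ → Fin d → ℝ}

lemma measurable_stepModulus (S : SensitivitySetup T p q μ F DF) {n : ℕ} (hn : 0 < n) (B : ℝ)
    {t : ℝ} (ht : t ∈ Icc 0 T) : Measurable (stepModulus T p q DF n B t) := by
  refine Measurable.iSup fun m => ENNReal.measurable_ofReal.comp (Measurable.sub_const ?_ _)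
  refine Measurable.pow_const (Measurable.norm (Measurable.sub ?_ (S.measurable_deriv ht))) _
  exact measurable_pi_lambda _ fun i => ((S.derivCont t ht).apply i).measurable_comp_add_stepPath
    S.pos (fun ω => ω.2.1) (fun _ hs => measurable_eval hs) hn measurable_const

lemma exists_norm_deriv_sub_rpow_le (S : SensitivitySetup T p q μ F DF) :
    ∃ K : ℝ, 0 ≤ K ∧ ∀ (ω : ContPath T d) {n : ℕ}, 0 < n → ∀ V : Fin (n + 1) → Fin d → ℝ,
      ∀ t ∈ Icc 0 T, ‖DF (ω.1 + stepPath T n V) t - DF ω.1 t‖ ^ q ≤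
        K * (1 + pathMoment T p ω) + K * ‖V‖ ^ p := by
  have hq := S.conj.symm.lt
  obtain ⟨K, hK, h_step⟩ := S.exists_norm_deriv_rpow_le
  obtain ⟨K', hK', h_path⟩ := S.exists_norm_deriv_rpow_le_pathMoment
  refine ⟨2 ^ (q - 1) * (K + K'), by positivity, fun ω n hn V t ht => ?_⟩
  calc ‖DF (ω.1 + stepPath T n V) t - DF ω.1 t‖ ^ q
      ≤ (‖DF (ω.1 + stepPath T n V) t‖ + ‖DF ω.1 t‖) ^ q :=
        Real.rpow_le_rpow (norm_nonneg _) (norm_sub_le _ _) (by linarith)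
    _ ≤ 2 ^ (q - 1) * (‖DF (ω.1 + stepPath T n V) t‖ ^ q + ‖DF ω.1 t‖ ^ q) :=
        rpow_add_le_mul_rpow_add_rpow (norm_nonneg _) (norm_nonneg _) hq.le
    _ ≤ 2 ^ (q - 1) * (K * (1 + pathMoment T p ω + ‖V‖ ^ p) + K' * (1 + pathMoment T p ω)) := by
        gcongr
        · exact h_step ω _ _ (cadlagOn_stepPath S.pos hn V) (norm_nonneg _)
            (fun s _ => norm_stepPath_le V s) t ht
        · exact h_path ω t ht
    _ ≤ 2 ^ (q - 1) * ((K + K') * (1 + pathMoment T p ω) + (K + K') * ‖V‖ ^ p) := by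
        refine mul_le_mul_of_nonneg_left ?_ (by positivity)
        linarith [mul_nonneg hK' (show (0 : ℝ) ≤ ‖V‖ ^ p by positivity)]
    _ = _ := by ring

lemma exists_stepModulus_le (S : SensitivitySetup T p q μ F DF) :
    ∃ K : ℝ, 0 ≤ K ∧ ∀ B, K ≤ B → ∀ {n : ℕ}, 0 < n → ∀ t ∈ Icc 0 T, ∀ ω : ContPath T d,
      stepModulus T p q DF n B t ω ≤ ENNReal.ofReal (K * (1 + pathMoment T p ω)) := by
  obtain ⟨K, hK, h⟩ := S.exists_norm_deriv_sub_rpow_le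
  refine ⟨K, hK, fun B hB n hn t ht ω => iSup_le fun m => ENNReal.ofReal_le_ofReal ?_⟩
  rw [sub_le_iff_le_add]
  refine (h ω hn _ t ht).trans ?_
  gcongr

lemma ofReal_norm_deriv_sub_rpow_le_stepModulus (S : SensitivitySetup T p q μ F DF) {n : ℕ}
    (hn : 0 < n) {B t : ℝ} (ht : t ∈ Icc 0 T) (ω : ContPath T d) (V : Fin (n + 1) → Fin d → ℝ) :
    ENNReal.ofReal (‖DF (ω.1 + stepPath T n V) t - DF ω.1 t‖ ^ q - B * ‖V‖ ^ p) ≤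
      stepModulus T p q DF n B t ω := by
  have h_deriv : Continuous fun V : Fin (n + 1) → Fin d → ℝ => DF (ω.1 + stepPath T n V) t :=
    continuous_pi fun i => ((S.derivCont t ht).apply i).continuous_stepPath S.pos hn ω.cadlagOn
  have h_cont : Continuous fun V : Fin (n + 1) → Fin d → ℝ =>
      ENNReal.ofReal (‖DF (ω.1 + stepPath T n V) t - DF ω.1 t‖ ^ q - B * ‖V‖ ^ p) :=
    ENNReal.continuous_ofReal.comp <|
      ((h_deriv.sub continuous_const).norm.rpow_const fun _ => Or.inr S.conj.symm.nonneg).sub <|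
        continuous_const.mul (continuous_norm.rpow_const fun _ => Or.inr S.conj.nonneg)
  exact (isClosed_le h_cont continuous_const).closure_subset_iff.2
    (range_subset_iff.2 fun m => le_iSup (fun m : ℕ => ENNReal.ofReal
      (‖DF (ω.1 + stepPath T n (TopologicalSpace.denseSeq (Fin (n + 1) → Fin d → ℝ) m)) t
        - DF ω.1 t‖ ^ q - B * ‖TopologicalSpace.denseSeq (Fin (n + 1) → Fin d → ℝ) m‖ ^ p)) m)
    (TopologicalSpace.denseRange_denseSeq (Fin (n + 1) → Fin d → ℝ) V)

lemma exists_norm_deriv_sub_lt (S : SensitivitySetup T p q μ F DF) {t : ℝ} (ht : t ∈ Ioc 0 T)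
    (ω : ContPath T d) {ε : ℝ} (hε : 0 < ε) :
    ∃ η > 0, ∀ s ∈ Ioo (t - η) t, ∀ {n : ℕ}, 0 < n → ∀ V : Fin (n + 1) → Fin d → ℝ,
      ‖V‖ < η → ‖DF (ω.1 + stepPath T n V) s - DF ω.1 s‖ < ε := by
  obtain ⟨l, hl⟩ := S.leftLim.exists_uniform ω.cadlagOn ht
  obtain ⟨η, hη, h⟩ := hl (ε / 2) (half_pos hε)
  refine ⟨η, hη, fun s hs n hn V hV => ?_⟩
  have h_step := h (ω.1 + stepPath T n V) (ω.cadlagOn.add (cadlagOn_stepPath S.pos hn V))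
    (fun r _ => by simpa using (norm_stepPath_le V r).trans_lt hV) s hs
  have h_path := h ω.1 ω.cadlagOn (fun r _ => by simpa using hη) s hs
  rw [← sub_sub_sub_cancel_right _ _ l]
  exact (norm_sub_le _ _).trans_lt (by linarith)

lemma eventually_norm_deriv_sub_rpow_le (S : SensitivitySetup T p q μ F DF) (ω : ContPath T d)
    {η : ℝ} (hη : 0 < η) : ∀ᶠ B : ℝ in atTop, ∀ s ∈ Icc 0 T, ∀ {n : ℕ}, 0 < n →
      ∀ V : Fin (n + 1) → Fin d → ℝ, η ≤ ‖V‖ →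
        ‖DF (ω.1 + stepPath T n V) s - DF ω.1 s‖ ^ q ≤ B * ‖V‖ ^ p := by
  obtain ⟨K, hK, h⟩ := S.exists_norm_deriv_sub_rpow_le
  have hM := pathMoment_nonneg p ω
  filter_upwards [eventually_ge_atTop (K * (1 + pathMoment T p ω) / η ^ p + K)]
    with B hB s hs n hn V hV
  calc ‖DF (ω.1 + stepPath T n V) s - DF ω.1 s‖ ^ q
      ≤ K * (1 + pathMoment T p ω) / η ^ p * η ^ p + K * ‖V‖ ^ p := by
        rw [div_mul_cancel₀ _ (by positivity)]
        exact h ω hn V s hs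
    _ ≤ K * (1 + pathMoment T p ω) / η ^ p * ‖V‖ ^ p + K * ‖V‖ ^ p := by
        gcongr
        exact S.conj.nonneg
    _ = (K * (1 + pathMoment T p ω) / η ^ p + K) * ‖V‖ ^ p := by ring
    _ ≤ B * ‖V‖ ^ p := by gcongr

lemma tendsto_stepModulus (S : SensitivitySetup T p q μ F DF) {t : ℝ} (ht : t ∈ Ioc 0 T)
    (ω : ContPath T d) :
    Tendsto (fun z : ℕ × ℝ × ℝ => stepModulus T p q DF z.1 z.2.1 z.2.2 ω)
      (atTop ×ˢ atTop ×ˢ 𝓝[<] t) (𝓝 0) := by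
  have hq := S.conj.symm.pos
  refine ENNReal.tendsto_nhds_zero.2 fun ε hε => ?_
  have h_rpow : Tendsto (fun x : ℝ => ENNReal.ofReal (x ^ q)) (𝓝 0) (𝓝 0) :=
    (ENNReal.continuous_ofReal.comp (Real.continuous_rpow_const hq.le)).tendsto' 0 0
      (by simp [hq.ne'])
  obtain ⟨ε', hε'ε, hε'⟩ :=
    ((ENNReal.tendsto_nhds_zero.1 (h_rpow.mono_left nhdsWithin_le_nhds) ε hε).and
      (self_mem_nhdsWithin (s := Ioi 0))).exists
  obtain ⟨η, hη, h_small⟩ := S.exists_norm_deriv_sub_lt ht ω hε'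
  have h_time : ∀ᶠ s in 𝓝[<] t, s ∈ Ioo (t - η) t ∧ s ∈ Icc 0 T :=
    Filter.Eventually.and (Ioo_mem_nhdsLT (by linarith)) (eventually_nhdsLT_mem_Icc ht)
  have h_penalty := (eventually_ge_atTop (0 : ℝ)).and (S.eventually_norm_deriv_sub_rpow_le ω hη)
  filter_upwards [(eventually_gt_atTop 0).prod_mk (h_penalty.prod_mk h_time)]
    with ⟨n, B, s⟩ ⟨hn, ⟨hB, h_large⟩, hs, hs'⟩
  refine iSup_le fun m => ?_
  generalize TopologicalSpace.denseSeq (Fin (n + 1) → Fin d → ℝ) m = V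
  rcases lt_or_ge ‖V‖ η with hV | hV
  · refine (ENNReal.ofReal_le_ofReal ?_).trans hε'ε
    have h_rpow_le := Real.rpow_le_rpow (norm_nonneg _) (h_small s hs hn V hV).le hq.le
    have h_pen : 0 ≤ B * ‖V‖ ^ p := by positivity
    linarith
  · rw [ENNReal.ofReal_of_nonpos (sub_nonpos.2 (h_large s hs' hn V hV))]
    exact zero_le

lemma eventually_integrable_stepModulus (S : SensitivitySetup T p q μ F DF) :
    ∀ᶠ B : ℝ in atTop, ∀ {n : ℕ}, 0 < n → ∀ t ∈ Icc 0 T,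
      Integrable (fun ω => (stepModulus T p q DF n B t ω).toReal) μ := by
  obtain ⟨K, -, h⟩ := S.exists_stepModulus_le
  filter_upwards [eventually_ge_atTop K] with B hB n hn t ht
  refine integrable_toReal_of_lintegral_ne_top
    (S.measurable_stepModulus hn B ht).aemeasurable (ne_top_of_le_ne_top ?_
      (lintegral_mono fun ω => h B hB hn t ht ω))
  exact (S.integrable_mul_one_add_pathMoment K).lintegral_lt_top.ne

lemma eventually_norm_deriv_sub_rpow_le_stepModulus (S : SensitivitySetup T p q μ F DF) :
    ∀ᶠ B : ℝ in atTop, ∀ {n : ℕ}, 0 < n → ∀ t ∈ Icc 0 T, ∀ (ω : ContPath T d)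
      (V : Fin (n + 1) → Fin d → ℝ), ‖DF (ω.1 + stepPath T n V) t - DF ω.1 t‖ ^ q ≤
        (stepModulus T p q DF n B t ω).toReal + B * ‖V‖ ^ p := by
  obtain ⟨K, -, h⟩ := S.exists_stepModulus_le
  filter_upwards [eventually_ge_atTop K] with B hB n hn t ht ω V
  rw [← sub_le_iff_le_add, ← ENNReal.ofReal_le_iff_le_toReal
    (ne_top_of_le_ne_top ENNReal.ofReal_ne_top (h B hB hn t ht ω))]
  exact S.ofReal_norm_deriv_sub_rpow_le_stepModulus hn ht ω V

lemma tendsto_sum_integral_stepModulus (S : SensitivitySetup T p q μ F DF) :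
    Tendsto (fun z : ℕ × ℝ => T / z.1 * ∑ k ∈ Finset.range z.1,
      ∫ ω, (stepModulus T p q DF z.1 z.2 (grid T z.1 k) ω).toReal ∂μ)
      (atTop ×ˢ atTop) (𝓝 0) := by
  obtain ⟨K, hK, h⟩ := S.exists_stepModulus_le
  have h_int := S.integrable_mul_one_add_pathMoment K
  have h_ev : ∀ᶠ z : ℕ × ℝ in atTop ×ˢ atTop, 0 < z.1 ∧ K ≤ z.2 :=
    (eventually_gt_atTop 0).prod_mk (eventually_ge_atTop K)
  have h_le {n k : ℕ} {B : ℝ} (hz : 0 < n ∧ K ≤ B) (hk : k ≤ n) (ω : ContPath T d) :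
      ‖(stepModulus T p q DF n B (grid T n k) ω).toReal‖ ≤ K * (1 + pathMoment T p ω) := by
    rw [Real.norm_of_nonneg ENNReal.toReal_nonneg]
    exact ENNReal.toReal_le_of_le_ofReal
      (mul_nonneg hK (by linarith [pathMoment_nonneg p ω]))
      (h B hz.2 hz.1 _ (grid_mem_Icc S.pos hz.1 hk) ω)
  have h_riemann := tendsto_riemannSum S.pos (n := Prod.fst) (h_ev.mono fun _ hz => hz.1)
    (a := fun z k => ∫ ω, (stepModulus T p q DF z.1 z.2 (grid T z.1 k) ω).toReal ∂μ)
    (K := ∫ ω, K * (1 + pathMoment T p ω) ∂μ) (φ := fun _ => 0) ?_ ?_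
  · simpa using h_riemann
  · filter_upwards [h_ev] with z hz k hk
    exact norm_integral_le_of_norm_le h_int (Eventually.of_forall (h_le hz hk.le))
  · filter_upwards [ae_tendsto_grid_gridIdx_nhdsLT S.pos, ae_restrict_mem measurableSet_Ioo]
      with t h_grid ht
    rw [← integral_zero (ContPath T d) ℝ (μ := μ)]
    refine tendsto_integral_filter_of_dominated_convergence
      (fun ω => K * (1 + pathMoment T p ω)) ?_ ?_ h_int (Eventually.of_forall fun ω => ?_)
    · filter_upwards [h_ev] with z hz
      exact (S.measurable_stepModulus hz.1 _ (grid_mem_Icc S.pos hz.1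
        (gridIdx_le S.pos _ ht.2.le))).ennreal_toReal.aestronglyMeasurable
    · filter_upwards [h_ev] with z hz
      exact Eventually.of_forall (h_le hz (gridIdx_le S.pos _ ht.2.le))
    · have h_param : Tendsto (fun z : ℕ × ℝ => (z.1, z.2, grid T z.1 (gridIdx T z.1 t)))
          (atTop ×ˢ atTop) (atTop ×ˢ atTop ×ˢ 𝓝[<] t) :=
        tendsto_fst.prodMk (tendsto_snd.prodMk (h_grid.comp tendsto_fst))
      have h_lim := (S.tendsto_stepModulus (Ioo_subset_Ioc_self ht) ω).comp h_param
      exact ((ENNReal.continuousAt_toReal ENNReal.zero_ne_top).tendsto.comp h_lim).trans (by simp)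

end SensitivitySetup

/-- The displacement `X - Y` of a pair of paths `z = (X, Y)` at the `k`-th grid point. -/
def gridDiff (T : ℝ) {d : ℕ} (n : ℕ) (z : ContPath T d × ContPath T d) (k : ℕ) : Fin d → ℝ :=
  z.1.1 (grid T n k) - z.2.1 (grid T n k)

/-- The increment of `Y - X` over the `k`-th grid interval, for a pair of paths `z = (X, Y)`. -/
def gridIncr (T : ℝ) {d : ℕ} (n : ℕ) (z : ContPath T d × ContPath T d) (k : ℕ) : Fin d → ℝ :=
  gridDiff T n z k - gridDiff T n z (k + 1)

/-- The maximal displacement of a pair of paths over the grid points. -/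
def gridSup (T : ℝ) {d : ℕ} (n : ℕ) (z : ContPath T d × ContPath T d) : ℝ :=
  ‖fun j : Fin (n + 1) => gridDiff T n z j‖

/-- The grid approximation of the second path of a pair `z = (X, Y)`: the path `X` with the
displacements `X - Y` at the grid points subtracted. -/
def gridTransport (T : ℝ) {d : ℕ} (n : ℕ) (z : ContPath T d × ContPath T d) : ℝ → Fin d → ℝ :=
  shiftPath T n z.1.1 (gridDiff T n z) n

/-- `π` is a probability measure with first marginal `μ` and transport cost at most `r ^ p`. -/
structure PlanBound (T p : ℝ) {d : ℕ} (μ : Measure (ContPath T d))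
    (π : Measure (ContPath T d × ContPath T d)) (r : ℝ) : Prop where
  prob : IsProbabilityMeasure π
  fst : π.map Prod.fst = μ
  nonneg : 0 ≤ r
  cost : ∫⁻ z, hcost T p z.1.1 z.2.1 ∂π ≤ ENNReal.ofReal (r ^ p)

section GridDiff

variable {T p : ℝ} {d n : ℕ}

lemma gridDiff_zero (n : ℕ) (z : ContPath T d × ContPath T d) : gridDiff T n z 0 = 0 := by
  simp [gridDiff, z.1.2.2, z.2.2.2]

lemma gridSup_nonneg (n : ℕ) (z : ContPath T d × ContPath T d) : 0 ≤ gridSup T n z :=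
  norm_nonneg _

lemma measurable_gridDiff (hT : 0 < T) (hn : 0 < n) {k : ℕ} (hk : k ≤ n) :
    Measurable fun z : ContPath T d × ContPath T d => gridDiff T n z k :=
  ((measurable_eval (grid_mem_Icc hT hn hk)).comp measurable_fst).sub
    ((measurable_eval (grid_mem_Icc hT hn hk)).comp measurable_snd)

lemma measurable_gridIncr (hT : 0 < T) {k : ℕ} (hk : k < n) (i : Fin d) :
    Measurable fun z : ContPath T d × ContPath T d => gridIncr T n z k i :=
  (measurable_pi_apply i).comp
    ((measurable_gridDiff hT (by omega) hk.le).sub (measurable_gridDiff hT (by omega) hk))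

lemma measurable_gridSup (hT : 0 < T) (hn : 0 < n) :
    Measurable (gridSup T n : ContPath T d × ContPath T d → ℝ) :=
  (measurable_pi_lambda _ fun j : Fin (n + 1) =>
    measurable_gridDiff hT hn (Nat.lt_succ_iff.1 j.2)).norm

lemma ofReal_gridSup_rpow_le (hT : 0 < T) (hp : 1 < p) (hn : 0 < n)
    (z : ContPath T d × ContPath T d) :
    ENNReal.ofReal (gridSup T n z ^ p) ≤
      ENNReal.ofReal (T ^ (p - 1)) * hcost T p z.1.1 z.2.1 := by
  obtain ⟨j, -, hj⟩ := Finset.exists_mem_eq_sup (Finset.univ : Finset (Fin (n + 1)))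
    ⟨0, Finset.mem_univ _⟩ fun j => ‖gridDiff T n z j‖₊
  have h_sup : gridSup T n z = ‖gridDiff T n z j‖ := by
    rw [gridSup, Pi.norm_def, hj, coe_nnnorm]
  rw [h_sup]
  exact norm_rpow_le_hcost hT hp (by rw [z.1.2.2, z.2.2.2])
    (grid_mem_Icc hT hn (Nat.lt_succ_iff.1 j.2))

lemma sum_ofReal_gridIncr_rpow_le (hT : 0 < T) (hp : 1 < p) (hn : 0 < n)
    (z : ContPath T d × ContPath T d) :
    ∑ k ∈ Finset.range n, ∑ i, ENNReal.ofReal (|gridIncr T n z k i| ^ p) ≤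
      ENNReal.ofReal ((T / n) ^ (p - 1)) * hcost T p z.1.1 z.2.1 := by
  refine (Finset.sum_congr rfl fun k _ => Finset.sum_congr rfl fun i _ => ?_).trans_le
    (sum_sum_abs_increment_rpow_le_hcost hT hp hn z.1.1 z.2.1)
  rw [abs_sub_comm]
  rfl

lemma cadlagOn_gridTransport (n : ℕ) (z : ContPath T d × ContPath T d) :
    CadlagOn T (gridTransport T n z) :=
  cadlagOn_shiftPath n z.1.cadlagOn _ n

lemma abs_min_grid_gridIdx_succ_sub_le (hT : 0 < T) (hn : 0 < n) {t : ℝ} (ht : t ∈ Icc 0 T) :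
    |grid T n (min n (gridIdx T n t + 1)) - t| ≤ T / n := by
  have h_left := grid_gridIdx_le hT hn ht.1
  have h_right := lt_grid_gridIdx_succ hT hn ht.1
  have h_mesh := grid_succ T n (gridIdx T n t)
  rcases le_total n (gridIdx T n t + 1) with h | h
  · have h_last := grid_mono hT n h
    rw [min_eq_left h]
    rw [grid_self T hn] at h_last ⊢
    rw [abs_le]
    constructor <;> linarith [ht.2]
  · rw [min_eq_right h, abs_le]
    constructor <;> linarith

lemma tendstoUniformlyOn_gridTransport (hT : 0 < T) (z : ContPath T d × ContPath T d) :
    TendstoUniformlyOn (fun n => gridTransport T n z) z.2.1 atTop (Icc 0 T) := by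
  have h_unif := isCompact_Icc.uniformContinuousOn_of_continuous (z.1.2.1.sub z.2.2.1)
  rw [Metric.uniformContinuousOn_iff] at h_unif
  refine Metric.tendstoUniformlyOn_iff.2 fun ε hε => ?_
  obtain ⟨η, hη, h⟩ := h_unif ε hε
  filter_upwards [(tendsto_const_div_atTop_nhds_zero_nat T).eventually (gt_mem_nhds hη),
    eventually_gt_atTop 0] with n h_mesh hn t ht
  have h_close := h _ (grid_mem_Icc hT hn (min_le_left n (gridIdx T n t + 1))) t ht
    ((abs_min_grid_gridIdx_succ_sub_le hT hn ht).trans_lt h_mesh)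
  rw [gridTransport, shiftPath_apply hT hn _ (gridDiff_zero _ z) _ ht]
  convert h_close using 1
  rw [dist_eq_norm, dist_eq_norm, gridDiff, Pi.sub_apply, Pi.sub_apply]
  congr 1
  abel

end GridDiff

namespace PlanBound

variable {T p : ℝ} {d n : ℕ} {μ : Measure (ContPath T d)}
  {π : Measure (ContPath T d × ContPath T d)} {r : ℝ}

lemma measurePreserving_fst (h : PlanBound T p μ π r) : MeasurePreserving Prod.fst π μ :=
  ⟨measurable_fst, h.fst⟩

lemma integral_fst (h : PlanBound T p μ π r) {φ : ContPath T d → ℝ}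
    (hφ : AEStronglyMeasurable φ μ) : ∫ z, φ z.1 ∂π = ∫ ω, φ ω ∂μ := by
  have h_map := h.fst
  subst h_map
  exact (integral_map measurable_fst.aemeasurable hφ).symm

lemma lintegral_const_mul_hcost_le (h : PlanBound T p μ π r) {c : ℝ} (hc : 0 ≤ c) :
    ∫⁻ z, ENNReal.ofReal c * hcost T p z.1.1 z.2.1 ∂π ≤ ENNReal.ofReal (c * r ^ p) := by
  rw [lintegral_const_mul' _ _ ENNReal.ofReal_ne_top, ENNReal.ofReal_mul hc]
  gcongr
  exact h.cost

lemma sum_lintegral_gridIncr_rpow_le (h : PlanBound T p μ π r) (hT : 0 < T) (hp : 1 < p)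
    (hn : 0 < n) :
    ∑ k ∈ Finset.range n, ∑ i, ∫⁻ z, ENNReal.ofReal (|gridIncr T n z k i| ^ p) ∂π ≤
      ENNReal.ofReal ((T / n) ^ (p - 1) * r ^ p) := by
  have h_meas : ∀ k ∈ Finset.range n, ∀ i, Measurable fun z : ContPath T d × ContPath T d =>
      ENNReal.ofReal (|gridIncr T n z k i| ^ p) := fun k hk i =>
    ((measurable_gridIncr hT (Finset.mem_range.1 hk) i).norm.pow_const p).ennreal_ofReal
  calc ∑ k ∈ Finset.range n, ∑ i, ∫⁻ z, ENNReal.ofReal (|gridIncr T n z k i| ^ p) ∂π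
      = ∫⁻ z, ∑ k ∈ Finset.range n, ∑ i, ENNReal.ofReal (|gridIncr T n z k i| ^ p) ∂π := by
        rw [lintegral_finsetSum _ fun k hk => Finset.measurable_sum _ fun i _ => h_meas k hk i]
        exact Finset.sum_congr rfl fun k hk => (lintegral_finsetSum _ fun i _ => h_meas k hk i).symm
    _ ≤ ∫⁻ z, ENNReal.ofReal ((T / n) ^ (p - 1)) * hcost T p z.1.1 z.2.1 ∂π :=
        lintegral_mono fun z => sum_ofReal_gridIncr_rpow_le hT hp hn z
    _ ≤ _ := h.lintegral_const_mul_hcost_le (by positivity)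

lemma integrable_gridIncr_rpow (h : PlanBound T p μ π r) (hT : 0 < T) (hp : 1 < p) {k : ℕ}
    (hk : k < n) (i : Fin d) : Integrable (fun z => |gridIncr T n z k i| ^ p) π := by
  refine ⟨((measurable_gridIncr hT hk i).norm.pow_const p).aestronglyMeasurable, ?_⟩
  rw [hasFiniteIntegral_iff_ofReal (ae_of_all _ fun z => by positivity)]
  calc ∫⁻ z, ENNReal.ofReal (|gridIncr T n z k i| ^ p) ∂π
      ≤ ∑ i, ∫⁻ z, ENNReal.ofReal (|gridIncr T n z k i| ^ p) ∂π :=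
        Finset.single_le_sum (f := fun i => ∫⁻ z, ENNReal.ofReal (|gridIncr T n z k i| ^ p) ∂π)
          (fun _ _ => zero_le) (Finset.mem_univ i)
    _ ≤ ∑ k ∈ Finset.range n, ∑ i, ∫⁻ z, ENNReal.ofReal (|gridIncr T n z k i| ^ p) ∂π :=
        Finset.single_le_sum
          (f := fun k => ∑ i, ∫⁻ z, ENNReal.ofReal (|gridIncr T n z k i| ^ p) ∂π)
          (fun _ _ => zero_le) (Finset.mem_range.2 hk)
    _ < ⊤ := (h.sum_lintegral_gridIncr_rpow_le hT hp (by omega)).trans_lt ENNReal.ofReal_lt_top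

lemma memLp_gridIncr (h : PlanBound T p μ π r) (hT : 0 < T) (hp : 1 < p) {k : ℕ} (hk : k < n)
    (i : Fin d) : MemLp (fun z => gridIncr T n z k i) (ENNReal.ofReal p) π :=
  memLp_of_norm_rpow_le (by linarith) (measurable_gridIncr hT hk i).aestronglyMeasurable
    (h.integrable_gridIncr_rpow hT hp hk i) (Eventually.of_forall fun _ => le_rfl)

lemma sum_integral_gridIncr_rpow_le (h : PlanBound T p μ π r) (hT : 0 < T) (hp : 1 < p)
    (hn : 0 < n) : ∑ k ∈ Finset.range n, ∑ i, ∫ z, |gridIncr T n z k i| ^ p ∂π ≤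
      (T / n) ^ (p - 1) * r ^ p := by
  have hr := h.nonneg
  have h_nonneg (k : ℕ) (i : Fin d) : 0 ≤ ∫ z, |gridIncr T n z k i| ^ p ∂π :=
    integral_nonneg fun z => by positivity
  rw [← ENNReal.ofReal_le_ofReal_iff (by positivity)]
  refine le_trans (le_of_eq ?_) (h.sum_lintegral_gridIncr_rpow_le hT hp hn)
  rw [ENNReal.ofReal_sum_of_nonneg fun k _ => Finset.sum_nonneg fun i _ => h_nonneg k i]
  refine Finset.sum_congr rfl fun k hk => ?_
  rw [ENNReal.ofReal_sum_of_nonneg fun i _ => h_nonneg k i]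
  refine Finset.sum_congr rfl fun i _ => ?_
  exact ofReal_integral_eq_lintegral_ofReal
    (h.integrable_gridIncr_rpow hT hp (Finset.mem_range.1 hk) i)
    (ae_of_all _ fun z => by positivity)

lemma sum_integral_abs_mul_gridIncr_le {q : ℝ} (h : PlanBound T p μ π r) (hT : 0 < T)
    (hpq : p.HolderConjugate q) (hn : 0 < n) {A : ℕ → Fin d → ContPath T d × ContPath T d → ℝ}
    (hA : ∀ k < n, ∀ i, MemLp (A k i) (ENNReal.ofReal q) π) :
    ∑ k ∈ Finset.range n, ∑ i, ∫ z, |A k i z| * |gridIncr T n z k i| ∂π ≤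
      (T / n * ∑ k ∈ Finset.range n, ∑ i, ∫ z, |A k i z| ^ q ∂π) ^ (1 / q) * r := by
  let s := Finset.range n ×ˢ (Finset.univ : Finset (Fin d))
  let A' (j : ℕ × Fin d) : ContPath T d × ContPath T d → ℝ := A j.1 j.2
  let B (j : ℕ × Fin d) (z : ContPath T d × ContPath T d) : ℝ := gridIncr T n z j.1 j.2
  have h_cell : ∀ j ∈ s, j.1 < n := fun j hj =>
    Finset.mem_range.1 (Finset.mem_product.1 hj).1
  have hA' : ∀ j ∈ s, MemLp (A' j) (ENNReal.ofReal q) π := fun j hj =>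
    hA j.1 (h_cell j hj) j.2
  have hB : ∀ j ∈ s, MemLp (B j) (ENNReal.ofReal p) π := fun j hj =>
    h.memLp_gridIncr hT hpq.lt (h_cell j hj) j.2
  have h_incr : ∑ j ∈ s, ∫ z, |B j z| ^ p ∂π ≤ (T / n) ^ (p - 1) * r ^ p := by
    rw [Finset.sum_product]
    exact h.sum_integral_gridIncr_rpow_le hT hpq.lt hn
  have hw : 0 < T / n := by positivity
  have h_holder := sum_integral_mul_le_of_le hpq.symm s hA' hB hw h.nonneg h_incr
  rw [Finset.sum_product, Finset.sum_product] at h_holder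
  exact h_holder

lemma exists_integrable_gridSup_rpow_le (h : PlanBound T p μ π r) (hT : 0 < T) (hp : 1 < p) :
    ∃ g : ContPath T d × ContPath T d → ℝ, Integrable g π ∧ ∫ z, g z ∂π ≤ T ^ (p - 1) * r ^ p ∧
      ∀ᵐ z ∂π, ∀ n, 0 < n → gridSup T n z ^ p ≤ g z := by
  have hr := h.nonneg
  let G : ContPath T d × ContPath T d → ℝ≥0∞ :=
    fun z => ⨆ m : ℕ, ENNReal.ofReal (gridSup T (m + 1) z ^ p)
  have hG : Measurable G := Measurable.iSup fun m =>
    ((measurable_gridSup hT m.succ_pos).pow_const p).ennreal_ofReal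
  have hG_le : ∫⁻ z, G z ∂π ≤ ENNReal.ofReal (T ^ (p - 1) * r ^ p) :=
    (lintegral_mono fun z => iSup_le fun m => ofReal_gridSup_rpow_le hT hp m.succ_pos z).trans
      (h.lintegral_const_mul_hcost_le (by positivity))
  have hG_top := (hG_le.trans_lt ENNReal.ofReal_lt_top).ne
  refine ⟨fun z => (G z).toReal, integrable_toReal_of_lintegral_ne_top hG.aemeasurable hG_top,
    ?_, ?_⟩
  · rw [integral_toReal hG.aemeasurable (ae_lt_top hG hG_top)]
    exact ENNReal.toReal_le_of_le_ofReal (by positivity) hG_le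
  · filter_upwards [ae_lt_top hG hG_top] with z hz n hn
    rw [← ENNReal.ofReal_le_iff_le_toReal hz.ne]
    obtain ⟨m, rfl⟩ := Nat.exists_eq_succ_of_ne_zero hn.ne'
    exact le_iSup (fun m : ℕ => ENNReal.ofReal (gridSup T (m + 1) z ^ p)) m

lemma integrable_gridSup_rpow (h : PlanBound T p μ π r) (hT : 0 < T) (hp : 1 < p) (hn : 0 < n) :
    Integrable (fun z => gridSup T n z ^ p) π := by
  obtain ⟨g, hg, -, h_le⟩ := h.exists_integrable_gridSup_rpow_le hT hp
  refine hg.mono' ((measurable_gridSup hT hn).pow_const p).aestronglyMeasurable ?_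
  filter_upwards [h_le] with z hz
  rw [Real.norm_of_nonneg (Real.rpow_nonneg (gridSup_nonneg n z) p)]
  exact hz n hn

lemma integral_gridSup_rpow_le (h : PlanBound T p μ π r) (hT : 0 < T) (hp : 1 < p) (hn : 0 < n) :
    ∫ z, gridSup T n z ^ p ∂π ≤ T ^ (p - 1) * r ^ p := by
  obtain ⟨g, hg, hg_le, h_le⟩ := h.exists_integrable_gridSup_rpow_le hT hp
  exact (integral_mono_ae (h.integrable_gridSup_rpow hT hp hn) hg
    (h_le.mono fun z hz => hz n hn)).trans hg_le

end PlanBound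

namespace SensitivitySetup

variable {T p q : ℝ} {d n : ℕ} {μ : Measure (ContPath T d)} {F : (ℝ → Fin d → ℝ) → ℝ}
  {DF : (ℝ → Fin d → ℝ) → ℝ → Fin d → ℝ} {π : Measure (ContPath T d × ContPath T d)} {r : ℝ}

lemma functional_gridTransport_eq (S : SensitivitySetup T p q μ F DF) (hn : 0 < n)
    (z : ContPath T d × ContPath T d) : F (gridTransport T n z) =
      F (z.1.1 + stepPath T n fun k => -gridDiff T n z (min n (k + 1))) :=
  S.cont.congr (cadlagOn_gridTransport n z) (z.1.cadlagOn.add (cadlagOn_stepPath S.pos hn _))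
    (shiftPath_eqOn_stepPath S.pos hn z.1.1 (gridDiff_zero n z))

lemma measurable_functional_gridTransport (S : SensitivitySetup T p q μ F DF) (hn : 0 < n) :
    Measurable fun z : ContPath T d × ContPath T d => F (gridTransport T n z) := by
  simp_rw [S.functional_gridTransport_eq hn]
  exact S.cont.measurable_comp_add_stepPath S.pos (fun z => z.1.2.1)
    (fun t ht => (measurable_eval ht).comp measurable_fst) hn
    (measurable_pi_lambda _ fun k => (measurable_gridDiff S.pos hn (min_le_left _ _)).neg)

lemma exists_abs_functional_gridTransport_le (S : SensitivitySetup T p q μ F DF) :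
    ∃ K : ℝ, 0 ≤ K ∧ ∀ (z : ContPath T d × ContPath T d) {n : ℕ}, 0 < n →
      |F (gridTransport T n z)| ≤ K * (1 + pathMoment T p z.1 + gridSup T n z ^ p) := by
  obtain ⟨K, hK, h⟩ := S.exists_abs_functional_le
  refine ⟨K, hK, fun z n hn => ?_⟩
  rw [S.functional_gridTransport_eq hn]
  refine h z.1 _ _ (cadlagOn_stepPath S.pos hn _) (gridSup_nonneg n z) fun s _ =>
    (norm_stepPath_le _ s).trans ?_
  refine (pi_norm_le_iff_of_nonneg (gridSup_nonneg n z)).2 fun k => ?_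
  rw [norm_neg]
  exact norm_le_pi_norm (fun j : Fin (n + 1) => gridDiff T n z j) ⟨min n (k + 1), by omega⟩

lemma integrable_functional_gridTransport (S : SensitivitySetup T p q μ F DF)
    (h : PlanBound T p μ π r) (hn : 0 < n) : Integrable (fun z => F (gridTransport T n z)) π := by
  obtain ⟨K, -, h_le⟩ := S.exists_abs_functional_gridTransport_le
  have := h.prob
  have h_moment := h.measurePreserving_fst.integrable_comp_of_integrable S.moment
  exact ((((integrable_const 1).add h_moment).add
    (h.integrable_gridSup_rpow S.pos S.conj.lt hn)).const_mul K).mono'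
    (S.measurable_functional_gridTransport hn).aestronglyMeasurable
    (ae_of_all _ fun z => h_le z hn)

lemma tendsto_integral_functional_gridTransport (S : SensitivitySetup T p q μ F DF)
    (h : PlanBound T p μ π r) :
    Tendsto (fun n : ℕ => ∫ z, F (gridTransport T n z) ∂π) atTop (𝓝 (∫ z, F z.2.1 ∂π)) := by
  obtain ⟨K, hK, h_le⟩ := S.exists_abs_functional_gridTransport_le
  obtain ⟨g, hg, -, hg_le⟩ := h.exists_integrable_gridSup_rpow_le S.pos S.conj.lt
  have := h.prob
  have h_moment := h.measurePreserving_fst.integrable_comp_of_integrable S.moment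
  refine tendsto_integral_filter_of_dominated_convergence
    (fun z => K * (1 + pathMoment T p z.1 + g z)) ?_ ?_
    ((((integrable_const 1).add h_moment).add hg).const_mul K) (ae_of_all _ fun z => ?_)
  · filter_upwards [eventually_gt_atTop 0] with n hn
    exact (S.measurable_functional_gridTransport hn).aestronglyMeasurable
  · filter_upwards [eventually_gt_atTop 0] with n hn
    filter_upwards [hg_le] with z hz
    refine (h_le z hn).trans ?_
    gcongr
    exact hz n hn
  · exact S.cont _ _ z.2.cadlagOn (fun n => cadlagOn_gridTransport n z)
      (tendstoUniformlyOn_gridTransport S.pos z)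

end SensitivitySetup

lemma sum_sum_integral_eq {Ω ι κ : Type*} [MeasurableSpace Ω] {π : Measure Ω} {s : Finset ι}
    {t : Finset κ} {f : ι → κ → Ω → ℝ} (hf : ∀ j ∈ s, ∀ i ∈ t, Integrable (f j i) π) :
    ∑ j ∈ s, ∑ i ∈ t, ∫ z, f j i z ∂π = ∫ z, ∑ j ∈ s, ∑ i ∈ t, f j i z ∂π := by
  rw [integral_finsetSum _ fun j hj => integrable_finsetSum _ (hf j hj)]
  exact Finset.sum_congr rfl fun j hj => (integral_finsetSum _ (hf j hj)).symm

lemma rpow_add_mul_rpow_rpow_mul_le {p q : ℝ} (hpq : p.HolderConjugate q) {a c r : ℝ}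
    (ha : 0 ≤ a) (hc : 0 ≤ c) (hr : 0 ≤ r) :
    (a ^ q + c * r ^ p) ^ (1 / q) * r ≤ a * r + c ^ (1 / q) * r ^ p := by
  have hq := hpq.symm.pos
  have h_exponent : (r ^ p) ^ (1 / q) * r = r ^ p := by
    rcases hr.eq_or_lt with rfl | hr
    · rw [Real.zero_rpow hpq.pos.ne', mul_zero]
    · rw [← Real.rpow_mul hr.le, mul_one_div, hpq.div_conj_eq_sub_one, ← Real.rpow_add_one hr.ne',
        sub_add_cancel]
  calc (a ^ q + c * r ^ p) ^ (1 / q) * r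
      ≤ ((a ^ q) ^ (1 / q) + (c * r ^ p) ^ (1 / q)) * r := by
        gcongr
        exact Real.rpow_add_le_add_rpow (by positivity) (by positivity) (by positivity)
          ((div_le_one hq).2 hpq.symm.lt.le)
    _ = a * r + c ^ (1 / q) * ((r ^ p) ^ (1 / q) * r) := by
        rw [one_div, Real.rpow_rpow_inv ha hq.ne', Real.mul_rpow hc (by positivity)]
        ring
    _ = a * r + c ^ (1 / q) * r ^ p := by rw [h_exponent]

/-- The bound on the oscillation of the derivative at the `k`-th grid point, between the first
path of `z` and its shifts towards the second one, which `stepModulus` provides. -/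
def derivOsc (T p q : ℝ) {d : ℕ} (DF : (ℝ → Fin d → ℝ) → ℝ → Fin d → ℝ) (n : ℕ) (B : ℝ) (k : ℕ)
    (z : ContPath T d × ContPath T d) : ℝ :=
  ((stepModulus T p q DF n B (grid T n k) z.1).toReal + B * gridSup T n z ^ p) ^ (1 / q)

namespace SensitivitySetup

variable {T p q : ℝ} {d n : ℕ} {μ : Measure (ContPath T d)} {F : (ℝ → Fin d → ℝ) → ℝ}
  {DF : (ℝ → Fin d → ℝ) → ℝ → Fin d → ℝ} {π : Measure (ContPath T d × ContPath T d)} {r : ℝ}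

lemma memLp_deriv_fst (S : SensitivitySetup T p q μ F DF) (h : PlanBound T p μ π r) {t : ℝ}
    (ht : t ∈ Icc 0 T) (i : Fin d) :
    MemLp (fun z : ContPath T d × ContPath T d => DF z.1.1 t i) (ENNReal.ofReal q) π :=
  (S.memLp_deriv_apply ht i).comp_measurePreserving h.measurePreserving_fst

lemma memLp_deriv_fst_sub (S : SensitivitySetup T p q μ F DF) (h : PlanBound T p μ π r)
    {s t : ℝ} (hs : s ∈ Icc 0 T) (ht : t ∈ Icc 0 T) (i : Fin d) :
    MemLp (fun z : ContPath T d × ContPath T d => DF z.1.1 s i - DF z.1.1 t i)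
      (ENNReal.ofReal q) π :=
  (S.memLp_deriv_fst h hs i).sub (S.memLp_deriv_fst h ht i)

lemma abs_functional_gridTransport_sub_le (S : SensitivitySetup T p q μ F DF) (n : ℕ)
    (z : ContPath T d × ContPath T d) {M : ℕ → ℝ}
    (hM : ∀ k < n, ∀ V : Fin (n + 1) → Fin d → ℝ, ‖V‖ ≤ gridSup T n z →
      ‖DF (z.1.1 + stepPath T n V) (grid T n k) - DF z.1.1 (grid T n k)‖ ≤ M k) :
    |F (gridTransport T n z) - F z.1.1 - ∑ k ∈ Finset.range n, ∑ i,
        DF z.1.1 (grid T n (k + 1)) i * gridIncr T n z k i| ≤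
      ∑ k ∈ Finset.range n, ∑ i, (M k * |gridIncr T n z k i| +
        |DF z.1.1 (grid T n k) i - DF z.1.1 (grid T n (k + 1)) i| * |gridIncr T n z k i|) := by
  have h_telescope := Finset.sum_range_sub (fun k => F (shiftPath T n z.1.1 (gridDiff T n z) k)) n
  have h_zero : shiftPath T n z.1.1 (gridDiff T n z) 0 = z.1.1 := by simp [shiftPath]
  rw [h_zero] at h_telescope
  rw [gridTransport, ← h_telescope, ← Finset.sum_sub_distrib]
  refine (Finset.abs_sum_le_sum_abs _ _).trans (Finset.sum_le_sum fun k hk => ?_)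
  obtain ⟨V, hV, h_step⟩ := exists_shiftPath_succ_sub_eq S.pos S.deriv S.derivCont
    (Finset.mem_range.1 hk) z.1.cadlagOn (gridDiff_zero n z)
  rw [h_step, ← Finset.sum_sub_distrib]
  refine (Finset.abs_sum_le_sum_abs _ _).trans (Finset.sum_le_sum fun i _ => ?_)
  have h_space := (norm_le_pi_norm _ i).trans (hM k (Finset.mem_range.1 hk) V hV)
  have h_triangle := abs_sub_le (DF (z.1.1 + stepPath T n V) (grid T n k) i)
    (DF z.1.1 (grid T n k) i) (DF z.1.1 (grid T n (k + 1)) i)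
  rw [gridIncr, Pi.sub_apply, ← sub_mul, abs_mul, ← add_mul]
  gcongr
  exact h_triangle.trans (add_le_add_left h_space _)

lemma integrable_deriv_mul_gridIncr (S : SensitivitySetup T p q μ F DF) (h : PlanBound T p μ π r)
    {t : ℝ} (ht : t ∈ Icc 0 T) {k : ℕ} (hk : k < n) (i : Fin d) :
    Integrable (fun z => DF z.1.1 t i * gridIncr T n z k i) π :=
  integrable_mul_of_memLp S.conj.symm (S.memLp_deriv_fst h ht i)
    (h.memLp_gridIncr S.pos S.conj.lt hk i)

lemma abs_integral_functional_gridTransport_sub_le (S : SensitivitySetup T p q μ F DF)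
    (h : PlanBound T p μ π r) (hn : 0 < n) {M : ℕ → ContPath T d × ContPath T d → ℝ}
    (hM : ∀ k < n, MemLp (M k) (ENNReal.ofReal q) π)
    (hM_le : ∀ k < n, ∀ z : ContPath T d × ContPath T d, ∀ V : Fin (n + 1) → Fin d → ℝ,
      ‖V‖ ≤ gridSup T n z →
        ‖DF (z.1.1 + stepPath T n V) (grid T n k) - DF z.1.1 (grid T n k)‖ ≤ |M k z|) :
    |∫ z, F (gridTransport T n z) ∂π - ∫ ω, F ω.1 ∂μ - ∑ k ∈ Finset.range n, ∑ i,
        ∫ z, DF z.1.1 (grid T n (k + 1)) i * gridIncr T n z k i ∂π| ≤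
      ∑ k ∈ Finset.range n, ∑ i, ∫ z, |M k z| * |gridIncr T n z k i| ∂π +
      ∑ k ∈ Finset.range n, ∑ i, ∫ z, |DF z.1.1 (grid T n k) i - DF z.1.1 (grid T n (k + 1)) i| *
        |gridIncr T n z k i| ∂π := by
  have h_mem : ∀ k ∈ Finset.range n, grid T n k ∈ Icc 0 T ∧ grid T n (k + 1) ∈ Icc 0 T :=
    fun k hk => have hk := Finset.mem_range.1 hk
      ⟨grid_mem_Icc S.pos hn hk.le, grid_mem_Icc S.pos hn hk⟩
  have h_incr : ∀ k ∈ Finset.range n, ∀ i ∈ Finset.univ,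
      MemLp (fun z => |gridIncr T n z k i|) (ENNReal.ofReal p) π := fun k hk i _ =>
    (h.memLp_gridIncr S.pos S.conj.lt (Finset.mem_range.1 hk) i).abs
  have h_first : ∀ k ∈ Finset.range n, ∀ i ∈ Finset.univ, Integrable
      (fun z => DF z.1.1 (grid T n (k + 1)) i * gridIncr T n z k i) π := fun k hk i _ =>
    S.integrable_deriv_mul_gridIncr h (h_mem k hk).2 (Finset.mem_range.1 hk) i
  have h_space : ∀ k ∈ Finset.range n, ∀ i ∈ Finset.univ, Integrable
      (fun z => |M k z| * |gridIncr T n z k i|) π := fun k hk i hi =>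
    integrable_mul_of_memLp S.conj.symm (hM k (Finset.mem_range.1 hk)).abs (h_incr k hk i hi)
  have h_time : ∀ k ∈ Finset.range n, ∀ i ∈ Finset.univ, Integrable
      (fun z : ContPath T d × ContPath T d =>
        |DF z.1.1 (grid T n k) i - DF z.1.1 (grid T n (k + 1)) i| * |gridIncr T n z k i|) π :=
    fun k hk i hi => integrable_mul_of_memLp S.conj.symm
      (S.memLp_deriv_fst_sub h (h_mem k hk).1 (h_mem k hk).2 i).abs (h_incr k hk i hi)
  have h_sum {f : ℕ → Fin d → ContPath T d × ContPath T d → ℝ}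
      (hf : ∀ k ∈ Finset.range n, ∀ i ∈ Finset.univ, Integrable (f k i) π) :=
    integrable_finsetSum _ fun k hk => integrable_finsetSum _ (hf k hk)
  have h_fst : Integrable (fun z : ContPath T d × ContPath T d => F z.1.1) π :=
    h.measurePreserving_fst.integrable_comp_of_integrable S.integrable_functional
  have h_transport := S.integrable_functional_gridTransport h hn
  have h_diff : Integrable
      (fun z : ContPath T d × ContPath T d => F (gridTransport T n z) - F z.1.1) π :=
    h_transport.sub h_fst
  rw [← h.integral_fst S.measurable_functional.aestronglyMeasurable,
    ← integral_sub h_transport h_fst, sum_sum_integral_eq h_first, sum_sum_integral_eq h_space,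
    sum_sum_integral_eq h_time, ← integral_sub h_diff (h_sum h_first),
    ← integral_add (h_sum h_space) (h_sum h_time), ← Real.norm_eq_abs]
  refine norm_integral_le_of_norm_le ((h_sum h_space).add (h_sum h_time)) (ae_of_all _ fun z => ?_)
  refine (S.abs_functional_gridTransport_sub_le n z
    fun k hk V hV => hM_le k hk z V hV).trans_eq ?_
  simp only [Finset.sum_add_distrib]

lemma derivOsc_nonneg {B : ℝ} (hB : 0 ≤ B) (k : ℕ) (z : ContPath T d × ContPath T d) :
    0 ≤ derivOsc T p q DF n B k z :=
  Real.rpow_nonneg (add_nonneg ENNReal.toReal_nonneg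
    (mul_nonneg hB (Real.rpow_nonneg (gridSup_nonneg n z) p))) _

lemma derivOsc_rpow (hq : 0 < q) {B : ℝ} (hB : 0 ≤ B) (k : ℕ)
    (z : ContPath T d × ContPath T d) : derivOsc T p q DF n B k z ^ q =
      (stepModulus T p q DF n B (grid T n k) z.1).toReal + B * gridSup T n z ^ p := by
  have := gridSup_nonneg n z
  rw [derivOsc, one_div, Real.rpow_inv_rpow (by positivity) hq.ne']

lemma norm_deriv_sub_le_derivOsc (hq : 0 < q) {B : ℝ} (hB : 0 ≤ B) (hp : 0 ≤ p) {k : ℕ}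
    {z : ContPath T d × ContPath T d} {V : Fin (n + 1) → Fin d → ℝ}
    (h_mod : ‖DF (z.1.1 + stepPath T n V) (grid T n k) - DF z.1.1 (grid T n k)‖ ^ q ≤
      (stepModulus T p q DF n B (grid T n k) z.1).toReal + B * ‖V‖ ^ p)
    (hV : ‖V‖ ≤ gridSup T n z) :
    ‖DF (z.1.1 + stepPath T n V) (grid T n k) - DF z.1.1 (grid T n k)‖ ≤
      derivOsc T p q DF n B k z := by
  rw [← Real.rpow_le_rpow_iff (norm_nonneg _) (derivOsc_nonneg hB k z) hq, derivOsc_rpow hq hB]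
  exact h_mod.trans (by gcongr)

lemma integrable_derivOsc_rpow (S : SensitivitySetup T p q μ F DF) (h : PlanBound T p μ π r)
    (hn : 0 < n) {B : ℝ} (hB : 0 ≤ B) {k : ℕ}
    (h_int : Integrable (fun ω => (stepModulus T p q DF n B (grid T n k) ω).toReal) μ) :
    Integrable (fun z => derivOsc T p q DF n B k z ^ q) π := by
  simp_rw [derivOsc_rpow S.conj.symm.pos hB]
  exact (h.measurePreserving_fst.integrable_comp_of_integrable h_int).add
    ((h.integrable_gridSup_rpow S.pos S.conj.lt hn).const_mul B)

lemma integral_derivOsc_rpow (S : SensitivitySetup T p q μ F DF) (h : PlanBound T p μ π r)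
    (hn : 0 < n) {B : ℝ} (hB : 0 ≤ B) {k : ℕ}
    (h_int : Integrable (fun ω => (stepModulus T p q DF n B (grid T n k) ω).toReal) μ) :
    ∫ z, derivOsc T p q DF n B k z ^ q ∂π =
      ∫ ω, (stepModulus T p q DF n B (grid T n k) ω).toReal ∂μ +
        B * ∫ z, gridSup T n z ^ p ∂π := by
  have h_fst : Integrable (fun z : ContPath T d × ContPath T d =>
      (stepModulus T p q DF n B (grid T n k) z.1).toReal) π :=
    h.measurePreserving_fst.integrable_comp_of_integrable h_int
  simp_rw [derivOsc_rpow S.conj.symm.pos hB]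
  rw [integral_add h_fst ((h.integrable_gridSup_rpow S.pos S.conj.lt hn).const_mul B),
    integral_const_mul, h.integral_fst h_int.aestronglyMeasurable]

lemma memLp_derivOsc (S : SensitivitySetup T p q μ F DF) (h : PlanBound T p μ π r)
    (hn : 0 < n) {B : ℝ} (hB : 0 ≤ B) {k : ℕ} (hk : k ≤ n)
    (h_int : Integrable (fun ω => (stepModulus T p q DF n B (grid T n k) ω).toReal) μ) :
    MemLp (derivOsc T p q DF n B k) (ENNReal.ofReal q) π := by
  refine memLp_of_norm_rpow_le S.conj.symm.pos (Measurable.pow_const ?_ _).aestronglyMeasurable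
    (S.integrable_derivOsc_rpow h hn hB h_int) (ae_of_all _ fun z => ?_)
  · exact ((S.measurable_stepModulus hn B (grid_mem_Icc S.pos hn hk)).ennreal_toReal.comp
      measurable_fst).add (((measurable_gridSup S.pos hn).pow_const p).const_mul B)
  · rw [Real.norm_of_nonneg (derivOsc_nonneg hB k z)]

lemma sum_integral_derivOsc_rpow_le (S : SensitivitySetup T p q μ F DF)
    (h : PlanBound T p μ π r) (hn : 0 < n) {B : ℝ} (hB : 0 ≤ B)
    (h_int : ∀ k < n, Integrable (fun ω => (stepModulus T p q DF n B (grid T n k) ω).toReal) μ) :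
    T / n * ∑ k ∈ Finset.range n, ∑ _i : Fin d, ∫ z, |derivOsc T p q DF n B k z| ^ q ∂π ≤
      d * (T / n * ∑ k ∈ Finset.range n,
        ∫ ω, (stepModulus T p q DF n B (grid T n k) ω).toReal ∂μ) + d * T ^ p * B * r ^ p := by
  have hT := S.pos
  have h_cell : ∀ k ∈ Finset.range n, ∑ _i : Fin d, ∫ z, |derivOsc T p q DF n B k z| ^ q ∂π =
      d * ∫ ω, (stepModulus T p q DF n B (grid T n k) ω).toReal ∂μ +
        d * (B * ∫ z, gridSup T n z ^ p ∂π) := fun k hk => by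
    simp_rw [abs_of_nonneg (derivOsc_nonneg hB k _)]
    rw [S.integral_derivOsc_rpow h hn hB (h_int k (Finset.mem_range.1 hk)), Finset.sum_const,
      Finset.card_fin, nsmul_eq_mul, mul_add]
  rw [Finset.sum_congr rfl h_cell, Finset.sum_add_distrib, ← Finset.mul_sum, Finset.sum_const,
    Finset.card_range, nsmul_eq_mul, mul_add, mul_left_comm (T / n : ℝ),
    add_le_add_iff_left]
  calc T / n * (n * (d * (B * ∫ z, gridSup T n z ^ p ∂π)))
      ≤ T / n * (n * (d * (B * (T ^ (p - 1) * r ^ p)))) := by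
        gcongr
        exact h.integral_gridSup_rpow_le hT S.conj.lt hn
    _ = d * T ^ p * B * r ^ p := by
        rw [Real.rpow_sub_one hT.ne']
        field_simp

lemma sum_integral_derivOsc_mul_gridIncr_le (S : SensitivitySetup T p q μ F DF)
    (h : PlanBound T p μ π r) (hn : 0 < n) {B a : ℝ} (hB : 0 ≤ B) (ha : 0 ≤ a)
    (h_int : ∀ k < n, Integrable (fun ω => (stepModulus T p q DF n B (grid T n k) ω).toReal) μ)
    (h_mod : d * (T / n * ∑ k ∈ Finset.range n,
      ∫ ω, (stepModulus T p q DF n B (grid T n k) ω).toReal ∂μ) ≤ a ^ q) :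
    ∑ k ∈ Finset.range n, ∑ i, ∫ z, |derivOsc T p q DF n B k z| * |gridIncr T n z k i| ∂π ≤
      a * r + (d * T ^ p * B) ^ (1 / q) * r ^ p := by
  have hT := S.pos
  have hq := S.conj.symm.pos
  have hr := h.nonneg
  refine (h.sum_integral_abs_mul_gridIncr_le hT S.conj hn (A := fun k _ =>
    derivOsc T p q DF n B k) fun k hk _ => S.memLp_derivOsc h hn hB hk.le (h_int k hk)).trans ?_
  refine le_trans ?_ (rpow_add_mul_rpow_rpow_mul_le S.conj ha (by positivity) hr)
  gcongr
  exact (S.sum_integral_derivOsc_rpow_le h hn hB h_int).trans (by gcongr)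

lemma sum_integral_deriv_sub_mul_gridIncr_le (S : SensitivitySetup T p q μ F DF)
    (h : PlanBound T p μ π r) (hn : 0 < n) {a : ℝ} (ha : 0 ≤ a)
    (h_time : T / n * ∑ k ∈ Finset.range n, ∑ i, ∫ ω : ContPath T d,
      |DF ω.1 (grid T n k) i - DF ω.1 (grid T n (k + 1)) i| ^ q ∂μ ≤ a ^ q) :
    ∑ k ∈ Finset.range n, ∑ i, ∫ z, |DF z.1.1 (grid T n k) i - DF z.1.1 (grid T n (k + 1)) i| *
      |gridIncr T n z k i| ∂π ≤ a * r := by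
  have hT := S.pos
  have hq := S.conj.symm.pos
  have h_mem {k : ℕ} (hk : k < n) : grid T n k ∈ Icc 0 T ∧ grid T n (k + 1) ∈ Icc 0 T :=
    ⟨grid_mem_Icc hT hn hk.le, grid_mem_Icc hT hn hk⟩
  refine (h.sum_integral_abs_mul_gridIncr_le hT S.conj hn
    (A := fun k i z => DF z.1.1 (grid T n k) i - DF z.1.1 (grid T n (k + 1)) i)
    fun k hk i => S.memLp_deriv_fst_sub h (h_mem hk).1 (h_mem hk).2 i).trans ?_
  refine mul_le_mul_of_nonneg_right ?_ h.nonneg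
  rw [one_div, Real.rpow_inv_le_iff_of_pos (mul_nonneg (by positivity) (Finset.sum_nonneg fun k _ =>
    Finset.sum_nonneg fun i _ => integral_nonneg fun z => by positivity)) ha hq]
  refine le_trans (le_of_eq ?_) h_time
  congr 1
  refine Finset.sum_congr rfl fun k hk => Finset.sum_congr rfl fun i _ => ?_
  have h_mem := h_mem (Finset.mem_range.1 hk)
  exact h.integral_fst (((S.memLp_deriv_apply h_mem.1 i).sub
    (S.memLp_deriv_apply h_mem.2 i)).aestronglyMeasurable.norm.aemeasurable.pow_const
      q).aestronglyMeasurable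

lemma exists_eventually_abs_integral_gridTransport_sub_le
    (S : SensitivitySetup T p q μ F DF) {ε : ℝ} (hε : 0 < ε) :
    ∃ B : ℝ, 0 ≤ B ∧ ∀ᶠ n : ℕ in atTop,
      ∀ (π : Measure (ContPath T d × ContPath T d)) (r : ℝ), PlanBound T p μ π r →
      |∫ z, F (gridTransport T n z) ∂π - ∫ ω, F ω.1 ∂μ - ∑ k ∈ Finset.range n, ∑ i,
        ∫ z, DF z.1.1 (grid T n (k + 1)) i * gridIncr T n z k i ∂π| ≤ ε * r + B * r ^ p := by
  have hT := S.pos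
  have hq := S.conj.symm.pos
  have h_mod := S.tendsto_sum_integral_stepModulus.const_mul (d : ℝ)
  rw [mul_zero] at h_mod
  obtain ⟨P, hP, Q, hQ, h_space⟩ := eventually_prod_iff.1
    (h_mod.eventually (gt_mem_nhds (show 0 < (ε / 2) ^ q by positivity)))
  obtain ⟨B, hB_space, hB_int, hB_le, hB⟩ := (hQ.and (S.eventually_integrable_stepModulus.and
    (S.eventually_norm_deriv_sub_rpow_le_stepModulus.and (eventually_ge_atTop 0)))).exists
  have h_time := S.tendsto_sum_deriv_sub (eventually_gt_atTop 0) (u := fun n k => grid T n k)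
    (u' := fun n k => grid T n (k + 1)) ((eventually_gt_atTop 0).mono fun n hn k hk =>
      ⟨grid_mem_Icc hT hn hk.le, grid_mem_Icc hT hn hk⟩)
    (fun t ht => tendsto_grid_gridIdx hT ht.1.le) fun t ht => tendsto_grid_gridIdx_succ hT ht.1.le
  refine ⟨(d * T ^ p * B) ^ (1 / q), by positivity, ?_⟩
  filter_upwards [hP, h_time.eventually (gt_mem_nhds (show 0 < (ε / 2) ^ q by positivity)),
    eventually_gt_atTop 0] with n hn_space hn_time hn π r h
  have h_expand := S.abs_integral_functional_gridTransport_sub_le h hn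
    (fun k hk => S.memLp_derivOsc h hn hB hk.le (hB_int hn _ (grid_mem_Icc hT hn hk.le)))
    fun k hk z V hV => (norm_deriv_sub_le_derivOsc hq hB S.conj.nonneg
      (hB_le hn _ (grid_mem_Icc hT hn hk.le) z.1 V) hV).trans (le_abs_self _)
  have h_osc := S.sum_integral_derivOsc_mul_gridIncr_le h hn hB (by positivity)
    (fun k hk => hB_int hn _ (grid_mem_Icc hT hn hk.le)) (h_space hn_space hB_space).le
  have h_shift := S.sum_integral_deriv_sub_mul_gridIncr_le h hn (by positivity) hn_time.le
  linarith

end SensitivitySetup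

lemma mul_indicator_one_eq {Ω : Type*} (A : Set Ω) (φ : Ω → ℝ) :
    (fun x => φ x * A.indicator (fun _ => (1 : ℝ)) x) = A.indicator φ := by
  ext x
  by_cases hx : x ∈ A <;> simp [hx]

section CondIndep

variable {Ω : Type*} {m m' m₁ m₂ : MeasurableSpace Ω} [mΩ : MeasurableSpace Ω] {π : Measure Ω}
  [IsFiniteMeasure π]

lemma integral_mul_condExp_eq (hm : m ≤ mΩ) {f g : Ω → ℝ} (hg : StronglyMeasurable[m] g)
    (hgf : Integrable (fun x => g x * f x) π) (hf : Integrable f π) :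
    ∫ x, g x * (π[f | m]) x ∂π = ∫ x, g x * f x ∂π := by
  rw [← integral_condExp hm (f := fun x => g x * f x)]
  exact (integral_congr_ae (condExp_mul_of_stronglyMeasurable_left hg hgf hf)).symm

lemma integral_mul_eq_zero_of_condExp_eq_zero (hm : m ≤ mΩ) {f g : Ω → ℝ}
    (hg : StronglyMeasurable[m] g) (hgf : Integrable (fun x => g x * f x) π)
    (hf : Integrable f π) (h : π[f | m] =ᵐ[π] 0) : ∫ x, g x * f x ∂π = 0 := by
  rw [← integral_mul_condExp_eq hm hg hgf hf]
  exact integral_eq_zero_of_ae (h.mono fun x hx => by simp [hx])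

lemma CondIndepOn.condExp_indicator_eq (h : CondIndepOn π m' m₁ m₂) (h₁ : m₁ ≤ mΩ)
    (h₂ : m₂ ≤ mΩ) (h' : m' ≤ m₂) {A : Set Ω} (hA : MeasurableSet[m₁] A) :
    π[A.indicator (fun _ => (1 : ℝ)) | m'] =ᵐ[π] π[A.indicator (fun _ => (1 : ℝ)) | m₂] := by
  have h_int {B : Set Ω} (hB : MeasurableSet B) : Integrable (B.indicator fun _ => (1 : ℝ)) π :=
    (integrable_const 1).indicator hB
  refine ae_eq_condExp_of_forall_setIntegral_eq h₂ (h_int (h₁ A hA))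
    (fun s _ _ => integrable_condExp.integrableOn) (fun B hB _ => ?_)
    (stronglyMeasurable_condExp.mono h').aestronglyMeasurable
  have hB' := h₂ B hB
  set P := π[A.indicator (fun _ => (1 : ℝ)) | m']
  calc ∫ x in B, P x ∂π
      = ∫ x, P x * B.indicator (fun _ => (1 : ℝ)) x ∂π := by
        rw [mul_indicator_one_eq, integral_indicator hB']
    _ = ∫ x, P x * (π[B.indicator (fun _ => (1 : ℝ)) | m']) x ∂π := by
        refine (integral_mul_condExp_eq (h'.trans h₂) stronglyMeasurable_condExp ?_
          (h_int hB')).symm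
        rw [mul_indicator_one_eq]
        exact integrable_condExp.indicator hB'
    _ = ∫ x, (A ∩ B).indicator (fun _ => (1 : ℝ)) x ∂π := by
        rw [← integral_condExp (h'.trans h₂) (f := (A ∩ B).indicator _)]
        exact (integral_congr_ae (h A B hA hB)).symm
    _ = ∫ x in B, A.indicator (fun _ => (1 : ℝ)) x ∂π := by
        rw [inter_comm, ← indicator_indicator, integral_indicator hB']

lemma CondIndepOn.condExp_eq_zero (h : CondIndepOn π m' m₁ m₂) (h₁ : m₁ ≤ mΩ) (h₂ : m₂ ≤ mΩ)
    (h' : m' ≤ m₂) {N : Ω → ℝ} (hN : StronglyMeasurable[m₂] N) (hN_int : Integrable N π)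
    (hN_zero : π[N | m'] =ᵐ[π] 0) : π[N | m₁] =ᵐ[π] 0 := by
  refine (ae_eq_condExp_of_forall_setIntegral_eq h₁ hN_int (fun s _ _ => integrableOn_zero)
    (fun A hA _ => ?_) aestronglyMeasurable_zero).symm
  have hA' := h₁ A hA
  have h_bdd : ∀ᵐ x ∂π, ‖(π[A.indicator (fun _ => (1 : ℝ)) | m']) x‖ ≤ (1 : ℝ) :=
    ae_bdd_abs_condExp_of_ae_bdd_abs (ae_of_all _ fun x => by by_cases hx : x ∈ A <;> simp [hx])
  symm
  calc ∫ x in A, N x ∂π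
      = ∫ x, N x * A.indicator (fun _ => (1 : ℝ)) x ∂π := by
        rw [mul_indicator_one_eq, integral_indicator hA']
    _ = ∫ x, N x * (π[A.indicator (fun _ => (1 : ℝ)) | m₂]) x ∂π := by
        refine (integral_mul_condExp_eq h₂ hN ?_ ((integrable_const 1).indicator hA')).symm
        rw [mul_indicator_one_eq]
        exact hN_int.indicator hA'
    _ = ∫ x, (π[A.indicator (fun _ => (1 : ℝ)) | m']) x * N x ∂π :=
        integral_congr_ae ((h.condExp_indicator_eq h₁ h₂ h' hA).mono fun x hx => by
          simp only [hx, mul_comm])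
    _ = 0 := integral_mul_eq_zero_of_condExp_eq_zero (h'.trans h₂) stronglyMeasurable_condExp
        (hN_int.bdd_mul integrable_condExp.1 h_bdd) hN_int hN_zero
    _ = ∫ x in A, (0 : Ω → ℝ) x ∂π := by simp

end CondIndep

lemma condExp_comp_comap_eq_zero {Ω Ω' : Type*} {m : MeasurableSpace Ω'} [MeasurableSpace Ω]
    [mΩ' : MeasurableSpace Ω'] {π : Measure Ω} {μ : Measure Ω'} [IsFiniteMeasure π]
    {g : Ω → Ω'} (hg : MeasurePreserving g π μ) (hm : m ≤ mΩ') {N : Ω' → ℝ}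
    (hN : Integrable N μ) (hN_zero : μ[N | m] =ᵐ[μ] 0) :
    π[fun z => N (g z) | m.comap g] =ᵐ[π] 0 := by
  have : IsFiniteMeasure μ := hg.map_eq ▸ inferInstance
  refine (ae_eq_condExp_of_forall_setIntegral_eq
    ((MeasurableSpace.comap_mono hm).trans hg.measurable.comap_le)
    (hg.integrable_comp_of_integrable hN) (fun s _ _ => integrableOn_zero) ?_
    aestronglyMeasurable_zero).symm
  rintro _ ⟨B, hB, rfl⟩ -
  have hN_meas : AEStronglyMeasurable N (π.map g) := hg.map_eq.symm ▸ hN.1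
  symm
  calc ∫ z in g ⁻¹' B, (N ∘ g) z ∂π
      = ∫ ω in B, N ω ∂μ := by
        rw [← hg.map_eq, setIntegral_map (hm B hB) hN_meas hg.aemeasurable]
        rfl
    _ = ∫ ω in B, (μ[N | m]) ω ∂μ := (setIntegral_condExp hm hN hB).symm
    _ = 0 := integral_eq_zero_of_ae (ae_restrict_of_ae hN_zero)
    _ = ∫ z in g ⁻¹' B, (0 : Ω → ℝ) z ∂π := by simp

lemma measurable_eval_FilC {T : ℝ} {d : ℕ} {s t : ℝ} (hs : s ∈ Icc 0 T) (hst : s ≤ t)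
    (i : Fin d) : Measurable[FilC T d t] fun ω : ContPath T d => ω.1 s i := by
  have h_eval : Measurable[evalSigma T d t] fun ω : ContPath T d => ω.1 s :=
    Measurable.of_comap_le (le_iSup (fun r : {r : ℝ // 0 ≤ r ∧ r ≤ T ∧ r ≤ t} =>
      MeasurableSpace.comap (fun ω : ContPath T d => ω.1 r.1) inferInstance)
        ⟨s, hs.1, hs.2, hst⟩)
  exact ((measurable_pi_apply i).comp h_eval).mono (evalSigma_le_FilC t) le_rfl

namespace IsCausalStarC

variable {T p q : ℝ} {d : ℕ} {μ : Measure (ContPath T d)}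
  {π : Measure (ContPath T d × ContPath T d)} {t : ℝ}

lemma measurePreserving_fst (h : IsCausalStarC T d μ π) : MeasurePreserving Prod.fst π μ :=
  ⟨measurable_fst, h.1⟩

variable [IsFiniteMeasure π]

lemma condExp_comap_snd_eq_zero (h : IsCausalStarC T d μ π) (ht : t ∈ Icc 0 T)
    {N : ContPath T d → ℝ} (hN_meas : Measurable N) (hN : Integrable N μ)
    (hN_zero : μ[N | FilC T d t] =ᵐ[μ] 0) :
    π[fun z => N z.1 | (FilC T d t).comap Prod.snd] =ᵐ[π] 0 := by
  refine (h.2 t ht).condExp_eq_zero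
    ((MeasurableSpace.comap_mono (FilC_le t)).trans measurable_snd.comap_le)
    measurable_fst.comap_le (MeasurableSpace.comap_mono (FilC_le t)) ?_
    (h.measurePreserving_fst.integrable_comp_of_integrable hN)
    (condExp_comp_comap_eq_zero h.measurePreserving_fst (FilC_le t) hN hN_zero)
  exact Measurable.stronglyMeasurable (hN_meas.comp (comap_measurable Prod.fst))

lemma integral_mul_eq_zero (h : IsCausalStarC T d μ π) (hpq : p.HolderConjugate q)
    (ht : t ∈ Icc 0 T) {N : ContPath T d → ℝ} (hN_meas : Measurable N)
    (hN : MemLp N (ENNReal.ofReal q) μ) (hN_zero : μ[N | FilC T d t] =ᵐ[μ] 0)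
    {ζ ξ : ContPath T d → ℝ} (hζ : Measurable[FilC T d t] ζ) (hξ : Measurable[FilC T d t] ξ)
    (hζp : MemLp (fun z => ζ z.1) (ENNReal.ofReal p) π)
    (hξp : MemLp (fun z => ξ z.2) (ENNReal.ofReal p) π) :
    ∫ z, (ζ z.1 + ξ z.2) * N z.1 ∂π = 0 := by
  have : IsFiniteMeasure μ := h.1 ▸ inferInstance
  have hNπ : MemLp (fun z : ContPath T d × ContPath T d => N z.1) (ENNReal.ofReal q) π :=
    hN.comp_measurePreserving h.measurePreserving_fst
  have hq : 1 ≤ ENNReal.ofReal q := ENNReal.one_le_ofReal.2 hpq.symm.lt.le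
  have hN_int := hN.integrable hq
  have hNπ_int := hNπ.integrable hq
  have hζN := integrable_mul_of_memLp hpq hζp hNπ
  have hξN := integrable_mul_of_memLp hpq hξp hNπ
  have h_fst : ∫ z, ζ z.1 * N z.1 ∂π = 0 := by
    refine integral_mul_eq_zero_of_condExp_eq_zero
      ((MeasurableSpace.comap_mono (FilC_le t)).trans measurable_fst.comap_le) ?_ hζN hNπ_int
      (condExp_comp_comap_eq_zero h.measurePreserving_fst (FilC_le t) hN_int hN_zero)
    exact Measurable.stronglyMeasurable (hζ.comp (comap_measurable Prod.fst))
  have h_snd : ∫ z, ξ z.2 * N z.1 ∂π = 0 := by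
    refine integral_mul_eq_zero_of_condExp_eq_zero
      ((MeasurableSpace.comap_mono (FilC_le t)).trans measurable_snd.comap_le) ?_ hξN hNπ_int
      (h.condExp_comap_snd_eq_zero ht hN_meas hN_int hN_zero)
    exact Measurable.stronglyMeasurable (hξ.comp (comap_measurable Prod.snd))
  simp_rw [add_mul]
  rw [integral_add hζN hξN, h_fst, h_snd, add_zero]

lemma integral_mul_eq_integral_condExp_mul (h : IsCausalStarC T d μ π)
    (hpq : p.HolderConjugate q) (ht : t ∈ Icc 0 T) {D : ContPath T d → ℝ} (hD_meas : Measurable D)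
    (hD : MemLp D (ENNReal.ofReal q) μ) {ζ ξ : ContPath T d → ℝ}
    (hζ : Measurable[FilC T d t] ζ) (hξ : Measurable[FilC T d t] ξ)
    (hζp : MemLp (fun z => ζ z.1) (ENNReal.ofReal p) π)
    (hξp : MemLp (fun z => ξ z.2) (ENNReal.ofReal p) π) :
    ∫ z, D z.1 * (ζ z.1 + ξ z.2) ∂π = ∫ z, (μ[D | FilC T d t]) z.1 * (ζ z.1 + ξ z.2) ∂π := by
  have : IsFiniteMeasure μ := h.1 ▸ inferInstance
  have hq : 1 ≤ ENNReal.ofReal q := ENNReal.one_le_ofReal.2 hpq.symm.lt.le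
  have hM : MemLp (μ[D | FilC T d t]) (ENNReal.ofReal q) μ := hD.condExp hq
  have h_zero : μ[D - μ[D | FilC T d t] | FilC T d t] =ᵐ[μ] 0 := by
    filter_upwards [condExp_sub (hD.integrable hq) integrable_condExp (FilC T d t),
      condExp_condExp_of_le (f := D) (μ := μ) le_rfl (FilC_le t)] with ω h_sub h_proj
    rw [h_sub, Pi.sub_apply, h_proj, sub_self, Pi.zero_apply]
  have h_meas : Measurable (D - μ[D | FilC T d t]) :=
    hD_meas.sub (stronglyMeasurable_condExp.measurable.mono (FilC_le t) le_rfl)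
  have h_orth := h.integral_mul_eq_zero hpq ht h_meas (hD.sub hM) h_zero hζ hξ hζp hξp
  have h_sum : MemLp (fun z => ζ z.1 + ξ z.2) (ENNReal.ofReal p) π := hζp.add hξp
  have h_int {E : ContPath T d → ℝ} (hE : MemLp E (ENNReal.ofReal q) μ) :
      Integrable (fun z => E z.1 * (ζ z.1 + ξ z.2)) π :=
    integrable_mul_of_memLp hpq.symm (hE.comp_measurePreserving h.measurePreserving_fst) h_sum
  rw [← sub_eq_zero, ← integral_sub (h_int hD) (h_int hM), ← h_orth]
  refine integral_congr_ae (ae_of_all _ fun z => ?_)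
  simp only [Pi.sub_apply]
  ring

end IsCausalStarC

/-- The `L^q` norm of the optional projection of the derivative, i.e. the slope of the value
function under the linear penalty. -/
def sensitivity (T q : ℝ) {d : ℕ} (μ : Measure (ContPath T d))
    (DF : (ℝ → Fin d → ℝ) → ℝ → Fin d → ℝ) : ℝ :=
  (∫ t in Ioo 0 T, condMoment q μ DF t) ^ (1 / q)

namespace SensitivitySetup

variable {T p q r : ℝ} {d n k : ℕ} {μ : Measure (ContPath T d)} {F : (ℝ → Fin d → ℝ) → ℝ}
  {DF : (ℝ → Fin d → ℝ) → ℝ → Fin d → ℝ} {π : Measure (ContPath T d × ContPath T d)}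

lemma memLp_eval (S : SensitivitySetup T p q μ F DF) {t : ℝ} (ht : t ∈ Icc 0 T) (i : Fin d) :
    MemLp (fun ω : ContPath T d => ω.1 t i) (ENNReal.ofReal p) μ := by
  have hp := S.conj.pos
  refine memLp_of_norm_rpow_le hp
    ((measurable_pi_apply i).comp (measurable_eval ht)).aestronglyMeasurable S.moment
    (ae_of_all _ fun ω => ?_)
  exact (Real.rpow_le_rpow (norm_nonneg _) (norm_le_pi_norm _ i) hp.le).trans
    (norm_rpow_le_pathMoment hp ω ht)

lemma integral_deriv_mul_gridIncr (S : SensitivitySetup T p q μ F DF) (h : PlanBound T p μ π r)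
    (hπ : IsCausalStarC T d μ π) (hk : k < n) (i : Fin d) :
    ∫ z, DF z.1.1 (grid T n (k + 1)) i * gridIncr T n z k i ∂π =
      ∫ z, (μ[fun ω : ContPath T d => DF ω.1 (grid T n (k + 1)) i |
        FilC T d (grid T n (k + 1))]) z.1 * gridIncr T n z k i ∂π := by
  have hT := S.pos
  have := h.prob
  have hn := Nat.zero_lt_of_lt hk
  have ht := grid_mem_Icc hT hn hk
  have hs := grid_mem_Icc hT hn hk.le
  have hst := grid_mono hT n k.le_succ
  let ζ : ContPath T d → ℝ := fun ω => ω.1 (grid T n k) i - ω.1 (grid T n (k + 1)) i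
  have hζ : Measurable[FilC T d (grid T n (k + 1))] ζ :=
    (measurable_eval_FilC hs hst i).sub (measurable_eval_FilC ht le_rfl i)
  have h_incr (z : ContPath T d × ContPath T d) : gridIncr T n z k i = ζ z.1 + (-ζ) z.2 := by
    simp only [gridIncr, gridDiff, ζ, Pi.sub_apply, Pi.neg_apply]
    ring
  have hζp : MemLp (fun z : ContPath T d × ContPath T d => ζ z.1) (ENNReal.ofReal p) π :=
    ((S.memLp_eval hs i).sub (S.memLp_eval ht i)).comp_measurePreserving h.measurePreserving_fst
  have hξp : MemLp (fun z : ContPath T d × ContPath T d => (-ζ) z.2) (ENNReal.ofReal p) π :=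
    ((h.memLp_gridIncr hT S.conj.lt hk i).sub hζp).ae_eq
      (ae_of_all _ fun z => by simp only [Pi.sub_apply, h_incr, add_sub_cancel_left])
  simp_rw [h_incr]
  exact hπ.integral_mul_eq_integral_condExp_mul S.conj ht
    ((measurable_pi_apply i).comp (S.measurable_deriv ht)) (S.memLp_deriv_apply ht i)
    hζ hζ.neg hζp hξp

lemma sum_integral_deriv_mul_gridIncr_le (S : SensitivitySetup T p q μ F DF)
    (h : PlanBound T p μ π r) (hπ : IsCausalStarC T d μ π) (hn : 0 < n) :
    ∑ k ∈ Finset.range n, ∑ i, ∫ z, DF z.1.1 (grid T n (k + 1)) i * gridIncr T n z k i ∂π ≤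
      (T / n * ∑ k ∈ Finset.range n, condMoment q μ DF (grid T n (k + 1))) ^ (1 / q) * r := by
  have hT := S.pos
  let A (k : ℕ) (i : Fin d) (z : ContPath T d × ContPath T d) : ℝ :=
    (μ[fun ω : ContPath T d => DF ω.1 (grid T n (k + 1)) i | FilC T d (grid T n (k + 1))]) z.1
  have hA : ∀ k < n, ∀ i, MemLp (A k i) (ENNReal.ofReal q) π := fun k hk i =>
    (S.memLp_condExp (grid_mem_Icc hT hn hk) i _).comp_measurePreserving h.measurePreserving_fst
  have h_transfer {g : ContPath T d → ℝ} (hg : AEStronglyMeasurable g μ) :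
      ∫ z, |g z.1| ^ q ∂π = ∫ ω, |g ω| ^ q ∂μ :=
    h.integral_fst (hg.norm.aemeasurable.pow_const q).aestronglyMeasurable
  have h_moment : ∑ k ∈ Finset.range n, ∑ i, ∫ z, |A k i z| ^ q ∂π =
      ∑ k ∈ Finset.range n, condMoment q μ DF (grid T n (k + 1)) := by
    simp only [A, condMoment]
    exact Finset.sum_congr rfl fun k _ => Finset.sum_congr rfl fun i _ =>
      h_transfer integrable_condExp.1
  rw [← h_moment]
  refine le_trans ?_ (h.sum_integral_abs_mul_gridIncr_le hT S.conj hn hA)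
  refine Finset.sum_le_sum fun k hk => Finset.sum_le_sum fun i _ => ?_
  rw [S.integral_deriv_mul_gridIncr h hπ (Finset.mem_range.1 hk) i]
  refine (le_abs_self _).trans (abs_integral_le_integral_abs.trans_eq ?_)
  simp only [abs_mul, A]

lemma tendsto_rpow_sum_condMoment (S : SensitivitySetup T p q μ F DF) {e : ℝ} (he : 0 ≤ e) :
    Tendsto (fun n : ℕ =>
      (T / n * ∑ k ∈ Finset.range n, condMoment q μ DF (grid T n (k + 1))) ^ e) atTop
        (𝓝 ((∫ t in Ioo 0 T, condMoment q μ DF t) ^ e)) :=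
  (S.tendsto_sum_condMoment (n := fun n => n) (eventually_gt_atTop 0)
    ((eventually_gt_atTop 0).mono fun _ hn _ hk => grid_mem_Icc S.pos hn hk)
    fun _ ht => tendsto_grid_gridIdx_succ S.pos ht.1.le).rpow_const (Or.inr he)

lemma exists_integral_sub_le (S : SensitivitySetup T p q μ F DF) {ε : ℝ} (hε : 0 < ε) :
    ∃ B : ℝ, 0 ≤ B ∧ ∀ (π : Measure (ContPath T d × ContPath T d)) (r : ℝ),
      PlanBound T p μ π r → IsCausalStarC T d μ π →
      ∫ z, F z.2.1 ∂π - ∫ ω, F ω.1 ∂μ ≤ (sensitivity T q μ DF + ε) * r + B * r ^ p := by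
  obtain ⟨B, hB, h_taylor⟩ := S.exists_eventually_abs_integral_gridTransport_sub_le (half_pos hε)
  refine ⟨B, hB, fun π r h hπ => ?_⟩
  have h_lim := (S.tendsto_integral_functional_gridTransport h).sub_const (∫ ω, F ω.1 ∂μ)
  have h_slope : ∀ᶠ n : ℕ in atTop,
      (T / n * ∑ k ∈ Finset.range n, condMoment q μ DF (grid T n (k + 1))) ^ (1 / q) <
        sensitivity T q μ DF + ε / 2 :=
    (S.tendsto_rpow_sum_condMoment (one_div_nonneg.2 S.conj.symm.nonneg)).eventually
      (gt_mem_nhds (lt_add_of_pos_right _ (half_pos hε)))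
  refine le_of_tendsto h_lim ?_
  filter_upwards [eventually_gt_atTop 0, h_taylor, h_slope] with n hn h_taylor h_slope
  have h_remainder := (abs_le.1 (h_taylor π r h)).2
  have h_linear := S.sum_integral_deriv_mul_gridIncr_le h hπ hn
  have h_slope_mul := mul_le_mul_of_nonneg_right h_slope.le h.nonneg
  linarith

end SensitivitySetup

/-- The piecewise linear path with slope `ζ j` on the `j`-th cell of the uniform grid. -/
def drift (T : ℝ) {d : ℕ} (n : ℕ) (ζ : ℕ → Fin d → ℝ) (t : ℝ) : Fin d → ℝ :=
  ∑ j ∈ Finset.range n, max 0 (min t (grid T n (j + 1)) - grid T n j) • ζ j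

/-- The density of `drift`. -/
def driftDensity (T : ℝ) {d : ℕ} (n : ℕ) (ζ : ℕ → Fin d → ℝ) (s : ℝ) : Fin d → ℝ :=
  ∑ j ∈ Finset.range n, (Ioc (grid T n j) (grid T n (j + 1))).indicator (fun _ => ζ j) s

section Drift

variable {T p : ℝ} {d n : ℕ}

lemma continuous_drift (ζ : ℕ → Fin d → ℝ) : Continuous (drift T n ζ) := by
  unfold drift
  fun_prop

lemma drift_zero (hT : 0 < T) (ζ : ℕ → Fin d → ℝ) : drift T n ζ 0 = 0 := by
  refine Finset.sum_eq_zero fun j _ => ?_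
  rw [max_eq_left, zero_smul]
  linarith [min_le_left 0 (grid T n (j + 1)), grid_nonneg hT n j]

lemma drift_grid_succ_sub (hT : 0 < T) {l k : ℕ} (hl : 0 < l) (hk : k < n * l)
    (ζ : ℕ → Fin d → ℝ) :
    drift T n ζ (grid T (n * l) (k + 1)) - drift T n ζ (grid T (n * l) k) =
      (T / (n * l : ℕ)) • ζ (k / l) := by
  have h_mono := grid_mono hT (n * l)
  have h_step := h_mono k.le_succ
  have h_le {j : ℕ} (hj : j ≤ k / l) : grid T n j ≤ grid T (n * l) k := by
    rw [← grid_mul_mul T hl n j]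
    exact h_mono ((Nat.le_div_iff_mul_le hl).1 hj)
  have h_ge {j : ℕ} (hj : k / l < j) : grid T (n * l) (k + 1) ≤ grid T n j := by
    rw [← grid_mul_mul T hl n j]
    exact h_mono (Nat.succ_le_of_lt ((Nat.div_lt_iff_lt_mul hl).1 hj))
  unfold drift
  rw [← Finset.sum_sub_distrib, Finset.sum_eq_single_of_mem (k / l)
    (Finset.mem_range.2 (Nat.div_lt_of_lt_mul (by rwa [mul_comm] at hk)))]
  · have h_lower := h_le (le_refl (k / l))
    have h_upper := h_ge (Nat.lt_succ_self (k / l))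
    rw [← sub_smul, min_eq_left h_upper, min_eq_left (h_step.trans h_upper),
      max_eq_right (by linarith), max_eq_right (by linarith), grid_succ]
    congr 1
    ring
  · intro j _ hj
    rcases lt_or_gt_of_ne hj with hj | hj
    · rw [min_eq_right (h_le hj), min_eq_right ((h_le hj).trans h_step), sub_self]
    · rw [max_eq_left, max_eq_left, sub_self]
      · exact sub_nonpos.2 ((min_le_left _ _).trans (h_step.trans (h_ge hj)))
      · exact sub_nonpos.2 ((min_le_left _ _).trans (h_ge hj))

lemma integral_driftDensity (hT : 0 < T) (ζ : ℕ → Fin d → ℝ) (t : ℝ) :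
    ∫ s in Ioc 0 t, driftDensity T n ζ s = drift T n ζ t := by
  unfold driftDensity drift
  rw [integral_finsetSum _ fun j _ => (integrable_const _).indicator measurableSet_Ioc]
  refine Finset.sum_congr rfl fun j _ => ?_
  rw [integral_indicator measurableSet_Ioc, Measure.restrict_restrict measurableSet_Ioc,
    setIntegral_const, Ioc_inter_Ioc, measureReal_def, Real.volume_Ioc, ENNReal.toReal_ofReal',
    sup_eq_left.2 (grid_nonneg hT n j), max_comm, inf_comm]

lemma driftDensity_of_mem (hT : 0 < T) {j : ℕ} (hj : j < n) {s : ℝ}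
    (hs : s ∈ Ioc (grid T n j) (grid T n (j + 1))) (ζ : ℕ → Fin d → ℝ) :
    driftDensity T n ζ s = ζ j := by
  unfold driftDensity
  rw [Finset.sum_eq_single_of_mem j (Finset.mem_range.2 hj), indicator_of_mem hs]
  refine fun k _ hk => indicator_of_notMem (fun hs' => ?_) _
  rcases lt_or_gt_of_ne hk with hk | hk
  · exact (hs'.2.trans (grid_mono hT n hk)).not_gt hs.1
  · exact (hs.2.trans (grid_mono hT n hk)).not_gt hs'.1

lemma ofReal_lpnorm_driftDensity_rpow_le (hT : 0 < T) (hp : 0 < p) (ζ : ℕ → Fin d → ℝ) (s : ℝ) :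
    ENNReal.ofReal (lpnorm p (driftDensity T n ζ s) ^ p) ≤
      ∑ j ∈ Finset.range n, (Ioc (grid T n j) (grid T n (j + 1))).indicator
        (fun _ => ENNReal.ofReal (∑ i, |ζ j i| ^ p)) s := by
  rw [lpnorm_rpow hp]
  by_cases hs : ∃ j ∈ Finset.range n, s ∈ Ioc (grid T n j) (grid T n (j + 1))
  · obtain ⟨j, hj, hs⟩ := hs
    rw [driftDensity_of_mem hT (Finset.mem_range.1 hj) hs]
    refine le_trans (le_of_eq ?_) (Finset.single_le_sum (fun _ _ => zero_le) hj)
    rw [indicator_of_mem hs]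
  · push Not at hs
    have h_zero : driftDensity T n ζ s = 0 :=
      Finset.sum_eq_zero fun j hj => indicator_of_notMem (hs j hj) _
    simp [h_zero, Real.zero_rpow hp.ne']

lemma hcost_le_of_sub_eq_drift (hT : 0 < T) (hp : 0 < p) (ζ : ℕ → Fin d → ℝ)
    {x y : ℝ → Fin d → ℝ} (h : ∀ t ∈ Icc 0 T, x t - y t = drift T n ζ t) :
    hcost T p x y ≤ ENNReal.ofReal (T / n * ∑ j ∈ Finset.range n, ∑ i, |ζ j i| ^ p) := by
  have h_cost : hcost T p x y ≤
      ∫⁻ t in Icc 0 T, ENNReal.ofReal (lpnorm p (driftDensity T n ζ t) ^ p) := by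
    refine sInf_le ⟨driftDensity T n ζ, ?_, fun t ht => ?_, rfl⟩
    · unfold driftDensity
      exact integrable_finsetSum _ fun j _ => (integrable_const _).indicator measurableSet_Ioc
    · rw [h t ht, integral_driftDensity hT]
  refine h_cost.trans
    ((lintegral_mono (ofReal_lpnorm_driftDensity_rpow_le hT hp ζ)).trans ?_)
  rw [lintegral_finsetSum _ fun j _ => measurable_const.indicator measurableSet_Ioc,
    Finset.mul_sum, ENNReal.ofReal_sum_of_nonneg fun j _ => by positivity]
  refine Finset.sum_le_sum fun j _ => ?_
  rw [lintegral_indicator measurableSet_Ioc, setLIntegral_const, mul_comm,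
    ENNReal.ofReal_mul (by positivity)]
  gcongr
  refine (Measure.restrict_apply_le _ _).trans ?_
  rw [Real.volume_Ioc, grid_succ, add_sub_cancel_left]

end Drift

/-- The path `ω` shifted by the piecewise linear path with slopes `-ζ j`. -/
def subDrift {T : ℝ} {d : ℕ} (hT : 0 < T) (n : ℕ) (ζ : ℕ → Fin d → ℝ) (ω : ContPath T d) :
    ContPath T d :=
  ⟨fun t => ω.1 t - drift T n ζ t, ω.2.1.sub (continuous_drift ζ).continuousOn, by
    simp [ω.2.2, drift_zero hT]⟩

/-- The law of `(X, Y)`, where `Y` is `X` minus the drift with the random slopes `ζ j`. -/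
def driftPlan {T : ℝ} {d : ℕ} (hT : 0 < T) (μ : Measure (ContPath T d)) (n : ℕ)
    (ζ : ℕ → ContPath T d → Fin d → ℝ) : Measure (ContPath T d × ContPath T d) :=
  μ.map fun ω => (ω, subDrift hT n (fun j => ζ j ω) ω)

lemma condIndepOn_of_ae_eq {Ω : Type*} {m' m₁ m₂ : MeasurableSpace Ω} [mΩ : MeasurableSpace Ω]
    {π : Measure Ω} [IsFiniteMeasure π] (h' : m' ≤ mΩ) (h₂ : m₂ ≤ mΩ)
    (h : ∀ A, MeasurableSet[m₁] A → ∃ A', MeasurableSet[m'] A' ∧ A =ᵐ[π] A') :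
    CondIndepOn π m' m₁ m₂ := by
  intro A B hA hB
  obtain ⟨A', hA', hAA'⟩ := h A hA
  have h_sm : StronglyMeasurable[m'] (A'.indicator fun _ => (1 : ℝ)) :=
    stronglyMeasurable_const.indicator hA'
  have h_condExp : (π[A.indicator (fun _ => (1 : ℝ)) | m']) =ᵐ[π]
      A'.indicator fun _ => (1 : ℝ) := by
    refine (condExp_congr_ae (indicator_ae_eq_of_ae_eq_set hAA')).trans ?_
    rw [condExp_of_stronglyMeasurable h' h_sm ((integrable_const 1).indicator (h' A' hA'))]
  have h_inter : (A ∩ B).indicator (fun _ => (1 : ℝ)) =ᵐ[π]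
      (A'.indicator fun _ => (1 : ℝ)) * B.indicator fun _ => (1 : ℝ) := by
    filter_upwards [indicator_ae_eq_of_ae_eq_set (f := fun _ => (1 : ℝ)) hAA'] with z hz
    rw [Pi.mul_apply, ← hz]
    by_cases hzA : z ∈ A <;> by_cases hzB : z ∈ B <;> simp [hzA, hzB]
  have h_pull := condExp_stronglyMeasurable_mul_of_bound h' h_sm
    ((integrable_const (μ := π) (1 : ℝ)).indicator (h₂ B hB)) 1
    (ae_of_all _ fun z => by by_cases hz : z ∈ A' <;> simp [hz])
  exact (condExp_congr_ae h_inter).trans (h_pull.trans (h_condExp.symm.mul EventuallyEq.rfl))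

section Adapted

variable {T p r : ℝ} {d n : ℕ} {hT : 0 < T} {ζ : ℕ → ContPath T d → Fin d → ℝ}
  {μ : Measure (ContPath T d)}

lemma FilC_le_evalSigma {s t : ℝ} (hst : s < t) (ht : t ≤ T) : FilC T d s ≤ evalSigma T d t := by
  unfold FilC
  rw [if_pos (hst.trans_le ht)]
  exact iInf_le_of_le ⟨t, hst, ht⟩ le_rfl

lemma measurable_subDrift_evalSigma (hζ : ∀ j < n, Measurable[FilC T d (grid T n j)] (ζ j))
    {s : ℝ} (hs : s ≤ T) :
    Measurable[evalSigma T d s, evalSigma T d s] fun ω => subDrift hT n (fun j => ζ j ω) ω := by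
  refine Measurable.of_le_map (iSup_le fun r => ?_)
  rw [MeasurableSpace.comap_le_iff_le_map, MeasurableSpace.map_comp]
  refine Measurable.le_map ?_
  have h_eval : Measurable[evalSigma T d s] fun ω : ContPath T d => ω.1 r.1 :=
    Measurable.of_comap_le (le_iSup (fun r : {r : ℝ // 0 ≤ r ∧ r ≤ T ∧ r ≤ s} =>
      MeasurableSpace.comap (fun ω : ContPath T d => ω.1 r.1) inferInstance) r)
  refine h_eval.sub (Finset.measurable_fun_sum _ fun j hj => ?_)
  by_cases hjs : grid T n j < s
  · have h_slope : Measurable[evalSigma T d s] (ζ j) :=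
      (hζ j (Finset.mem_range.1 hj)).mono (FilC_le_evalSigma hjs hs) le_rfl
    exact h_slope.const_smul (max 0 (min r.1 (grid T n (j + 1)) - grid T n j))
  · have h_zero : max 0 (min r.1 (grid T n (j + 1)) - grid T n j) = 0 :=
      max_eq_left (sub_nonpos.2 ((min_le_left _ _).trans (r.2.2.2.trans (not_lt.1 hjs))))
    simp only [h_zero, zero_smul]
    exact measurable_const

lemma measurable_subDrift (hζ : ∀ j < n, Measurable[FilC T d (grid T n j)] (ζ j)) :
    Measurable fun ω => subDrift hT n (fun j => ζ j ω) ω :=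
  measurable_subDrift_evalSigma hζ le_rfl

lemma measurable_subDrift_FilC (hζ : ∀ j < n, Measurable[FilC T d (grid T n j)] (ζ j)) (t : ℝ) :
    Measurable[FilC T d t, FilC T d t] fun ω => subDrift hT n (fun j => ζ j ω) ω := by
  by_cases ht : t < T
  · have h_FilC : FilC T d t = ⨅ s : {s : ℝ // t < s ∧ s ≤ T}, evalSigma T d s.1 := if_pos ht
    rw [h_FilC]
    intro A hA
    rw [MeasurableSpace.measurableSet_iInf] at hA ⊢
    exact fun s => measurable_subDrift_evalSigma hζ s.2.2 (hA s)
  · have h_FilC : FilC T d t = evalSigma T d T := if_neg ht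
    rw [h_FilC]
    exact measurable_subDrift_evalSigma hζ le_rfl

lemma isCausalStarC_map_prodMk [IsFiniteMeasure μ] {Y : ContPath T d → ContPath T d}
    (hY : Measurable Y) (hY_adapted : ∀ t, Measurable[FilC T d t, FilC T d t] Y) :
    IsCausalStarC T d μ (μ.map fun ω => (ω, Y ω)) := by
  have h_meas : Measurable fun ω => (ω, Y ω) := measurable_id.prodMk hY
  refine ⟨(Measure.map_map measurable_fst h_meas).trans Measure.map_id, fun t _ => ?_⟩
  have h_fst : (FilC T d t).comap Prod.fst ≤
      (inferInstance : MeasurableSpace (ContPath T d × ContPath T d)) :=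
    (MeasurableSpace.comap_mono (FilC_le t)).trans measurable_fst.comap_le
  refine condIndepOn_of_ae_eq h_fst measurable_fst.comap_le ?_
  rintro _ ⟨A, hA, rfl⟩
  refine ⟨Prod.fst ⁻¹' (Y ⁻¹' A), ⟨_, hY_adapted t hA, rfl⟩, ?_⟩
  have h_mem : ∀ᵐ z ∂μ.map fun ω => (ω, Y ω), z.2 ∈ A ↔ Y z.1 ∈ A := by
    have hA' := FilC_le t A hA
    exact (ae_map_iff h_meas.aemeasurable
      (MeasurableSet.iff (measurable_snd hA') ((hY.comp measurable_fst) hA'))).2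
      (ae_of_all _ fun ω => Iff.rfl)
  exact h_mem.mono fun z hz => propext hz

lemma isCausalStarC_driftPlan [IsFiniteMeasure μ]
    (hζ : ∀ j < n, Measurable[FilC T d (grid T n j)] (ζ j)) :
    IsCausalStarC T d μ (driftPlan hT μ n ζ) :=
  isCausalStarC_map_prodMk (measurable_subDrift hζ) (measurable_subDrift_FilC hζ)

lemma planBound_driftPlan [IsProbabilityMeasure μ]
    (hζ : ∀ j < n, Measurable[FilC T d (grid T n j)] (ζ j)) (hp : 0 < p) (hr : 0 ≤ r)
    (hζp : ∀ j < n, ∀ i, Integrable (fun ω => |ζ j ω i| ^ p) μ)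
    (h_cost : T / n * ∑ j ∈ Finset.range n, ∑ i, ∫ ω, |ζ j ω i| ^ p ∂μ ≤ r ^ p) :
    PlanBound T p μ (driftPlan hT μ n ζ) r := by
  have h_meas : Measurable fun ω => (ω, subDrift hT n (fun j => ζ j ω) ω) :=
    measurable_id.prodMk (measurable_subDrift hζ)
  refine ⟨Measure.isProbabilityMeasure_map h_meas.aemeasurable,
    (isCausalStarC_driftPlan hζ).1, hr, ?_⟩
  have h_int (j : ℕ) (hj : j ∈ Finset.range n) : Integrable (fun ω => ∑ i, |ζ j ω i| ^ p) μ :=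
    integrable_finsetSum _ fun i _ => hζp j (Finset.mem_range.1 hj) i
  calc ∫⁻ z, hcost T p z.1.1 z.2.1 ∂driftPlan hT μ n ζ
      ≤ ∫⁻ ω, hcost T p ω.1 (subDrift hT n (fun j => ζ j ω) ω).1 ∂μ := lintegral_map_le _ _
    _ ≤ ∫⁻ ω, ENNReal.ofReal (T / n * ∑ j ∈ Finset.range n, ∑ i, |ζ j ω i| ^ p) ∂μ :=
        lintegral_mono fun ω => hcost_le_of_sub_eq_drift hT hp (fun j => ζ j ω)
          fun t _ => by simp [subDrift]
    _ = ENNReal.ofReal (∫ ω, T / n * ∑ j ∈ Finset.range n, ∑ i, |ζ j ω i| ^ p ∂μ) :=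
        (ofReal_integral_eq_lintegral_ofReal ((integrable_finsetSum _ h_int).const_mul _)
          (ae_of_all _ fun ω => by positivity)).symm
    _ = ENNReal.ofReal (T / n * ∑ j ∈ Finset.range n, ∑ i, ∫ ω, |ζ j ω i| ^ p ∂μ) := by
        rw [integral_const_mul, integral_finsetSum _ h_int]
        congr 2
        exact Finset.sum_congr rfl fun j hj =>
          integral_finsetSum _ fun i _ => hζp j (Finset.mem_range.1 hj) i
    _ ≤ ENNReal.ofReal (r ^ p) := ENNReal.ofReal_le_ofReal h_cost

end Adapted

lemma sum_range_mul_div {M : Type*} [AddCommMonoid M] (n l : ℕ) (g : ℕ → M) :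
    ∑ k ∈ Finset.range (n * l), g (k / l) = l • ∑ j ∈ Finset.range n, g j := by
  induction n with
  | zero => simp
  | succ n ih =>
    have h_block : ∀ x ∈ Finset.range l, g ((n * l + x) / l) = g n := fun x hx => by
      have hx := Finset.mem_range.1 hx
      rw [mul_comm, Nat.mul_add_div (Nat.zero_lt_of_lt hx), Nat.div_eq_of_lt hx, add_zero]
    rw [Nat.succ_mul, Finset.sum_range_add, ih, Finset.sum_range_succ, smul_add,
      Finset.sum_congr rfl h_block, Finset.sum_const, Finset.card_range]

lemma integrable_abs_rpow_of_memLp {Ω : Type*} [MeasurableSpace Ω] {μ : Measure Ω} {p : ℝ}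
    (hp : 0 < p) {f : Ω → ℝ} (hf : MemLp f (ENNReal.ofReal p) μ) :
    Integrable (fun ω => |f ω| ^ p) μ := by
  simpa only [ENNReal.toReal_ofReal hp.le, Real.norm_eq_abs] using
    hf.integrable_norm_rpow (ENNReal.ofReal_pos.2 hp).ne' ENNReal.ofReal_ne_top

lemma exists_scale {p q s u : ℝ} (hpq : p.HolderConjugate q) (hs : 0 ≤ s) (hu : 0 ≤ u) :
    ∃ c : ℝ, 0 ≤ c ∧ c ^ p * s ≤ u ^ p ∧ c * s = s ^ (1 / q) * u := by
  have hp := hpq.pos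
  refine ⟨u * s ^ (-(1 / p)), by positivity, ?_, ?_⟩
  · rw [Real.mul_rpow hu (by positivity), ← Real.rpow_mul hs, mul_assoc,
      show -(1 / p) * p = -1 by field_simp, Real.rpow_neg_one]
    exact mul_le_of_le_one_right (by positivity) inv_mul_le_one
  · rcases hs.eq_or_lt with rfl | hs
    · rw [Real.zero_rpow (one_div_pos.2 hpq.symm.pos).ne', mul_zero, zero_mul]
    · have h_exponent : -(1 / p) + 1 = 1 / q := by
        rw [one_div, one_div, ← hpq.inv_add_inv_eq_one, neg_add_cancel_left]
      rw [mul_assoc, ← Real.rpow_add_one hs.ne', h_exponent, mul_comm]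

section DualSlope

/-- The duality map `x ↦ sign x * |x| ^ (q - 1)` of `ℝ`, at which Hölder's inequality with
exponent `q` is attained. -/
def dualMap (q x : ℝ) : ℝ := x * |x| ^ (q - 2)

lemma dualMap_mul_self {q : ℝ} (hq : 0 < q) (x : ℝ) : dualMap q x * x = |x| ^ q := by
  rcases eq_or_ne x 0 with rfl | hx
  · rw [mul_zero, abs_zero, Real.zero_rpow hq.ne']
  · calc dualMap q x * x = |x| ^ (2 : ℝ) * |x| ^ (q - 2) := by
          rw [dualMap, Real.rpow_two, sq_abs]; ring
      _ = |x| ^ q := by rw [← Real.rpow_add (abs_pos.2 hx), add_sub_cancel]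

lemma abs_dualMap_rpow {p q : ℝ} (hpq : p.HolderConjugate q) (x : ℝ) :
    |dualMap q x| ^ p = |x| ^ q := by
  rcases eq_or_ne x 0 with rfl | hx
  · simp [dualMap, Real.zero_rpow hpq.pos.ne', Real.zero_rpow hpq.symm.pos.ne']
  · have h_pos : 0 < |x| := abs_pos.2 hx
    have h_abs : |dualMap q x| = |x| ^ (q - 1) := by
      rw [dualMap, abs_mul, abs_of_pos (Real.rpow_pos_of_pos h_pos _),
        ← Real.rpow_one_add' h_pos.le (by linarith [hpq.symm.lt])]
      ring_nf
    rw [h_abs, ← Real.rpow_mul h_pos.le, hpq.symm.sub_one_mul_conj]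

lemma measurable_dualMap (q : ℝ) : Measurable (dualMap q) := by
  unfold dualMap
  fun_prop

/-- The optimal slope at time `t`: the duality map applied to each coordinate of the optional
projection of the derivative. -/
def dualSlope (q : ℝ) {T : ℝ} {d : ℕ} (μ : Measure (ContPath T d))
    (DF : (ℝ → Fin d → ℝ) → ℝ → Fin d → ℝ) (t : ℝ) (ω : ContPath T d) : Fin d → ℝ :=
  fun i => dualMap q ((μ[fun ω : ContPath T d => DF ω.1 t i | FilC T d t]) ω)

variable {T p q : ℝ} {d : ℕ} {μ : Measure (ContPath T d)} {F : (ℝ → Fin d → ℝ) → ℝ}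
  {DF : (ℝ → Fin d → ℝ) → ℝ → Fin d → ℝ}

lemma measurable_dualSlope_apply (t : ℝ) (i : Fin d) :
    Measurable[FilC T d t] fun ω => dualSlope q μ DF t ω i :=
  (measurable_dualMap q).comp stronglyMeasurable_condExp.measurable

lemma measurable_dualSlope (t : ℝ) : Measurable[FilC T d t] (dualSlope q μ DF t) :=
  (@measurable_pi_iff _ _ _ (FilC T d t) _ _).2 (measurable_dualSlope_apply t)

lemma sum_integral_abs_dualSlope_rpow (hpq : p.HolderConjugate q) (t : ℝ) :
    ∑ i, ∫ ω, |dualSlope q μ DF t ω i| ^ p ∂μ = condMoment q μ DF t := by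
  simp only [dualSlope, abs_dualMap_rpow hpq, condMoment]

namespace SensitivitySetup

lemma memLp_dualSlope (S : SensitivitySetup T p q μ F DF) {t : ℝ} (ht : t ∈ Icc 0 T)
    (i : Fin d) : MemLp (fun ω => dualSlope q μ DF t ω i) (ENNReal.ofReal p) μ := by
  refine memLp_of_norm_rpow_le S.conj.pos
    ((measurable_dualSlope_apply t i).mono (FilC_le t) le_rfl).aestronglyMeasurable
    (integrable_abs_rpow_of_memLp S.conj.symm.pos (S.memLp_condExp ht i t))
    (ae_of_all _ fun ω => (abs_dualMap_rpow S.conj _).le)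

lemma sum_integral_deriv_mul_dualSlope (S : SensitivitySetup T p q μ F DF) {t : ℝ}
    (ht : t ∈ Icc 0 T) :
    ∑ i, ∫ ω, DF ω.1 t i * dualSlope q μ DF t ω i ∂μ = condMoment q μ DF t := by
  have := S.prob
  refine Finset.sum_congr rfl fun i _ => ?_
  have h_condExp := integral_mul_condExp_eq (FilC_le t)
    (measurable_dualSlope_apply (q := q) (μ := μ) (DF := DF) t i).stronglyMeasurable
    (integrable_mul_of_memLp S.conj (S.memLp_dualSlope ht i) (S.memLp_deriv_apply ht i))
    (S.integrable_deriv_apply ht i)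
  simp only [mul_comm (DF _ _ _)]
  rw [← h_condExp]
  simp only [dualSlope, dualMap_mul_self S.conj.symm.pos]

lemma exists_slopes (S : SensitivitySetup T p q μ F DF) {n : ℕ} (hn : 0 < n) {u : ℝ}
    (hu : 0 ≤ u) : ∃ ξ : ℕ → ContPath T d → Fin d → ℝ,
      (∀ j, Measurable[FilC T d (grid T n j)] (ξ j)) ∧
      (∀ j < n, ∀ i, MemLp (fun ω => ξ j ω i) (ENNReal.ofReal p) μ) ∧
      T / n * ∑ j ∈ Finset.range n, ∑ i, ∫ ω, |ξ j ω i| ^ p ∂μ ≤ u ^ p ∧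
      T / n * ∑ j ∈ Finset.range n, ∑ i, ∫ ω, DF ω.1 (grid T n j) i * ξ j ω i ∂μ =
        (T / n * ∑ j ∈ Finset.range n, condMoment q μ DF (grid T n j)) ^ (1 / q) * u := by
  have hT := S.pos
  have h_grid : ∀ j < n, grid T n j ∈ Icc 0 T := fun j hj => grid_mem_Icc hT hn hj.le
  obtain ⟨c, hc, h_cost, h_gain⟩ := exists_scale S.conj
    (s := T / n * ∑ j ∈ Finset.range n, condMoment q μ DF (grid T n j))
    (mul_nonneg (by positivity) (Finset.sum_nonneg fun j _ => condMoment_nonneg _)) hu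
  refine ⟨fun j => c • dualSlope q μ DF (grid T n j),
    fun j => (measurable_dualSlope _).const_smul c,
    fun j hj i => (S.memLp_dualSlope (h_grid j hj) i).const_mul c, ?_, ?_⟩
  · simp only [Pi.smul_apply, smul_eq_mul, abs_mul, abs_of_nonneg hc,
      Real.mul_rpow hc (abs_nonneg _), integral_const_mul, ← Finset.mul_sum,
      sum_integral_abs_dualSlope_rpow S.conj]
    rwa [mul_left_comm]
  · simp only [Pi.smul_apply, smul_eq_mul, mul_left_comm _ c, integral_const_mul,
      ← Finset.mul_sum]
    rw [← h_gain, Finset.sum_congr rfl fun j hj =>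
      S.sum_integral_deriv_mul_dualSlope (h_grid j (Finset.mem_range.1 hj))]

end SensitivitySetup

end DualSlope

lemma sub_le_mul_sum_integral_mul {Ω : Type*} [MeasurableSpace Ω] {π : Measure Ω} {p q : ℝ}
    (hpq : q.HolderConjugate p) {ι : Type*} (s : Finset ι) {A A' ξ : ι → Ω → ℝ}
    (hA : ∀ j ∈ s, MemLp (A j) (ENNReal.ofReal q) π)
    (hA' : ∀ j ∈ s, MemLp (A' j) (ENNReal.ofReal q) π)
    (hξ : ∀ j ∈ s, MemLp (ξ j) (ENNReal.ofReal p) π) {w r : ℝ} (hw : 0 < w) (hr : 0 ≤ r)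
    (hξr : w * ∑ j ∈ s, ∫ z, |ξ j z| ^ p ∂π ≤ r ^ p) :
    w * ∑ j ∈ s, ∫ z, A' j z * ξ j z ∂π -
        (w * ∑ j ∈ s, ∫ z, |A j z - A' j z| ^ q ∂π) ^ (1 / q) * r ≤
      w * ∑ j ∈ s, ∫ z, A j z * ξ j z ∂π := by
  have h_scaled : ∑ j ∈ s, ∫ z, |w * ξ j z| ^ p ∂π ≤ w ^ (p - 1) * r ^ p := by
    simp only [abs_mul, abs_of_pos hw, Real.mul_rpow hw.le (abs_nonneg _), integral_const_mul,
      ← Finset.mul_sum]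
    rw [← sub_add_cancel p 1, Real.rpow_add_one hw.ne', add_sub_cancel_right, mul_assoc,
      sub_add_cancel]
    gcongr
  have h_holder := sum_integral_mul_le_of_le hpq s (fun j hj => (hA' j hj).sub (hA j hj))
    (fun j hj => (hξ j hj).const_mul w) hw hr h_scaled
  have h_term : ∀ j ∈ s, w * ∫ z, A' j z * ξ j z ∂π - w * ∫ z, A j z * ξ j z ∂π ≤
      ∫ z, |A' j z - A j z| * |w * ξ j z| ∂π := fun j hj => by
    rw [← mul_sub, ← integral_sub (integrable_mul_of_memLp hpq (hA' j hj) (hξ j hj))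
      (integrable_mul_of_memLp hpq (hA j hj) (hξ j hj)), ← integral_const_mul]
    refine (le_abs_self _).trans (abs_integral_le_integral_abs.trans_eq ?_)
    simp only [← sub_mul, ← abs_mul, mul_left_comm]
  have h_sum := (Finset.sum_le_sum h_term).trans h_holder
  simp only [Pi.sub_apply, abs_sub_comm (A' _ _), Finset.sum_sub_distrib, ← Finset.mul_sum]
    at h_sum
  linarith

section Refinement

variable {T p q u : ℝ} {d n l : ℕ} {μ : Measure (ContPath T d)} {F : (ℝ → Fin d → ℝ) → ℝ}
  {DF : (ℝ → Fin d → ℝ) → ℝ → Fin d → ℝ}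

lemma mul_sum_range_mul_div (T : ℝ) (n : ℕ) (hl : 0 < l) (g : ℕ → ℝ) :
    T / (n * l : ℕ) * ∑ k ∈ Finset.range (n * l), g (k / l) =
      T / n * ∑ j ∈ Finset.range n, g j := by
  rw [sum_range_mul_div, nsmul_eq_mul]
  push_cast
  field_simp

lemma gridIncr_prodMk_subDrift {hT : 0 < T} (hl : 0 < l) {k : ℕ} (hk : k < n * l)
    (ζ : ℕ → Fin d → ℝ) (ω : ContPath T d) :
    gridIncr T (n * l) (ω, subDrift hT n ζ ω) k = -((T / (n * l : ℕ)) • ζ (k / l)) := by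
  simp only [gridIncr, gridDiff, subDrift, sub_sub_cancel, ← drift_grid_succ_sub hT hl hk,
    neg_sub]

lemma integral_mul_gridIncr_driftPlan {hT : 0 < T} {ζ : ℕ → ContPath T d → Fin d → ℝ}
    (hζ : ∀ j < n, Measurable[FilC T d (grid T n j)] (ζ j)) (hl : 0 < l) {k : ℕ}
    (hk : k < n * l) (i : Fin d) {g : ContPath T d → ℝ} (hg : Measurable g) :
    ∫ z, g z.1 * gridIncr T (n * l) z k i ∂driftPlan hT μ n ζ =
      -(T / (n * l : ℕ) * ∫ ω, g ω * ζ (k / l) ω i ∂μ) := by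
  have h_meas : Measurable fun ω => (ω, subDrift hT n (fun j => ζ j ω) ω) :=
    measurable_id.prodMk (measurable_subDrift hζ)
  have h_integrand : Measurable fun z : ContPath T d × ContPath T d =>
      g z.1 * gridIncr T (n * l) z k i :=
    (hg.comp measurable_fst).mul (measurable_gridIncr hT hk i)
  rw [driftPlan, integral_map h_meas.aemeasurable h_integrand.aestronglyMeasurable,
    ← integral_const_mul, ← integral_neg]
  simp only [gridIncr_prodMk_subDrift hl hk, Pi.neg_apply, Pi.smul_apply, smul_eq_mul, mul_neg,
    mul_left_comm]

namespace SensitivitySetup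

lemma sub_le_sum_integral_deriv_mul_slope (S : SensitivitySetup T p q μ F DF) (hn : 0 < n)
    (hl : 0 < l) (hu : 0 ≤ u) {ξ : ℕ → ContPath T d → Fin d → ℝ}
    (hξ : ∀ j < n, ∀ i, MemLp (fun ω => ξ j ω i) (ENNReal.ofReal p) μ)
    (hξu : T / n * ∑ j ∈ Finset.range n, ∑ i, ∫ ω, |ξ j ω i| ^ p ∂μ ≤ u ^ p) :
    T / n * ∑ j ∈ Finset.range n, ∑ i, ∫ ω, DF ω.1 (grid T n j) i * ξ j ω i ∂μ -
        (T / (n * l : ℕ) * ∑ k ∈ Finset.range (n * l), ∑ i, ∫ ω : ContPath T d,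
          |DF ω.1 (grid T (n * l) (k + 1)) i - DF ω.1 (grid T n (k / l)) i| ^ q ∂μ) ^ (1 / q) * u ≤
      T / (n * l : ℕ) * ∑ k ∈ Finset.range (n * l), ∑ i,
        ∫ ω, DF ω.1 (grid T (n * l) (k + 1)) i * ξ (k / l) ω i ∂μ := by
  have hT := S.pos
  have hnl : 0 < n * l := Nat.mul_pos hn hl
  have h_mem {j : ℕ × Fin d} (hj : j ∈ Finset.range (n * l) ×ˢ (Finset.univ : Finset (Fin d))) :
      j.1 < n * l := Finset.mem_range.1 (Finset.mem_product.1 hj).1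
  have h_div {k : ℕ} (hk : k < n * l) : k / l < n := Nat.div_lt_of_lt_mul (by rwa [mul_comm] at hk)
  have h_holder := sub_le_mul_sum_integral_mul S.conj.symm (π := μ)
    (Finset.range (n * l) ×ˢ (Finset.univ : Finset (Fin d)))
    (A := fun j ω => DF ω.1 (grid T (n * l) (j.1 + 1)) j.2)
    (A' := fun j ω => DF ω.1 (grid T n (j.1 / l)) j.2) (ξ := fun j ω => ξ (j.1 / l) ω j.2)
    (fun j hj => S.memLp_deriv_apply (grid_mem_Icc hT hnl (h_mem hj)) j.2)
    (fun j hj => S.memLp_deriv_apply (grid_mem_Icc hT hn (h_div (h_mem hj)).le) j.2)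
    (fun j hj => hξ _ (h_div (h_mem hj)) j.2) (w := T / (n * l : ℕ)) (by positivity) hu
  simp only [Finset.sum_product] at h_holder
  rw [mul_sum_range_mul_div T n hl fun j => ∑ i, ∫ ω, |ξ j ω i| ^ p ∂μ,
    mul_sum_range_mul_div T n hl fun j =>
      ∑ i, ∫ ω, DF ω.1 (grid T n j) i * ξ j ω i ∂μ] at h_holder
  exact h_holder hξu

lemma exists_causal_plan (S : SensitivitySetup T p q μ F DF) (hn : 0 < n) {δ : ℝ} (hu : 0 ≤ u)
    (hδ : 0 < δ) : ∃ π, PlanBound T p μ π (δ * u) ∧ IsCausalStarC T d μ π ∧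
      ∀ l > 0, δ * (((T / n * ∑ j ∈ Finset.range n, condMoment q μ DF (grid T n j)) ^ (1 / q) -
        (T / (n * l : ℕ) * ∑ k ∈ Finset.range (n * l), ∑ i, ∫ ω : ContPath T d,
          |DF ω.1 (grid T (n * l) (k + 1)) i - DF ω.1 (grid T n (k / l)) i| ^ q ∂μ) ^ (1 / q)) *
            u) ≤
        ∑ k ∈ Finset.range (n * l), ∑ i,
          ∫ z, DF z.1.1 (grid T (n * l) (k + 1)) i * gridIncr T (n * l) z k i ∂π := by
  have hT := S.pos
  have hp := S.conj.pos
  have := S.prob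
  obtain ⟨ξ, hξ_meas, hξ, h_cost, h_gain⟩ := S.exists_slopes hn hu
  have hζ : ∀ j < n, Measurable[FilC T d (grid T n j)] fun ω => -δ • ξ j ω := fun j _ =>
    (hξ_meas j).const_smul (-δ)
  have h_abs_rpow (j : ℕ) (i : Fin d) (ω : ContPath T d) :
      |(-δ • ξ j ω) i| ^ p = δ ^ p * |ξ j ω i| ^ p := by
    rw [Pi.smul_apply, smul_eq_mul, abs_mul, abs_neg, abs_of_pos hδ,
      Real.mul_rpow hδ.le (abs_nonneg _)]
  refine ⟨driftPlan hT μ n fun j ω => -δ • ξ j ω, planBound_driftPlan hζ hp (by positivity)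
    (fun j hj i => ?_) ?_, isCausalStarC_driftPlan hζ, fun l hl => ?_⟩
  · simp only [h_abs_rpow]
    exact (integrable_abs_rpow_of_memLp hp (hξ j hj i)).const_mul _
  · simp only [h_abs_rpow, integral_const_mul, ← Finset.mul_sum]
    rw [Real.mul_rpow hδ.le hu, mul_left_comm]
    gcongr
  · have h_slope := S.sub_le_sum_integral_deriv_mul_slope hn hl hu hξ h_cost
    rw [h_gain, ← sub_mul] at h_slope
    refine (mul_le_mul_of_nonneg_left h_slope hδ.le).trans_eq ?_
    simp only [Finset.mul_sum]
    refine Finset.sum_congr rfl fun k hk => Finset.sum_congr rfl fun i _ => ?_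
    have hk := Finset.mem_range.1 hk
    refine Eq.trans ?_ (integral_mul_gridIncr_driftPlan hζ hl hk i ((measurable_pi_apply i).comp
      (S.measurable_deriv (grid_mem_Icc hT (Nat.zero_lt_of_lt hk) hk)))).symm
    simp only [Function.comp_apply, Pi.smul_apply, smul_eq_mul, neg_mul, mul_neg, integral_neg,
      mul_left_comm _ δ, integral_const_mul, neg_neg]

lemma tendsto_sum_deriv_sub_refine (S : SensitivitySetup T p q μ F DF) :
    Tendsto (fun x : ℕ × ℕ => T / (x.1 * x.2 : ℕ) * ∑ k ∈ Finset.range (x.1 * x.2), ∑ i,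
      ∫ ω : ContPath T d, |DF ω.1 (grid T (x.1 * x.2) (k + 1)) i -
        DF ω.1 (grid T x.1 (k / x.2)) i| ^ q ∂μ) (atTop ×ˢ atTop) (𝓝 0) := by
  have hT := S.pos
  have h_fst : ∀ᶠ x : ℕ × ℕ in atTop ×ˢ atTop, 0 < x.1 := tendsto_fst.eventually_gt_atTop 0
  have h_snd : ∀ᶠ x : ℕ × ℕ in atTop ×ˢ atTop, 0 < x.2 := tendsto_snd.eventually_gt_atTop 0
  have h_mul : Tendsto (fun x : ℕ × ℕ => x.1 * x.2) (atTop ×ˢ atTop) atTop :=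
    tendsto_fst.atTop_mul_atTop₀ tendsto_snd
  refine S.tendsto_sum_deriv_sub (n := fun x : ℕ × ℕ => x.1 * x.2)
    (h_mul.eventually_gt_atTop 0) ?_
    (fun t ht => (tendsto_grid_gridIdx_succ hT ht.1.le).comp h_mul) fun t ht => ?_
  · filter_upwards [h_fst, h_snd] with x hx hx' k hk
    exact ⟨grid_mem_Icc hT (Nat.mul_pos hx hx') hk, grid_mem_Icc hT hx
      (Nat.div_lt_of_lt_mul (by rwa [mul_comm] at hk)).le⟩
  · refine ((tendsto_grid_gridIdx hT ht.1.le).comp tendsto_fst).congr' ?_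
    filter_upwards [h_snd] with x hx
    rw [Function.comp_apply, gridIdx_mul_div T x.1 hx]

lemma exists_causal_plan_eventually_le (S : SensitivitySetup T p q μ F DF) {ε : ℝ} (hu : 0 ≤ u)
    (hε : 0 < ε) : ∃ n > 0, ∀ δ > 0, ∃ π, PlanBound T p μ π (δ * u) ∧ IsCausalStarC T d μ π ∧
      ∀ᶠ l : ℕ in atTop, δ * u * (sensitivity T q μ DF - ε) ≤
        ∑ k ∈ Finset.range (n * l), ∑ i,
          ∫ z, DF z.1.1 (grid T (n * l) (k + 1)) i * gridIncr T (n * l) z k i ∂π := by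
  have hT := S.pos
  have hq := S.conj.symm.pos
  have h_moment : Tendsto (fun n : ℕ => (T / n * ∑ j ∈ Finset.range n,
      condMoment q μ DF (grid T n j)) ^ (1 / q)) atTop (𝓝 (sensitivity T q μ DF)) :=
    (S.tendsto_sum_condMoment (n := fun n => n) (eventually_gt_atTop 0)
      ((eventually_gt_atTop 0).mono fun _ hn _ hk => grid_mem_Icc hT hn hk.le)
      fun _ ht => tendsto_grid_gridIdx hT ht.1.le).rpow_const (Or.inr (by positivity))
  have h_error := S.tendsto_sum_deriv_sub_refine.rpow_const (p := 1 / q) (Or.inr (by positivity))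
  rw [Real.zero_rpow (one_div_pos.2 hq).ne'] at h_error
  obtain ⟨n, ⟨h_moment, h_error⟩, hn⟩ := (((h_moment.eventually_const_lt
    (sub_lt_self _ (half_pos hε))).and (h_error.eventually_lt_const (half_pos hε)).curry).and
      (eventually_gt_atTop 0)).exists
  refine ⟨n, hn, fun δ hδ => ?_⟩
  obtain ⟨π, hπ, h_causal, h_slope⟩ := S.exists_causal_plan hn hu hδ
  refine ⟨π, hπ, h_causal, ?_⟩
  filter_upwards [h_error, eventually_gt_atTop 0] with l h_error hl
  refine le_trans ?_ (h_slope l hl)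
  rw [mul_assoc, mul_comm u]
  exact mul_le_mul_of_nonneg_left (mul_le_mul_of_nonneg_right (by linarith) hu) hδ.le

lemma exists_le_integral_sub (S : SensitivitySetup T p q μ F DF) {ε : ℝ} (hu : 0 ≤ u)
    (hε : 0 < ε) : ∃ B : ℝ, 0 ≤ B ∧ ∀ δ > 0, ∃ π, PlanBound T p μ π (δ * u) ∧
      IsCausalStarC T d μ π ∧ δ * u * (sensitivity T q μ DF - ε) - B * (δ * u) ^ p ≤
        ∫ z, F z.2.1 ∂π - ∫ ω, F ω.1 ∂μ := by
  obtain ⟨B, hB, h_taylor⟩ := S.exists_eventually_abs_integral_gridTransport_sub_le (half_pos hε)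
  obtain ⟨n, hn, h_plan⟩ := S.exists_causal_plan_eventually_le hu (half_pos hε)
  refine ⟨B, hB, fun δ hδ => ?_⟩
  obtain ⟨π, hπ, h_causal, h_slope⟩ := h_plan δ hδ
  have h_mul : Tendsto (fun l : ℕ => n * l) atTop atTop := tendsto_id.const_mul_atTop' hn
  have h_lim := ((S.tendsto_integral_functional_gridTransport hπ).comp h_mul).sub_const
    (∫ ω, F ω.1 ∂μ)
  refine ⟨π, hπ, h_causal, ge_of_tendsto h_lim ?_⟩
  filter_upwards [h_slope, h_mul.eventually h_taylor] with l h_slope h_taylor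
  have h_remainder := (abs_le.1 (h_taylor π _ hπ)).1
  simp only [Function.comp_apply]
  linarith

end SensitivitySetup

end Refinement

section Penalty

lemma coe_le_one_div_mul_sub_iff {V : EReal} {m δ a : ℝ} (hδ : 0 < δ) :
    (a : EReal) ≤ ((1 / δ : ℝ) : EReal) * (V - (m : EReal)) ↔ ((m + δ * a : ℝ) : EReal) ≤ V := by
  have hδ' : 0 < 1 / δ := one_div_pos.2 hδ
  induction V with
  | bot => simp only [EReal.bot_sub, EReal.coe_mul_bot_of_pos hδ', le_bot_iff, EReal.coe_ne_bot]
  | top => simp only [EReal.top_sub_coe, EReal.coe_mul_top_of_pos hδ', le_top]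
  | coe V =>
    rw [← EReal.coe_sub, ← EReal.coe_mul, EReal.coe_le_coe_iff, EReal.coe_le_coe_iff,
      one_div_mul_eq_div, le_div_iff₀' hδ, le_sub_iff_add_le']

lemma one_div_mul_sub_le_coe_iff {V : EReal} {m δ b : ℝ} (hδ : 0 < δ) :
    ((1 / δ : ℝ) : EReal) * (V - (m : EReal)) ≤ (b : EReal) ↔ V ≤ ((m + δ * b : ℝ) : EReal) := by
  have hδ' : 0 < 1 / δ := one_div_pos.2 hδ
  induction V with
  | bot => simp only [EReal.bot_sub, EReal.coe_mul_bot_of_pos hδ', bot_le]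
  | top => simp only [EReal.top_sub_coe, EReal.coe_mul_top_of_pos hδ', top_le_iff,
      EReal.coe_ne_top]
  | coe V =>
    rw [← EReal.coe_sub, ← EReal.coe_mul, EReal.coe_le_coe_iff, EReal.coe_le_coe_iff,
      one_div_mul_eq_div, div_le_iff₀' hδ, sub_le_iff_le_add']

lemma coe_sub_coe_ofReal_mul {a δ : ℝ} {x : ℝ≥0∞} (hδ : 0 ≤ δ) (hx : x ≠ ⊤) :
    (a : EReal) - ((ENNReal.ofReal δ * x : ℝ≥0∞) : EReal) = ((a - δ * x.toReal : ℝ) : EReal) := by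
  rw [EReal.coe_sub, EReal.coe_ennreal_mul, EReal.coe_ennreal_ofReal, max_eq_left hδ,
    EReal.coe_mul, EReal.coe_ennreal_toReal hx]

lemma coe_sub_coe_ennreal {a : ℝ} {x : ℝ≥0∞} (hx : x ≠ ⊤) :
    (a : EReal) - (x : EReal) = ((a - x.toReal : ℝ) : EReal) := by
  simpa only [ENNReal.ofReal_one, one_mul] using coe_sub_coe_ofReal_mul (a := a) zero_le_one hx

lemma eventually_nhdsGT_mul_rpow_lt (c : ℝ) {e η : ℝ} (he : 0 < e) (hη : 0 < η) :
    ∀ᶠ δ : ℝ in 𝓝[>] 0, c * δ ^ e < η := by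
  have h_lim : Tendsto (fun δ : ℝ => c * δ ^ e) (𝓝[>] 0) (𝓝 (c * 0 ^ e)) :=
    ((Real.continuousAt_rpow_const 0 e (Or.inr he.le)).tendsto.mono_left
      nhdsWithin_le_nhds).const_mul c
  rw [Real.zero_rpow he.ne', mul_zero] at h_lim
  exact h_lim.eventually_lt_const hη

lemma mul_rpow_eq_mul_mul_rpow {δ u p : ℝ} (hδ : 0 < δ) (hu : 0 ≤ u) :
    (δ * u) ^ p = δ * (δ ^ (p - 1) * u ^ p) := by
  rw [Real.mul_rpow hδ.le hu, Real.rpow_sub_one hδ.ne', ← mul_assoc, mul_div_cancel₀ _ hδ.ne']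

variable {p v : ℝ} {L : ℝ → ℝ≥0∞}

lemma zero_le_Lconj (hL_zero : L 0 = 0) (v : ℝ) : 0 ≤ Lconj L v := by
  refine le_trans (le_of_eq ?_) (le_iSup _ (⟨0, le_rfl⟩ : {u : ℝ // 0 ≤ u}))
  simp [hL_zero]

lemma mul_sub_toReal_le_of_Lconj_le {b u : ℝ} (hb : Lconj L v ≤ b) (hu : 0 ≤ u)
    (hLu : L u ≠ ⊤) : u * v - (L u).toReal ≤ b := by
  have h_sup := (le_iSup (fun u : {u : ℝ // 0 ≤ u} =>
    ((u.1 * v : ℝ) : EReal) - ((L u.1 : ℝ≥0∞) : EReal)) ⟨u, hu⟩).trans hb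
  rwa [coe_sub_coe_ennreal hLu, EReal.coe_le_coe_iff] at h_sup

lemma exists_lt_mul_sub_toReal_of_lt_Lconj {a : EReal} (ha : a < Lconj L v) :
    ∃ u : ℝ, 0 ≤ u ∧ L u ≠ ⊤ ∧ a < ((u * v - (L u).toReal : ℝ) : EReal) := by
  obtain ⟨⟨u, hu⟩, hau⟩ := lt_iSup_iff.1 ha
  have hLu : L u ≠ ⊤ := fun h => by simp [h] at hau
  exact ⟨u, hu, hLu, by rwa [← coe_sub_coe_ennreal hLu]⟩

lemma exists_mul_rpow_le_toReal
    (hL_growth : Tendsto (fun u : ℝ => L u / ENNReal.ofReal (u ^ p)) atTop (𝓝 ⊤)) {K : ℝ}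
    (hK : 0 ≤ K) : ∃ U : ℝ, 1 ≤ U ∧ ∀ u ≥ U, L u ≠ ⊤ → K * u ^ p ≤ (L u).toReal := by
  obtain ⟨U, hU⟩ := eventually_atTop.1
    (hL_growth.eventually_const_lt (ENNReal.ofReal_lt_top (r := K)))
  refine ⟨max 1 U, le_max_left _ _, fun u hu hLu => ?_⟩
  have h_le := ENNReal.mul_le_of_le_div (hU u ((le_max_right _ _).trans hu)).le
  rwa [← ENNReal.ofReal_mul hK, ENNReal.ofReal_le_iff_le_toReal hLu] at h_le

/-- The value of maximising a reward `I` minus the scaled penalty `δ * L (R / δ)` of the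
radius `R` over all competitors. -/
def penalizedValue {ι : Type*} (L : ℝ → ℝ≥0∞) (I R : ι → ℝ) (δ : ℝ) : EReal :=
  ⨆ i, (I i : EReal) - ((ENNReal.ofReal δ * L (R i / δ) : ℝ≥0∞) : EReal)

variable {ι : Type*} {I R : ι → ℝ} {m : ℝ}

lemma eventually_le_penalizedValue (hL_mono : MonotoneOn L (Ici 0)) (hp : 1 < p)
    (hR : ∀ i, 0 ≤ R i) {u : ℝ} (hu : 0 ≤ u)
    (hlow : ∀ ε > 0, ∃ B : ℝ, 0 ≤ B ∧ ∀ δ > 0, ∃ i, R i ≤ δ * u ∧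
      δ * u * (v - ε) - B * (δ * u) ^ p ≤ I i - m)
    (hLu : L u ≠ ⊤) {a : ℝ} (ha : a < u * v - (L u).toReal) :
    ∀ᶠ δ : ℝ in 𝓝[>] 0, ((m + δ * a : ℝ) : EReal) ≤ penalizedValue L I R δ := by
  obtain ⟨η, hη, haη⟩ : ∃ η > 0, u * v - (L u).toReal = a + η :=
    ⟨_, sub_pos.2 ha, (add_sub_cancel _ _).symm⟩
  obtain ⟨ε, hε, hεu⟩ : ∃ ε > 0, u * ε ≤ η / 2 := by
    refine ⟨η / 2 / (u + 1), by positivity, ?_⟩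
    rw [mul_div_left_comm]
    exact mul_le_of_le_one_right (by positivity) (div_le_one_of_le₀ (by linarith) (by positivity))
  obtain ⟨B, -, h_plan⟩ := hlow ε hε
  filter_upwards [self_mem_nhdsWithin, eventually_nhdsGT_mul_rpow_lt (B * u ^ p) (sub_pos.2 hp)
    (half_pos hη)] with δ hδ h_small
  have hδ : 0 < δ := hδ
  obtain ⟨i, hRi, hIi⟩ := h_plan δ hδ
  have hLRi : L (R i / δ) ≤ L u :=
    hL_mono (div_nonneg (hR i) hδ.le) hu ((div_le_iff₀' hδ).2 hRi)
  refine le_trans ?_ (le_iSup _ i)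
  rw [coe_sub_coe_ofReal_mul hδ.le (ne_top_of_le_ne_top hLu hLRi), EReal.coe_le_coe_iff]
  rw [mul_rpow_eq_mul_mul_rpow hδ hu] at hIi
  have h_penalty : δ * (L (R i / δ)).toReal ≤ δ * (L u).toReal := by gcongr
  have h_slack : δ * (u * ε + B * u ^ p * δ ^ (p - 1)) ≤ δ * η := by gcongr; linarith
  linear_combination hIi + h_penalty + h_slack - δ * haη

lemma penalizedValue_le {δ c : ℝ} (hδ : 0 < δ) (hR : ∀ i, 0 ≤ R i)
    (h : ∀ i u, 0 ≤ u → R i = δ * u → L u ≠ ⊤ → I i - δ * (L u).toReal ≤ c) :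
    penalizedValue L I R δ ≤ (c : EReal) := by
  refine iSup_le fun i => ?_
  by_cases hLu : L (R i / δ) = ⊤
  · rw [hLu, ENNReal.mul_top (ENNReal.ofReal_pos.2 hδ).ne', EReal.coe_ennreal_top, EReal.sub_top]
    exact bot_le
  · rw [coe_sub_coe_ofReal_mul hδ.le hLu, EReal.coe_le_coe_iff]
    exact h i _ (div_nonneg (hR i) hδ.le) (mul_div_cancel₀ _ hδ.ne').symm hLu

lemma sub_mul_le_add_mul {I m v B u δ ℓ b : ℝ} (hδ : 0 < δ) (hu : 0 ≤ u)
    (hI : I - m ≤ v * (δ * u) + B * (δ * u) ^ p)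
    (hb : v * u + B * (δ ^ (p - 1) * u ^ p) - ℓ ≤ b) : I - δ * ℓ ≤ m + δ * b := by
  rw [mul_rpow_eq_mul_mul_rpow hδ hu] at hI
  linear_combination hI + δ * hb

lemma eventually_penalizedValue_le (hL_zero : L 0 = 0)
    (hL_growth : Tendsto (fun u : ℝ => L u / ENNReal.ofReal (u ^ p)) atTop (𝓝 ⊤)) (hp : 1 < p)
    (hR : ∀ i, 0 ≤ R i) (hv : 0 ≤ v)
    (hup : ∀ ε > 0, ∃ B : ℝ, 0 ≤ B ∧ ∀ i, I i - m ≤ (v + ε) * R i + B * R i ^ p) {b : ℝ}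
    (hb : Lconj L v < b) :
    ∀ᶠ δ : ℝ in 𝓝[>] 0, penalizedValue L I R δ ≤ ((m + δ * b : ℝ) : EReal) := by
  obtain ⟨b', hb', hb'b⟩ := EReal.lt_iff_exists_real_btwn.1 hb
  have hb'_nonneg : 0 ≤ b' := EReal.coe_nonneg.1 ((zero_le_Lconj hL_zero v).trans hb'.le)
  obtain ⟨η, hη, hbη⟩ : ∃ η > 0, b = b' + η :=
    ⟨_, sub_pos.2 (EReal.coe_lt_coe_iff.1 hb'b), (add_sub_cancel _ _).symm⟩
  obtain ⟨B₁, hB₁, h_far⟩ := hup 1 one_pos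
  obtain ⟨U, hU, h_growth⟩ := exists_mul_rpow_le_toReal hL_growth (K := v + 1 + B₁) (by positivity)
  obtain ⟨B₂, hB₂, h_near⟩ := hup (η / 2 / U) (by positivity)
  filter_upwards [self_mem_nhdsWithin, eventually_nhdsGT_mul_rpow_lt 1 (sub_pos.2 hp) one_pos,
    eventually_nhdsGT_mul_rpow_lt (B₂ * U ^ p) (sub_pos.2 hp) (half_pos hη)]
    with δ hδ h_one h_small
  have hδ : 0 < δ := hδ
  refine penalizedValue_le hδ hR fun i u hu hRu hLu => ?_
  have h_conj := mul_sub_toReal_le_of_Lconj_le hb'.le hu hLu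
  rcases le_total U u with hUu | hUu
  · refine sub_mul_le_add_mul hδ hu (hRu ▸ h_far i) ?_
    have h_pow : u ≤ u ^ p := Real.self_le_rpow_of_one_le (hU.trans hUu) hp.le
    calc (v + 1) * u + B₁ * (δ ^ (p - 1) * u ^ p) - (L u).toReal
        ≤ (v + 1) * u ^ p + B₁ * (1 * u ^ p) - (v + 1 + B₁) * u ^ p := by
          gcongr
          · linarith
          · exact h_growth u hUu hLu
      _ = 0 := by ring
      _ ≤ b := by linarith
  · refine sub_mul_le_add_mul hδ hu (hRu ▸ h_near i) ?_
    calc (v + η / 2 / U) * u + B₂ * (δ ^ (p - 1) * u ^ p) - (L u).toReal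
        = u * v - (L u).toReal + η / 2 / U * u + B₂ * (δ ^ (p - 1) * u ^ p) := by ring
      _ ≤ b' + η / 2 / U * U + B₂ * (δ ^ (p - 1) * U ^ p) := by gcongr
      _ = b' + η / 2 + B₂ * U ^ p * δ ^ (p - 1) := by field_simp
      _ ≤ b := by linarith

lemma tendsto_one_div_mul_penalizedValue_sub (hL_mono : MonotoneOn L (Ici 0))
    (hL_zero : L 0 = 0)
    (hL_growth : Tendsto (fun u : ℝ => L u / ENNReal.ofReal (u ^ p)) atTop (𝓝 ⊤)) (hp : 1 < p)
    (hR : ∀ i, 0 ≤ R i) (hv : 0 ≤ v)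
    (hup : ∀ ε > 0, ∃ B : ℝ, 0 ≤ B ∧ ∀ i, I i - m ≤ (v + ε) * R i + B * R i ^ p)
    (hlow : ∀ u ≥ 0, ∀ ε > 0, ∃ B : ℝ, 0 ≤ B ∧ ∀ δ > 0, ∃ i, R i ≤ δ * u ∧
      δ * u * (v - ε) - B * (δ * u) ^ p ≤ I i - m) :
    Tendsto (fun δ : ℝ => ((1 / δ : ℝ) : EReal) * (penalizedValue L I R δ - (m : EReal)))
      (𝓝[>] 0) (𝓝 (Lconj L v)) := by
  refine tendsto_order.2 ⟨fun a ha => ?_, fun b hb => ?_⟩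
  · obtain ⟨u, hu, hLu, hau⟩ := exists_lt_mul_sub_toReal_of_lt_Lconj ha
    obtain ⟨a', haa', ha'⟩ := EReal.lt_iff_exists_real_btwn.1 hau
    filter_upwards [self_mem_nhdsWithin, eventually_le_penalizedValue hL_mono hp hR hu
      (hlow u hu) hLu (EReal.coe_lt_coe_iff.1 ha')] with δ hδ h_le
    exact haa'.trans_le ((coe_le_one_div_mul_sub_iff hδ).2 h_le)
  · obtain ⟨b', hb', hb'b⟩ := EReal.lt_iff_exists_real_btwn.1 hb
    filter_upwards [self_mem_nhdsWithin,
      eventually_penalizedValue_le hL_zero hL_growth hp hR hv hup hb'] with δ hδ h_le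
    exact ((one_div_mul_sub_le_coe_iff hδ).2 h_le).trans_lt hb'b

end Penalty

lemma sensitivity_nonneg {T q : ℝ} {d : ℕ} {μ : Measure (ContPath T d)}
    {DF : (ℝ → Fin d → ℝ) → ℝ → Fin d → ℝ} : 0 ≤ sensitivity T q μ DF :=
  Real.rpow_nonneg (integral_nonneg fun _ => condMoment_nonneg _) _

lemma ofReal_rpow_one_div_rpow {x : ℝ≥0∞} {p : ℝ} (hp : 0 < p) (hx : x ≠ ⊤) :
    ENNReal.ofReal ((x.toReal ^ (1 / p)) ^ p) = x := by
  rw [one_div, Real.rpow_inv_rpow ENNReal.toReal_nonneg hp.ne', ENNReal.ofReal_toReal hx]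

lemma toReal_rpow_one_div_le {x : ℝ≥0∞} {p r : ℝ} (hp : 0 < p) (hr : 0 ≤ r)
    (hx : x ≤ ENNReal.ofReal (r ^ p)) : x.toReal ^ (1 / p) ≤ r := by
  rw [one_div, Real.rpow_inv_le_iff_of_pos ENNReal.toReal_nonneg hr hp]
  exact ENNReal.toReal_le_of_le_ofReal (by positivity) hx

namespace SensitivitySetup

variable {T p q : ℝ} {d : ℕ} {μ : Measure (ContPath T d)} {F : (ℝ → Fin d → ℝ) → ℝ}
  {DF : (ℝ → Fin d → ℝ) → ℝ → Fin d → ℝ}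

lemma integral_lpnorm_condExp_rpow (S : SensitivitySetup T p q μ F DF) {t : ℝ}
    (ht : t ∈ Icc 0 T) :
    ∫ ω, lpnorm q ((μ[fun ω' : ContPath T d => DF ω'.1 t | FilC T d t]) ω) ^ q ∂μ =
      condMoment q μ DF t := by
  have := S.prob
  have hq := S.conj.symm.pos
  have h_coord (i : Fin d) : (fun ω => (μ[fun ω' : ContPath T d => DF ω'.1 t | FilC T d t]) ω i)
      =ᵐ[μ] μ[fun ω : ContPath T d => DF ω.1 t i | FilC T d t] :=
    (ContinuousLinearMap.proj (R := ℝ) (φ := fun _ : Fin d => ℝ) i).comp_condExp_comm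
      ((S.memLp_deriv ht).integrable S.one_le)
  simp only [lpnorm_rpow hq, condMoment]
  rw [integral_finsetSum]
  · refine Finset.sum_congr rfl fun i _ => integral_congr_ae ?_
    filter_upwards [h_coord i] with ω hω
    rw [hω]
  · intro i _
    refine (integrable_abs_rpow_of_memLp hq (S.memLp_condExp ht i t)).congr ?_
    filter_upwards [h_coord i] with ω hω
    rw [hω]

lemma sensitivity_eq (S : SensitivitySetup T p q μ F DF) :
    sensitivity T q μ DF = (∫ t in Icc (0 : ℝ) T,
      ∫ ω, lpnorm q ((μ[fun ω' : ContPath T d => DF ω'.1 t | FilC T d t]) ω) ^ q ∂μ)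
        ^ (1 / q) := by
  rw [sensitivity, ← integral_Icc_eq_integral_Ioo,
    setIntegral_congr_fun measurableSet_Icc fun t ht => S.integral_lpnorm_condExp_rpow ht]

end SensitivitySetup

theorem statement_15_general {T p q : ℝ} {d : ℕ} {μ : Measure (ContPath T d)}
    {F : (ℝ → Fin d → ℝ) → ℝ} {DF : (ℝ → Fin d → ℝ) → ℝ → Fin d → ℝ}
    (S : SensitivitySetup T p q μ F DF) {L : ℝ → ℝ≥0∞}
    (hL_mono : MonotoneOn L (Ici 0)) (hL_zero : L 0 = 0)
    (hL_growth : Tendsto (fun u : ℝ => L u / ENNReal.ofReal (u ^ p)) atTop (𝓝 ⊤)) :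
    Tendsto (fun δ : ℝ => ((1 / δ : ℝ) : EReal) *
        (VC T p L μ (fun ω => F ω.1) δ - ((∫ ω, F ω.1 ∂μ : ℝ) : EReal)))
      (𝓝[>] 0) (𝓝 (Lconj L ((∫ t in Icc (0 : ℝ) T,
        ∫ ω, lpnorm q ((μ[fun ω' : ContPath T d => DF ω'.1 t | FilC T d t]) ω) ^ q ∂μ)
          ^ (1 / q)))) := by
  rw [← S.sensitivity_eq]
  have hp := S.conj.pos
  refine tendsto_one_div_mul_penalizedValue_sub hL_mono hL_zero hL_growth S.conj.lt
    (fun π => by positivity) sensitivity_nonneg (fun ε hε => ?_) (fun u hu ε hε => ?_)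
  · obtain ⟨B, hB, h_le⟩ := S.exists_integral_sub_le hε
    exact ⟨B, hB, fun π => h_le π.1 _ ⟨π.2.1, π.2.2.1.1, by positivity,
      (ofReal_rpow_one_div_rpow hp π.2.2.2.ne).ge⟩ π.2.2.1⟩
  · obtain ⟨B, hB, h_plan⟩ := S.exists_le_integral_sub hu hε
    refine ⟨B, hB, fun δ hδ => ?_⟩
    obtain ⟨π, hπ, h_causal, h_le⟩ := h_plan δ hδ
    exact ⟨⟨π, hπ.prob, h_causal, hπ.cost.trans_lt ENNReal.ofReal_lt_top⟩,
      toReal_rpow_one_div_le hp (mul_nonneg hδ.le hu) hπ.cost, h_le⟩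

/-- Continuous-time sensitivity of causal-Wasserstein DRO under hyperbolic
scaling: `lim_{δ→0+} (V(δ) − V(0))/δ = L*((∫_0^T E_μ[|E_μ[𝔻_t f(X)|F_t]|_*^q] dt)^{1/q})`. -/
theorem statement_15 (T : ℝ) (hT : 0 < T) {d : ℕ} (p q : ℝ) (hp : 1 < p)
    (hq : q = p / (p - 1))
    (L : ℝ → ℝ≥0∞) (hL : PenaltyAssumptions p L)
    (μ : Measure (ContPath T d)) [IsProbabilityMeasure μ]
    (hmom : Integrable
      (fun ω : ContPath T d => (⨆ t : Set.Icc (0 : ℝ) T, lpnorm p (ω.1 t.1)) ^ p) μ)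
    (f : ContPath T d → ℝ)
    (ftilde : (ℝ → Fin d → ℝ) → ℝ) (Df : (ℝ → Fin d → ℝ) → ℝ → Fin d → ℝ)
    (hext : ∀ ω : ContPath T d, f ω = ftilde ω.1)
    (hdiff : HasPathwiseMalliavinDeriv T ftilde Df)
    (hfcont : UnifContOnCadlag T ftilde)
    (hDcont : ∀ t ∈ Set.Icc (0 : ℝ) T, UnifContOnCadlagVec T (fun ω => Df ω t))
    (hll : HasLeftLimits T Df)
    (hbp : BoundednessPreserving T Df)
    (C : ℝ)
    (hfgrow : ∀ ω : ℝ → Fin d → ℝ, CadlagOn T ω →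
      |ftilde ω| ≤ C * (1 + (pathSup T ω) ^ p))
    (hDgrow : ∀ ω : ℝ → Fin d → ℝ, CadlagOn T ω → ∀ t ∈ Set.Icc (0 : ℝ) T,
      lpnorm q (Df ω t) ≤ C * (1 + (pathSup T ω) ^ (p - 1))) :
    Tendsto (fun δ : ℝ =>
        (((1 / δ : ℝ)) : EReal) * (VC T p L μ f δ - ((∫ ω, f ω ∂μ : ℝ) : EReal)))
      (nhdsWithin 0 (Set.Ioi 0))
      (nhds (Lconj L
        ((∫ t in Set.Icc (0 : ℝ) T,
          ∫ ω, lpnorm q ((μ[(fun ω' : ContPath T d => Df ω'.1 t) | FilC T d t]) ω) ^ q ∂μ)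
            ^ (1 / q)))) := by
  obtain rfl : f = fun ω => ftilde ω.1 := funext hext
  exact statement_15_general ⟨hT, (Real.holderConjugate_iff_eq_conjExponent hp).2 hq, ‹_›, hmom,
    hdiff, hfcont, hDcont, hll, ⟨C, hfgrow⟩, ⟨C, hDgrow⟩⟩ hL.mono hL.zero hL.growth

end
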